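/- If (X,𝒳,μ,T) is a weakly mixing invertible measure-preserving system on a Lebesgue probability space, then for every d ∈ ℕ it has a strictly ergodic topological model (X̂,T̂) such that the F^{[d]}-orbit closure of x^{[d]} is strictly ergodic under F^{[d]} for every x ∈ X̂, and the dynamical parallelepiped Q^{[d]}(X̂) is strictly ergodic under G^{[d]}. -/

import Mathlib

open MeasureTheory Topology Filter

namespace HSY

/-- The group structure on self-homeomorphisms of a topological space,
with `a * b = b.trans a` (i.e. composition `a ∘ b`). -/
instance homeoGroup (X : Type*) [TopologicalSpace X] : Group (X ≃ₜ X) where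
  mul a b := b.trans a
  one := Homeomorph.refl X
  inv := Homeomorph.symm
  mul_assoc a b c := rfl
  one_mul a := by ext x; rfl
  mul_one a := by ext x; rfl
  inv_mul_cancel a := by
    show a.trans a.symm = Homeomorph.refl X
    ext x; exact a.symm_apply_apply x

/-- A measure-theoretic isomorphism (mod null sets) between the system `(X, μ, T)` and the
system `(Y, ν, S)`. -/
def MeasIso {X Y : Type*} [MeasurableSpace X] [MeasurableSpace Y]
    (μ : Measure X) (T : X → X) (ν : Measure Y) (S : Y → Y) : Prop :=
  ∃ (φ : X → Y) (ψ : Y → X), Measurable φ ∧ Measurable ψ ∧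
    Measure.map φ μ = ν ∧
    (∀ᵐ x ∂μ, ψ (φ x) = x) ∧ (∀ᵐ y ∂ν, φ (ψ y) = y) ∧
    (∀ᵐ x ∂μ, φ (T x) = S (φ x))

/-- The orbit of a point under the group of homeomorphisms generated by `gens`. -/
def grpOrbit {Y : Type*} [TopologicalSpace Y] (gens : Set (Y ≃ₜ Y)) (y : Y) : Set Y :=
  {z | ∃ g ∈ Subgroup.closure gens, (g : Y ≃ₜ Y) y = z}

/-- The action of the group of homeomorphisms generated by `gens` on the (invariant) set `A`
is strictly ergodic: the orbit of every point of `A` is dense in `A` (minimality), and there is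
exactly one invariant Borel probability measure giving full mass to `A` (unique ergodicity). -/
def StrictlyErgodicOn {Y : Type*} [TopologicalSpace Y] [MeasurableSpace Y]
    (gens : Set (Y ≃ₜ Y)) (A : Set Y) : Prop :=
  (∀ y ∈ A, closure (grpOrbit gens y) = A) ∧
  (∃! ν : Measure Y, IsProbabilityMeasure ν ∧ ν A = 1 ∧ ∀ g ∈ gens, MeasurePreserving g ν ν)

/-- A homeomorphism is strictly ergodic: minimal and uniquely ergodic. -/
def StrictlyErgodicHomeo {Y : Type*} [TopologicalSpace Y] [MeasurableSpace Y] (S : Y ≃ₜ Y) :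
    Prop :=
  (∀ y : Y, Dense (Set.range fun n : ℤ => (S ^ n) y)) ∧
  (∃! ν : Measure Y, IsProbabilityMeasure ν ∧ MeasurePreserving S ν ν)

/-- `(Y, ν, S)` is a topological model of the measure preserving system `(X, μ, T)`:
`ν` is an `S`-invariant Borel probability measure and the two systems are measure
theoretically isomorphic. -/
def IsModel {X : Type*} [MeasurableSpace X] (μ : Measure X) (T : X → X)
    {Y : Type*} [TopologicalSpace Y] [MeasurableSpace Y] (S : Y ≃ₜ Y) (ν : Measure Y) : Prop :=
  IsProbabilityMeasure ν ∧ MeasurePreserving S ν ν ∧ MeasIso μ T ν S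

/-- The `j`-th face transformation of dimension `d`: it applies `S` to the coordinates `ε`
with `ε j = 1` and leaves the other coordinates unchanged. -/
def faceHomeo {Y : Type*} [TopologicalSpace Y] (S : Y ≃ₜ Y) {d : ℕ} (j : Fin d) :
    ((Fin d → Bool) → Y) ≃ₜ ((Fin d → Bool) → Y) :=
  Homeomorph.piCongrRight fun ε => if ε j then S else Homeomorph.refl Y

/-- The generators of the face group `F^[d]`. -/
def faceGens {Y : Type*} [TopologicalSpace Y] (S : Y ≃ₜ Y) (d : ℕ) :
    Set (((Fin d → Bool) → Y) ≃ₜ ((Fin d → Bool) → Y)) :=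
  Set.range fun j : Fin d => faceHomeo S j

/-- The diagonal transformation `S × ⋯ × S` of dimension `d`. -/
def diagHomeo {Y : Type*} [TopologicalSpace Y] (S : Y ≃ₜ Y) (d : ℕ) :
    ((Fin d → Bool) → Y) ≃ₜ ((Fin d → Bool) → Y) :=
  Homeomorph.piCongrRight fun _ => S

/-- The generators of the parallelepiped group `G^[d]` : the face transformations together
with the diagonal transformation. -/
def parallelepipedGens {Y : Type*} [TopologicalSpace Y] (S : Y ≃ₜ Y) (d : ℕ) :
    Set (((Fin d → Bool) → Y) ≃ₜ ((Fin d → Bool) → Y)) :=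
  insert (diagHomeo S d) (faceGens S d)

/-- The dynamical parallelepiped `Q^[d]`, the closure of the set of points
`(S^(n·ε) y)_{ε ∈ {0,1}^d}`. -/
def Qset {Y : Type*} [TopologicalSpace Y] (S : Y ≃ₜ Y) (d : ℕ) : Set ((Fin d → Bool) → Y) :=
  closure {c | ∃ (n : Fin d → ℤ) (y : Y),
    c = fun ε => (S ^ (∑ i, if ε i then n i else 0)) y}

/-!
Ergodicity of `T × T` amounts to the convergence to `0` of the Cesàro means of
`|μ (A ∩ T⁻ⁿ B) - μ A * μ B|`, a property which passes to finite powers `T × ⋯ × T`. Hence on a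
uniquely ergodic model `(Y, S, ν)` the restriction of a face transformation to the coordinates it
moves is ergodic for a power of `ν`, and an invariant coupling of an ergodic transformation with the
identity is a product. Splitting the cube along its last direction then shows by induction that the
only invariant measure on the closure of the face orbit of `y^[d]` is `δ_y` at the vertex `0` times
`ν` at the others, and that the only one on `Q^[d]` is the product of copies of `ν`. Once `ν` has
full support, these measures have full support too, and minimality follows.

It remains to find a uniquely ergodic model, the aperiodic case being the essential one. The system
is coded by `0-1` arrays recording the visits to a separating sequence of sets, after successive
modifications of the points. Each step chooses sparse syndetic markers and replaces an orbit block
between two markers, unless it already has good averages, by a block of the same length which does: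
two orbit segments of lengths `r₁ + r₂ = r`, starting at good points and ending where they may be
glued, which exist for all large `r` by weak mixing. The names thus become uniformly distributed
along every orbit, whereas by Borel–Cantelli almost every point is eventually not modified, so that
the limit coding remains injective.
-/

/-! ### Weak mixing -/

section MeanErgodic

variable {α : Type*} [MeasurableSpace α] {m : Measure α} {f : α → α}

lemma memLp_birkhoffSum {E : Type*} [NormedAddCommGroup E] {p : ENNReal}
    (hf : MeasurePreserving f m m) {h : α → E} (hh : MemLp h p m) (N : ℕ) :
    MemLp (birkhoffSum f h N) p m :=
  memLp_finsetSum _ fun n _ => hh.comp_measurePreserving (hf.iterate n)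

lemma memLp_birkhoffAverage {E : Type*} [NormedAddCommGroup E] [NormedSpace ℝ E] {p : ENNReal}
    (hf : MeasurePreserving f m m) {h : α → E} (hh : MemLp h p m) (N : ℕ) :
    MemLp (birkhoffAverage ℝ f h N) p m :=
  (memLp_birkhoffSum hf hh N).const_smul _

lemma birkhoffSum_toLp {E : Type*} [NormedAddCommGroup E] {p : ENNReal}
    (hf : MeasurePreserving f m m) {h : α → E} (hh : MemLp h p m) (N : ℕ) :
    birkhoffSum (Lp.compMeasurePreserving f hf) _root_.id N (hh.toLp h) =
      (memLp_birkhoffSum hf hh N).toLp _ := by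
  have hiterate : ∀ n, (Lp.compMeasurePreserving f hf)^[n] (hh.toLp h) =
      (hh.comp_measurePreserving (hf.iterate n)).toLp (h ∘ f^[n]) := by
    intro n
    induction n with
    | zero => rfl
    | succ n ih =>
      rw [Function.iterate_succ_apply', ih]
      rfl
  induction N with
  | zero => exact (MemLp.toLp_zero _).symm
  | succ N ih =>
    rw [birkhoffSum_succ, ih, _root_.id, hiterate, ← MemLp.toLp_add]
    exact MemLp.toLp_congr _ _ (.of_forall fun x => (birkhoffSum_succ f h N x).symm)

lemma birkhoffAverage_toLp {E : Type*} [NormedAddCommGroup E] [NormedSpace ℝ E] {p : ENNReal}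
    (hf : MeasurePreserving f m m) {h : α → E} (hh : MemLp h p m) (N : ℕ) :
    birkhoffAverage ℝ (Lp.compMeasurePreserving f hf) _root_.id N (hh.toLp h) =
      (memLp_birkhoffAverage hf hh N).toLp _ := by
  rw [birkhoffAverage, birkhoffSum_toLp, ← MemLp.toLp_const_smul]
  rfl

lemma integral_birkhoffSum {E : Type*} [NormedAddCommGroup E] [NormedSpace ℝ E]
    (hf : MeasurePreserving f m m) {h : α → E} (hh : Integrable h m) (N : ℕ) :
    ∫ x, birkhoffSum f h N x ∂m = N • ∫ x, h x ∂m := by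
  have hiterate : ∀ n, ∫ x, h (f^[n] x) ∂m = ∫ x, h x ∂m := fun n => by
    have hn := hf.iterate n
    conv_rhs => rw [← hn.map_eq]
    rw [integral_map hn.measurable.aemeasurable (hn.map_eq.symm ▸ hh.aestronglyMeasurable)]
  simp only [birkhoffSum]
  rw [integral_finsetSum]
  · simp only [hiterate, Finset.sum_const, Finset.card_range]
  · exact fun n _ => (hf.iterate n).integrable_comp_of_integrable hh

lemma integral_birkhoffAverage {E : Type*} [NormedAddCommGroup E] [NormedSpace ℝ E]
    (hf : MeasurePreserving f m m) {h : α → E} (hh : Integrable h m) {N : ℕ} (hN : N ≠ 0) :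
    ∫ x, birkhoffAverage ℝ f h N x ∂m = ∫ x, h x ∂m := by
  simp only [birkhoffAverage]
  rw [integral_smul, integral_birkhoffSum hf hh, ← Nat.cast_smul_eq_nsmul ℝ,
    inv_smul_smul₀ (by exact_mod_cast hN)]

variable [IsProbabilityMeasure m]

lemma exists_tendsto_eLpNorm_birkhoffAverage_sub_const (hf : Ergodic f m) {h : α → ℝ}
    (hh : MemLp h 2 m) :
    ∃ c : ℝ, Tendsto (fun N => eLpNorm (birkhoffAverage ℝ f h N - fun _ => c) 2 m) atTop
      (𝓝 0) := by
  have hfp := hf.toMeasurePreserving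
  set K := (Lp.compMeasurePreservingₗᵢ ℝ f hfp (E := ℝ) (p := 2)).toContinuousLinearMap
  have hlim := K.tendsto_birkhoffAverage_orthogonalProjection
    (LinearIsometry.norm_toContinuousLinearMap_le _) (hh.toLp h)
  set g := (K.eqLocus (1 : Lp ℝ 2 m →L[ℝ] Lp ℝ 2 m)).orthogonalProjectionOnto (hh.toLp h)
  have hKg : K g.1 = g.1 := g.2
  obtain ⟨c, hc⟩ := hf.eq_const_of_compMeasurePreserving_eq (congrArg Subtype.val hKg)
  have hgc : g.1 = (memLp_const c).toLp fun _ => c := Subtype.ext hc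
  refine ⟨c, ?_⟩
  rw [← Lp.tendsto_Lp_iff_tendsto_eLpNorm'' _ (memLp_birkhoffAverage hfp hh) _ (memLp_const c)]
  rw [hgc] at hlim
  exact hlim.congr fun N => birkhoffAverage_toLp hfp hh N

lemma tendsto_eLpNorm_birkhoffAverage_sub_integral (hf : Ergodic f m) {h : α → ℝ}
    (hh : MemLp h 2 m) :
    Tendsto (fun N => eLpNorm (birkhoffAverage ℝ f h N - fun _ => ∫ y, h y ∂m) 1 m) atTop
      (𝓝 0) := by
  have hfp := hf.toMeasurePreserving
  obtain ⟨c, hc⟩ := exists_tendsto_eLpNorm_birkhoffAverage_sub_const hf hh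
  have hc₁ : Tendsto (fun N => eLpNorm (birkhoffAverage ℝ f h N - fun _ => c) 1 m) atTop (𝓝 0) :=
    tendsto_of_tendsto_of_tendsto_of_le_of_le tendsto_const_nhds hc (fun _ => zero_le) fun N =>
      eLpNorm_le_eLpNorm_of_exponent_le one_le_two
        ((memLp_birkhoffAverage hfp hh N).sub (memLp_const c)).aestronglyMeasurable
  have hint : Integrable h m := hh.integrable one_le_two
  have hlim := tendsto_integral_of_L1' _ aestronglyMeasurable_const
    (.of_forall fun N => (memLp_birkhoffAverage hfp hh N).integrable one_le_two) hc₁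
  have hconst : Tendsto (fun N => ∫ x, birkhoffAverage ℝ f h N x ∂m) atTop (𝓝 (∫ y, h y ∂m)) :=
    tendsto_const_nhds.congr' <| (eventually_ne_atTop 0).mono fun N hN =>
      (integral_birkhoffAverage hfp hint hN).symm
  have hc_eq : ∫ y, h y ∂m = c := by simpa using tendsto_nhds_unique hconst hlim
  rwa [hc_eq]

end MeanErgodic

section Cesaro

/-- The mean of the first `N` terms of a sequence (`0` when `N = 0`). -/
noncomputable def cesaroMean (x : ℕ → ℝ) (N : ℕ) : ℝ :=
  (N : ℝ)⁻¹ * ∑ n ∈ Finset.range N, x n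

lemma cesaroMean_add (x y : ℕ → ℝ) (N : ℕ) :
    cesaroMean (fun n => x n + y n) N = cesaroMean x N + cesaroMean y N := by
  simp only [cesaroMean, Finset.sum_add_distrib, mul_add]

lemma cesaroMean_const_mul (c : ℝ) (x : ℕ → ℝ) (N : ℕ) :
    cesaroMean (fun n => c * x n) N = c * cesaroMean x N := by
  simp only [cesaroMean, ← Finset.mul_sum]
  ring

lemma cesaroMean_const (c : ℝ) {N : ℕ} (hN : N ≠ 0) : cesaroMean (fun _ => c) N = c := by
  have hN' : (N : ℝ) ≠ 0 := by exact_mod_cast hN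
  simp [cesaroMean, hN']

lemma tendsto_cesaroMean_const (c : ℝ) : Tendsto (cesaroMean fun _ => c) atTop (𝓝 c) :=
  tendsto_const_nhds.congr' <| (eventually_ne_atTop 0).mono fun _ hN => (cesaroMean_const c hN).symm

lemma cesaroMean_nonneg {x : ℕ → ℝ} (hx : ∀ n, 0 ≤ x n) (N : ℕ) : 0 ≤ cesaroMean x N :=
  mul_nonneg (by positivity) (Finset.sum_nonneg fun n _ => hx n)

lemma cesaroMean_mono {x y : ℕ → ℝ} (hxy : ∀ n, x n ≤ y n) (N : ℕ) :
    cesaroMean x N ≤ cesaroMean y N := by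
  unfold cesaroMean
  gcongr with n
  exact hxy n

lemma cesaroMean_sq_le (x : ℕ → ℝ) (N : ℕ) :
    cesaroMean x N ^ 2 ≤ cesaroMean (fun n => x n ^ 2) N := by
  rcases eq_or_ne N 0 with rfl | hN
  · simp [cesaroMean]
  have hN' : (N : ℝ) ≠ 0 := by exact_mod_cast hN
  have hcauchy := sq_sum_le_card_mul_sum_sq (s := Finset.range N) (f := x)
  rw [Finset.card_range] at hcauchy
  calc cesaroMean x N ^ 2 = (N : ℝ)⁻¹ ^ 2 * (∑ n ∈ Finset.range N, x n) ^ 2 := mul_pow _ _ _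
    _ ≤ (N : ℝ)⁻¹ ^ 2 * (N * ∑ n ∈ Finset.range N, x n ^ 2) := by gcongr
    _ = cesaroMean (fun n => x n ^ 2) N := by
      unfold cesaroMean
      field_simp

/-- Strong Cesàro convergence of the sequence `x` to `c`: the means of `|x n - c|` tend to `0`. -/
def CesaroLim (x : ℕ → ℝ) (c : ℝ) : Prop :=
  Tendsto (cesaroMean fun n => |x n - c|) atTop (𝓝 0)

lemma cesaroLim_const (c : ℝ) : CesaroLim (fun _ => c) c := by
  simpa [CesaroLim] using tendsto_cesaroMean_const 0

lemma CesaroLim.of_le_add {x y z : ℕ → ℝ} {c d e : ℝ} (hx : CesaroLim x c) (hy : CesaroLim y d)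
    (hle : ∀ n, |z n - e| ≤ |x n - c| + |y n - d|) : CesaroLim z e := by
  have hsum := hx.add hy
  rw [add_zero] at hsum
  refine squeeze_zero (fun N => cesaroMean_nonneg (fun _ => abs_nonneg _) N) (fun N => ?_) hsum
  exact (cesaroMean_mono hle N).trans_eq (cesaroMean_add _ _ N)

lemma CesaroLim.tendsto_cesaroMean {x : ℕ → ℝ} {c : ℝ} (h : CesaroLim x c) :
    Tendsto (cesaroMean x) atTop (𝓝 c) := by
  have hsub : Tendsto (cesaroMean fun n => x n - c) atTop (𝓝 0) := by
    refine squeeze_zero_norm (fun N => ?_) h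
    rw [cesaroMean, cesaroMean, norm_mul, Real.norm_of_nonneg (by positivity)]
    gcongr
    exact Finset.abs_sum_le_sum_abs _ _
  have hadd := hsub.add (tendsto_cesaroMean_const c)
  simpa only [← cesaroMean_add, sub_add_cancel, zero_add] using hadd

lemma CesaroLim.mul {x y : ℕ → ℝ} {c d : ℝ} (hx : CesaroLim x c) (hy : CesaroLim y d)
    (hc : |c| ≤ 1) (hy1 : ∀ n, |y n| ≤ 1) : CesaroLim (fun n => x n * y n) (c * d) := by
  refine hx.of_le_add hy fun n => ?_
  calc |x n * y n - c * d| = |(x n - c) * y n + c * (y n - d)| := by ring_nf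
    _ ≤ |x n - c| * |y n| + |c| * |y n - d| := by
      rw [← abs_mul, ← abs_mul]
      exact abs_add_le _ _
    _ ≤ |x n - c| * 1 + 1 * |y n - d| := by
      gcongr
      exact hy1 n
    _ = |x n - c| + |y n - d| := by ring

lemma CesaroLim.prod {ι : Type*} (s : Finset ι) {x : ι → ℕ → ℝ} {c : ι → ℝ}
    (h : ∀ i, CesaroLim (x i) (c i)) (hx : ∀ i n, |x i n| ≤ 1) (hc : ∀ i, |c i| ≤ 1) :
    CesaroLim (fun n => ∏ i ∈ s, x i n) (∏ i ∈ s, c i) := by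
  classical
  induction s using Finset.induction_on with
  | empty => simpa using cesaroLim_const 1
  | insert a s ha ih =>
    simp only [Finset.prod_insert ha]
    refine (h a).mul ih (hc a) fun n => ?_
    rw [Finset.abs_prod]
    exact Finset.prod_le_one (fun i _ => abs_nonneg _) fun i _ => hx i n

lemma CesaroLim.of_sq {x : ℕ → ℝ} {c : ℝ} (h1 : Tendsto (cesaroMean x) atTop (𝓝 c))
    (h2 : Tendsto (cesaroMean fun n => x n ^ 2) atTop (𝓝 (c ^ 2))) : CesaroLim x c := by
  have hvar : Tendsto (cesaroMean fun n => |x n - c| ^ 2) atTop (𝓝 0) := by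
    have hlim := (h2.add (h1.const_mul (-2 * c))).add (tendsto_cesaroMean_const (c ^ 2))
    rw [show c ^ 2 + -2 * c * c + c ^ 2 = 0 by ring] at hlim
    simp only [← cesaroMean_const_mul, ← cesaroMean_add] at hlim
    convert hlim using 3 with n
    rw [sq_abs]
    ring
  have hsqrt := hvar.sqrt
  rw [Real.sqrt_zero] at hsqrt
  exact squeeze_zero (cesaroMean_nonneg fun _ => abs_nonneg _)
    (fun N => Real.le_sqrt_of_sq_le (cesaroMean_sq_le _ N)) hsqrt

lemma CesaroLim.eq_of_forall_mul_eq {x : ℕ → ℝ} {a c : ℝ} (h : CesaroLim x c) {i : ℕ}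
    (hi : 0 < i) (hx : ∀ k, x (i * k) = a) : a = c := by
  have hi' : (0 : ℝ) < i := by exact_mod_cast hi
  have hle : ∀ᶠ M in atTop, |a - c| / i ≤ cesaroMean (fun n => |x n - c|) (i * M) := by
    filter_upwards [eventually_gt_atTop 0] with M hM
    have : (0 : ℝ) < M := by exact_mod_cast hM
    have hinj : Set.InjOn (i * ·) (Finset.range M : Set ℕ) :=
      fun _ _ _ _ h => Nat.eq_of_mul_eq_mul_left hi h
    have hsub : (Finset.range M).image (i * ·) ⊆ Finset.range (i * M) := fun n hn => by
      obtain ⟨k, hk, rfl⟩ := Finset.mem_image.1 hn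
      exact Finset.mem_range.2 (Nat.mul_lt_mul_of_pos_left (Finset.mem_range.1 hk) hi)
    calc |a - c| / i = ((i * M : ℕ) : ℝ)⁻¹ * ∑ k ∈ Finset.range M, |x (i * k) - c| := by
          simp only [hx, Finset.sum_const, Finset.card_range, nsmul_eq_mul]
          push_cast
          field_simp
      _ = ((i * M : ℕ) : ℝ)⁻¹ * ∑ n ∈ (Finset.range M).image (i * ·), |x n - c| := by
          rw [Finset.sum_image hinj]
      _ ≤ _ := by
          unfold cesaroMean
          gcongr
  have hlim := h.comp (tendsto_id.const_mul_atTop' hi)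
  have hnonpos : |a - c| / i ≤ 0 := ge_of_tendsto hlim hle
  rw [div_le_iff₀ hi', zero_mul] at hnonpos
  exact sub_eq_zero.1 (abs_nonpos_iff.1 hnonpos)

end Cesaro

section AverageMeasure

variable {α : Type*} [MeasurableSpace α] {f : α → α}

/-- The average of the push-forwards of `ρ` under the first `N` iterates of `f`
(the zero measure when `N = 0`). -/
noncomputable def averageMeasure (ρ : Measure α) (f : α → α) (N : ℕ) : Measure α :=
  (N : ENNReal)⁻¹ • ∑ n ∈ Finset.range N, ρ.map f^[n]

lemma averageMeasure_apply_univ (ρ : Measure α) (hf : Measurable f) {N : ℕ} (hN : N ≠ 0) :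
    averageMeasure ρ f N Set.univ = ρ Set.univ := by
  simp only [averageMeasure, Measure.smul_apply, Measure.finsetSum_apply,
    Measure.map_apply (hf.iterate _) .univ, Set.preimage_univ, Finset.sum_const,
    Finset.card_range, smul_eq_mul, nsmul_eq_mul]
  rw [← mul_assoc, ENNReal.inv_mul_cancel (by exact_mod_cast hN) (ENNReal.natCast_ne_top N),
    one_mul]

lemma averageMeasure_real_apply {ρ : Measure α} [IsFiniteMeasure ρ] (hf : Measurable f) (N : ℕ)
    {B : Set α} (hB : MeasurableSet B) :
    (averageMeasure ρ f N).real B = cesaroMean (fun n => ρ.real (f^[n] ⁻¹' B)) N := by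
  simp only [averageMeasure, measureReal_ennreal_smul_apply, ENNReal.toReal_inv,
    ENNReal.toReal_natCast, cesaroMean]
  congr 1
  simp only [Measure.real, Measure.finsetSum_apply]
  rw [ENNReal.toReal_sum fun n _ => measure_ne_top _ _]
  simp only [Measure.map_apply (hf.iterate _) hB]

lemma averageMeasure_le {ρ m : Measure α} (hf : MeasurePreserving f m m) (hρ : ρ ≤ m) (N : ℕ) :
    averageMeasure ρ f N ≤ m := by
  intro B
  have hmap : ∀ n, (ρ.map f^[n]) B ≤ m B := fun n =>
    (Measure.map_mono hρ (hf.iterate n).measurable B).trans_eq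
      (congrArg (· B) (hf.iterate n).map_eq)
  simp only [averageMeasure, Measure.smul_apply, Measure.finsetSum_apply, smul_eq_mul]
  rw [mul_comm, ← div_eq_mul_inv]
  refine ENNReal.div_le_of_le_mul' ?_
  exact (Finset.sum_le_sum fun n _ => hmap n).trans_eq (by simp)

end AverageMeasure

section WeakMixing

variable {α : Type*} [MeasurableSpace α] {m : Measure α} {f : α → α}

lemma tendsto_measureReal_of_piSystem {ι : Type*} {l : Filter ι} [IsFiniteMeasure m]
    {ρ : ι → Measure α} {σ : Measure α} (hρ : ∀ i, ρ i ≤ m) (hσ : σ ≤ m) {C : Set (Set α)}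
    (hgen : ‹MeasurableSpace α› = MeasurableSpace.generateFrom C) (hC : IsPiSystem C)
    (huniv : Tendsto (fun i => (ρ i).real Set.univ) l (𝓝 (σ.real Set.univ)))
    (h : ∀ B ∈ C, Tendsto (fun i => (ρ i).real B) l (𝓝 (σ.real B))) {B : Set α}
    (hB : MeasurableSet B) : Tendsto (fun i => (ρ i).real B) l (𝓝 (σ.real B)) := by
  have hρfin : ∀ i, IsFiniteMeasure (ρ i) := fun i => isFiniteMeasure_of_le m (hρ i)
  have hσfin : IsFiniteMeasure σ := isFiniteMeasure_of_le m hσ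
  induction B, hB using MeasurableSpace.induction_on_inter hgen hC with
  | empty => simpa only [measureReal_empty] using tendsto_const_nhds
  | basic B hB => exact h B hB
  | compl B hB ih => simpa only [measureReal_compl hB] using huniv.sub ih
  | iUnion B hdisj hB ih =>
    have hsum : ∀ κ : Measure α, IsFiniteMeasure κ →
        HasSum (fun k => κ.real (B k)) (κ.real (⋃ k, B k)) := fun κ _ => by
      have hκ := measure_iUnion (μ := κ) hdisj hB
      rw [measureReal_def, hκ, ENNReal.tsum_toReal_eq fun k => measure_ne_top κ _]
      exact ENNReal.hasSum_toReal (hκ ▸ measure_ne_top κ _)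
    simp only [← (hsum _ (hρfin _)).tsum_eq, ← (hsum _ hσfin).tsum_eq]
    refine tendsto_tsum_of_dominated_convergence (hsum m inferInstance).summable ih
      (.of_forall fun i k => ?_)
    rw [Real.norm_of_nonneg measureReal_nonneg]
    exact ENNReal.toReal_mono (measure_ne_top _ _) (hρ i _)

lemma tendsto_cesaroMean_correlation_of_piSystem [IsProbabilityMeasure m]
    (hf : MeasurePreserving f m m) {C : Set (Set α)}
    (hgen : ‹MeasurableSpace α› = MeasurableSpace.generateFrom C) (hC : IsPiSystem C) {A : Set α}
    (h : ∀ B ∈ C, Tendsto (cesaroMean fun n => m.real (A ∩ f^[n] ⁻¹' B)) atTop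
      (𝓝 (m.real A * m.real B))) {B : Set α} (hB : MeasurableSet B) :
    Tendsto (cesaroMean fun n => m.real (A ∩ f^[n] ⁻¹' B)) atTop (𝓝 (m.real A * m.real B)) := by
  have havg : ∀ N, ∀ B, MeasurableSet B → (averageMeasure (m.restrict A) f N).real B =
      cesaroMean (fun n => m.real (A ∩ f^[n] ⁻¹' B)) N := fun N B hB => by
    rw [averageMeasure_real_apply hf.measurable N hB]
    simp only [measureReal_restrict_apply ((hf.iterate _).measurable hB), Set.inter_comm]
  have hsmul : ∀ B, (m A • m).real B = m.real A * m.real B := fun B =>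
    measureReal_ennreal_smul_apply _
  have hCm : ∀ B ∈ C, MeasurableSet B := fun B hB => by
    rw [hgen]
    exact MeasurableSpace.measurableSet_generateFrom hB
  have hle : m A • m ≤ m := fun s => mul_le_of_le_one_left zero_le prob_le_one
  have hlim := tendsto_measureReal_of_piSystem (l := atTop) (σ := m A • m)
    (averageMeasure_le hf (Measure.restrict_le_self (s := A))) hle hgen hC ?_ (fun B' hB' => ?_) hB
  · simpa only [havg _ _ hB, hsmul] using! hlim
  · simp only [havg _ _ .univ, hsmul, Set.preimage_univ, Set.inter_univ, probReal_univ, mul_one]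
    exact tendsto_cesaroMean_const _
  · simpa only [havg _ _ (hCm _ hB'), hsmul] using! h B' hB'

lemma ergodic_of_tendsto_cesaroMean_correlation [IsProbabilityMeasure m]
    (hf : MeasurePreserving f m m) {C : Set (Set α)}
    (hgen : ‹MeasurableSpace α› = MeasurableSpace.generateFrom C) (hC : IsPiSystem C)
    (h : ∀ A ∈ C, ∀ B ∈ C, Tendsto (cesaroMean fun n => m.real (A ∩ f^[n] ⁻¹' B)) atTop
      (𝓝 (m.real A * m.real B))) : Ergodic f m := by
  refine ⟨hf, ⟨fun s hs hfs => ?_⟩⟩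
  have hiterate : ∀ n, f^[n] ⁻¹' s = s := fun n => by
    rw [Set.preimage_iterate_eq, Function.iterate_fixed hfs]
  have hindep : ∀ A ∈ C, m.real (A ∩ s) = m.real A * m.real s := fun A hA => by
    have hlim := tendsto_cesaroMean_correlation_of_piSystem hf hgen hC (h A hA) hs
    simp only [hiterate] at hlim
    exact tendsto_nhds_unique (tendsto_cesaroMean_const _) hlim
  have hrestrict : m.restrict s = m s • m := by
    have : IsFiniteMeasure (m s • m) := Measure.smul_finite m (measure_ne_top m s)
    refine ext_of_generate_finite C hgen hC (fun A hA => ?_) (by simp)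
    rw [← measureReal_eq_measureReal_iff, measureReal_restrict_apply' hs,
      measureReal_ennreal_smul_apply, hindep A hA, mul_comm, measureReal_def m s]
  have hsq : m s * 1 = m s * m s := by
    simpa using congrArg (· s) hrestrict
  rw [eventuallyConst_set', ae_eq_empty, ae_eq_univ, prob_compl_eq_zero_iff hs]
  refine or_iff_not_imp_left.2 fun h0 => ?_
  exact ((ENNReal.mul_right_inj h0 (measure_ne_top m s)).1 hsq).symm

lemma tendsto_cesaroMean_correlation [IsProbabilityMeasure m] (hf : Ergodic f m) (A : Set α)
    {B : Set α} (hB : MeasurableSet B) :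
    Tendsto (cesaroMean fun n => m.real (A ∩ f^[n] ⁻¹' B)) atTop (𝓝 (m.real A * m.real B)) := by
  have hfp := hf.toMeasurePreserving
  have hind : MemLp (B.indicator (1 : α → ℝ)) 2 m :=
    (memLp_const (1 : ℝ)).indicator hB
  have hlim := tendsto_setIntegral_of_L1' _ aestronglyMeasurable_const
    (.of_forall fun N => (memLp_birkhoffAverage hfp hind N).integrable one_le_two)
    (tendsto_eLpNorm_birkhoffAverage_sub_integral hf hind) A
  have hcorr : ∀ n, ∫ x in A, B.indicator 1 (f^[n] x) ∂m = m.real (A ∩ f^[n] ⁻¹' B) := fun n => by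
    have hBn := (hfp.iterate n).measurable hB
    change ∫ x in A, (f^[n] ⁻¹' B).indicator 1 x ∂m = _
    rw [integral_indicator_one hBn, measureReal_restrict_apply hBn, Set.inter_comm]
  rw [setIntegral_const, smul_eq_mul, integral_indicator_one hB] at hlim
  refine hlim.congr fun N => ?_
  simp only [birkhoffAverage, birkhoffSum, smul_eq_mul, cesaroMean]
  rw [integral_const_mul, integral_finsetSum]
  · simp only [hcorr]
  · exact fun n _ => ((hfp.iterate n).integrable_comp_of_integrable
      (hind.integrable one_le_two)).integrableOn

/-- Weak mixing in terms of correlations: `m (A ∩ f⁻ⁿ B)` converges to `m A * m B` in the strong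
Cesàro sense. -/
def WeakMixing (m : Measure α) (f : α → α) : Prop :=
  ∀ ⦃A B : Set α⦄, MeasurableSet A → MeasurableSet B →
    CesaroLim (fun n => m.real (A ∩ f^[n] ⁻¹' B)) (m.real A * m.real B)

lemma ergodic_of_ergodic_prod [IsProbabilityMeasure m] (hf : MeasurePreserving f m m)
    (h : Ergodic (Prod.map f f) (m.prod m)) : Ergodic f m := by
  refine ⟨hf, ⟨fun s hs hfs => ?_⟩⟩
  have hinv : Prod.map f f ⁻¹' (Prod.fst ⁻¹' s) = Prod.fst ⁻¹' s :=
    congrArg (Prod.fst ⁻¹' ·) hfs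
  have hconst := h.aeconst_set (measurable_fst hs) hinv
  rw [eventuallyConst_set', ae_eq_empty, ae_eq_univ] at hconst ⊢
  rwa [← Set.preimage_compl, measurePreserving_fst.measure_preimage hs.nullMeasurableSet,
    measurePreserving_fst.measure_preimage hs.compl.nullMeasurableSet] at hconst

lemma weakMixing_of_ergodic_prod [IsProbabilityMeasure m] (hf : MeasurePreserving f m m)
    (h : Ergodic (Prod.map f f) (m.prod m)) : WeakMixing m f := by
  intro A B _ hB
  refine .of_sq (tendsto_cesaroMean_correlation (ergodic_of_ergodic_prod hf h) A hB) ?_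
  have hlim := tendsto_cesaroMean_correlation h (A ×ˢ A) (hB.prod hB)
  have hcorr : ∀ n, (m.prod m).real (A ×ˢ A ∩ (Prod.map f f)^[n] ⁻¹' B ×ˢ B) =
      m.real (A ∩ f^[n] ⁻¹' B) ^ 2 := fun n => by
    rw [Prod.map_iterate, Set.preimage_prod_map_prod, Set.prod_inter_prod,
      measureReal_prod_prod, sq]
  simpa only [hcorr, measureReal_prod_prod, ← sq, mul_pow] using hlim

lemma WeakMixing.ergodic [IsProbabilityMeasure m] (hf : MeasurePreserving f m m)
    (h : WeakMixing m f) : Ergodic f m :=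
  ergodic_of_tendsto_cesaroMean_correlation hf
    (MeasurableSpace.generateFrom_measurableSet).symm MeasurableSpace.isPiSystem_measurableSet
    fun _ hA _ hB => (h hA hB).tendsto_cesaroMean

lemma WeakMixing.of_map {β : Type*} [MeasurableSpace β] {g : β → β} {φ : α → β}
    (hf : MeasurePreserving f m m) (hφ : Measurable φ) (hg : Measurable g)
    (hfg : ∀ᵐ x ∂m, φ (f x) = g (φ x)) (h : WeakMixing m f) : WeakMixing (m.map φ) g := by
  have hiter : ∀ n, ∀ᵐ x ∂m, φ (f^[n] x) = g^[n] (φ x) := fun n => by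
    induction n with
    | zero => exact ae_of_all m fun x => rfl
    | succ n ih =>
      filter_upwards [hfg, hf.quasiMeasurePreserving.ae ih] with x hx hn
      rw [Function.iterate_succ_apply, Function.iterate_succ_apply, hn, hx]
  intro A B hA hB
  have hcorr : ∀ n, m.real (φ ⁻¹' (A ∩ g^[n] ⁻¹' B)) =
      m.real (φ ⁻¹' A ∩ f^[n] ⁻¹' (φ ⁻¹' B)) := fun n => measureReal_congr <| by
    filter_upwards [hiter n] with x hx
    exact congrArg (fun z => φ x ∈ A ∧ z ∈ B) hx.symm
  simpa only [map_measureReal_apply hφ (hA.inter (hg.iterate _ hB)), hcorr,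
    map_measureReal_apply hφ hA, map_measureReal_apply hφ hB] using h (hφ hA) (hφ hB)

lemma WeakMixing.ergodic_pi {ι : Type*} [Fintype ι] [IsProbabilityMeasure m]
    (hf : MeasurePreserving f m m) (h : WeakMixing m f) :
    Ergodic (Pi.map fun _ : ι => f) (Measure.pi fun _ : ι => m) := by
  refine ergodic_of_tendsto_cesaroMean_correlation (measurePreserving_pi _ _ fun _ => hf)
    generateFrom_pi.symm isPiSystem_pi ?_
  rintro _ ⟨A, hA, rfl⟩ _ ⟨B, hB, rfl⟩
  have hbox : ∀ n, Set.univ.pi A ∩ (Pi.map fun _ : ι => f)^[n] ⁻¹' Set.univ.pi B =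
      Set.univ.pi fun i => A i ∩ f^[n] ⁻¹' B i := fun n => by
    rw [Pi.map_iterate, Set.pi_inter_distrib]
    rfl
  simp only [hbox, Measure.real, Measure.pi_pi, ENNReal.toReal_prod]
  rw [← Finset.prod_mul_distrib]
  refine (CesaroLim.prod _ (fun i => h (hA i trivial) (hB i trivial)) (fun i n => ?_)
    fun i => ?_).tendsto_cesaroMean
  · exact (abs_of_nonneg measureReal_nonneg).trans_le measureReal_le_one
  · rw [abs_of_nonneg (by positivity)]
    exact mul_le_one₀ measureReal_le_one measureReal_nonneg measureReal_le_one

end WeakMixing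

/-! ### Unique ergodicity of cube actions -/

section KrylovBogoliubov

lemma isProbabilityMeasure_averageMeasure {α : Type*} [MeasurableSpace α] {f : α → α}
    (ρ : Measure α) [IsProbabilityMeasure ρ] (hf : Measurable f) {N : ℕ} (hN : N ≠ 0) :
    IsProbabilityMeasure (averageMeasure ρ f N) :=
  ⟨by rw [averageMeasure_apply_univ ρ hf hN, measure_univ]⟩

lemma map_averageMeasure {α : Type*} [MeasurableSpace α] {f g : α → α} {ρ : Measure α}
    (hf : Measurable f) (hg : Measurable g) (hgf : Function.Commute g f) (hρ : ρ.map g = ρ)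
    (N : ℕ) : (averageMeasure ρ f N).map g = averageMeasure ρ f N := by
  have hmap : ∀ n, (ρ.map f^[n]).map g = ρ.map f^[n] := fun n => by
    rw [Measure.map_map hg (hf.iterate n), (hgf.iterate_right n).comp_eq,
      ← Measure.map_map (hf.iterate n) hg, hρ]
  rw [averageMeasure, Measure.map_smul, Measure.map_finset_sum hg.aemeasurable]
  simp only [hmap]

variable {E : Type*} [TopologicalSpace E] [MeasurableSpace E] [BorelSpace E]

lemma integral_averageMeasure (ρ : Measure E) [IsFiniteMeasure ρ] {f : E → E}
    (hf : Continuous f) (N : ℕ) (h : BoundedContinuousFunction E ℝ) :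
    ∫ x, h x ∂(averageMeasure ρ f N) = cesaroMean (fun n => ∫ x, h (f^[n] x) ∂ρ) N := by
  rw [averageMeasure, integral_smul_measure, integral_finsetSum_measure fun n _ => h.integrable _]
  simp only [smul_eq_mul, ENNReal.toReal_inv, ENNReal.toReal_natCast, cesaroMean]
  congr 1
  refine Finset.sum_congr rfl fun n _ => ?_
  rw [integral_map (hf.iterate n).aemeasurable h.continuous.aestronglyMeasurable]

lemma tendsto_integral_averageMeasure_comp_sub (ρ : Measure E) [IsProbabilityMeasure ρ]
    {f : E → E} (hf : Continuous f) (h : BoundedContinuousFunction E ℝ) :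
    Tendsto (fun N => ∫ x, h (f x) ∂(averageMeasure ρ f N) - ∫ x, h x ∂(averageMeasure ρ f N))
      atTop (𝓝 0) := by
  set I : ℕ → ℝ := fun n => ∫ x, h (f^[n] x) ∂ρ
  have htelescope : ∀ N : ℕ, ∫ x, h (f x) ∂(averageMeasure ρ f N) -
      ∫ x, h x ∂(averageMeasure ρ f N) = (N : ℝ)⁻¹ * (I N - I 0) := fun N => by
    have hcomp := integral_averageMeasure ρ hf N (h.compContinuous ⟨f, hf⟩)
    simp only [BoundedContinuousFunction.compContinuous_apply, ContinuousMap.coe_mk] at hcomp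
    rw [hcomp, integral_averageMeasure ρ hf N h, cesaroMean, cesaroMean, ← mul_sub,
      ← Finset.sum_sub_distrib]
    simp only [← Function.iterate_succ_apply' f]
    rw [Finset.sum_range_sub I]
  have hbound : ∀ n, |I n| ≤ ‖h‖ := fun n => by
    simpa using norm_integral_le_of_norm_le_const (μ := ρ)
      (.of_forall fun x => h.norm_coe_le_norm (f^[n] x))
  have hlim := (tendsto_inv_atTop_nhds_zero_nat (𝕜 := ℝ)).mul_const (‖h‖ + ‖h‖)
  rw [zero_mul] at hlim
  refine squeeze_zero_norm (fun N => ?_) hlim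
  rw [htelescope, norm_mul, Real.norm_of_nonneg (by positivity), Real.norm_eq_abs]
  gcongr
  exact (abs_sub _ _).trans (add_le_add (hbound _) (hbound _))

variable [CompactSpace E] [TopologicalSpace.MetrizableSpace E]

lemma exists_map_eq_self_of_commute {ρ : Measure E} [IsProbabilityMeasure ρ] {f : E → E}
    (hf : Continuous f) : ∃ κ : Measure E, IsProbabilityMeasure κ ∧ κ.map f = κ ∧
      ∀ g : E → E, Continuous g → Function.Commute g f → ρ.map g = ρ → κ.map g = κ := by
  let avg : ℕ → Measure E := fun N => averageMeasure ρ f (N + 1)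
  have hprob : ∀ N, IsProbabilityMeasure (avg N) := fun N =>
    isProbabilityMeasure_averageMeasure ρ hf.measurable N.succ_ne_zero
  let U : Ultrafilter ℕ := Ultrafilter.of atTop
  obtain ⟨κ, -, hκ⟩ := (isCompact_univ (X := ProbabilityMeasure E)).ultrafilter_le_nhds
    (U.map fun N => ⟨avg N, hprob N⟩) (by simp)
  have hlim : ∀ h : BoundedContinuousFunction E ℝ,
      Tendsto (fun N => ∫ x, h x ∂(avg N)) U (𝓝 (∫ x, h x ∂(κ : Measure E))) :=
    ProbabilityMeasure.tendsto_iff_forall_integral_tendsto.1 hκ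
  have hinv : ∀ g : E → E, Continuous g → (∀ h : BoundedContinuousFunction E ℝ,
      Tendsto (fun N => ∫ x, h (g x) ∂(avg N) - ∫ x, h x ∂(avg N)) atTop (𝓝 0)) →
      (κ : Measure E).map g = κ := fun g hg hg0 => by
    have := Measure.isProbabilityMeasure_map (μ := (κ : Measure E)) hg.aemeasurable
    refine ext_of_forall_integral_eq_of_IsFiniteMeasure fun h => ?_
    rw [integral_map hg.aemeasurable h.continuous.aestronglyMeasurable]
    exact sub_eq_zero.1 (tendsto_nhds_unique ((hlim (h.compContinuous ⟨g, hg⟩)).sub (hlim h))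
      ((hg0 h).mono_left (Ultrafilter.of_le _)))
  refine ⟨κ, inferInstance, hinv f hf fun h => ?_, fun g hg hgf hρ => hinv g hg fun h => ?_⟩
  · exact (tendsto_integral_averageMeasure_comp_sub ρ hf h).comp (tendsto_add_atTop_nat 1)
  · have hmap : ∀ N, ∫ x, h (g x) ∂(avg N) = ∫ x, h x ∂(avg N) := fun N => by
      conv_rhs => rw [← show (avg N).map g = avg N from
        map_averageMeasure hf.measurable hg.measurable hgf hρ (N + 1)]
      rw [integral_map hg.aemeasurable h.continuous.aestronglyMeasurable]
    simp only [hmap, sub_self, tendsto_const_nhds]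

lemma exists_invariant_measure_of_commute [Nonempty E] {G : Set (E → E)} (hG : G.Finite)
    (hc : ∀ f ∈ G, Continuous f) (hcomm : ∀ f ∈ G, ∀ g ∈ G, Function.Commute f g) :
    ∃ ρ : Measure E, IsProbabilityMeasure ρ ∧ ∀ f ∈ G, ρ.map f = ρ := by
  induction G, hG using Set.Finite.induction_on with
  | empty => exact ⟨Measure.dirac (Classical.arbitrary E), inferInstance, by simp⟩
  | @insert f G _ _ ih =>
    obtain ⟨ρ, hρ, hinv⟩ := ih (fun g hg => hc g (.inr hg))
      fun g hg k hk => hcomm g (.inr hg) k (.inr hk)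
    obtain ⟨κ, hκ, hκf, hκg⟩ := exists_map_eq_self_of_commute (ρ := ρ) (hc f (.inl rfl))
    refine ⟨κ, hκ, ?_⟩
    rintro g (rfl | hg)
    · exact hκf
    · exact hκg g (hc g (.inr hg)) (hcomm g (.inr hg) f (.inl rfl)) (hinv g hg)

lemma exists_invariant_measure_of_isClosed {A : Set E} (hA : IsClosed A) (hne : A.Nonempty)
    {G : Set (E ≃ₜ E)} (hG : G.Finite) (hcomm : ∀ f ∈ G, ∀ g ∈ G, Function.Commute f g)
    (hmaps : ∀ g ∈ G, Set.MapsTo g A A) :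
    ∃ ρ : Measure E, IsProbabilityMeasure ρ ∧ ρ A = 1 ∧ ∀ g ∈ G, MeasurePreserving g ρ ρ := by
  have : CompactSpace A := isCompact_iff_compactSpace.1 hA.isCompact
  have : Nonempty A := hne.to_subtype
  have : Finite G := hG
  let R : G → A → A := fun g => (hmaps g g.2).restrict g A A
  have hR : ∀ g, Continuous (R g) := fun g => g.1.continuous.restrict (hmaps g g.2)
  obtain ⟨ρ, hρ, hinv⟩ := exists_invariant_measure_of_commute (Set.finite_range R)
    (by rintro _ ⟨g, rfl⟩; exact hR g)
    (by rintro _ ⟨g, rfl⟩ _ ⟨k, rfl⟩ a; exact Subtype.ext (hcomm g g.2 k k.2 a))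
  have hval : MeasurePreserving Subtype.val ρ (ρ.map Subtype.val) :=
    measurable_subtype_coe.measurePreserving ρ
  refine ⟨ρ.map Subtype.val, Measure.isProbabilityMeasure_map hval.aemeasurable, ?_, fun g hg => ?_⟩
  · rw [Measure.map_apply measurable_subtype_coe hA.measurableSet, Subtype.coe_preimage_self,
      measure_univ]
  · exact hval.of_semiconj ⟨(hR ⟨g, hg⟩).measurable, hinv _ ⟨⟨g, hg⟩, rfl⟩⟩ (fun _ => rfl)
      g.continuous.measurable

end KrylovBogoliubov

section StrictErgodicity

variable {E : Type*} [TopologicalSpace E] {A : Set E} {G : Set (E ≃ₜ E)}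

lemma closure_grpOrbit_subset (hA : IsClosed A) (hmem : ∀ g ∈ G, ∀ x, g x ∈ A ↔ x ∈ A) {y : E}
    (hy : y ∈ A) : closure (grpOrbit G y) ⊆ A := by
  refine closure_minimal ?_ hA
  rintro _ ⟨g, hg, rfl⟩
  have hg_mem : ∀ x, g x ∈ A ↔ x ∈ A := by
    induction hg using Subgroup.closure_induction with
    | mem g hg => exact hmem g hg
    | one => exact fun x => Iff.rfl
    | mul a b _ _ ha hb => exact fun x => (ha (b x)).trans (hb x)
    | inv a _ ha =>
      intro x
      rw [← ha]
      exact iff_of_eq (congrArg (· ∈ A) (a.apply_symm_apply x))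
  exact (hg_mem y).2 hy

lemma mapsTo_closure_grpOrbit {g : E ≃ₜ E} (hg : g ∈ G) (y : E) :
    Set.MapsTo g (closure (grpOrbit G y)) (closure (grpOrbit G y)) := by
  refine Set.MapsTo.closure ?_ g.continuous
  rintro _ ⟨k, hk, rfl⟩
  exact ⟨g * k, mul_mem (Subgroup.subset_closure hg) hk, rfl⟩

variable [MeasurableSpace E] [BorelSpace E] [CompactSpace E] [TopologicalSpace.MetrizableSpace E]

lemma eq_of_isClosed_of_mapsTo {O : Set E} (hO : IsClosed O) (hne : O.Nonempty)
    (hsub : O ⊆ A) (hG : G.Finite) (hcomm : ∀ f ∈ G, ∀ g ∈ G, Function.Commute f g)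
    (hmaps : ∀ g ∈ G, Set.MapsTo g O O) {ν : Measure E} (hsupp : A ⊆ ν.support)
    (huniq : ∀ ρ : Measure E, IsProbabilityMeasure ρ → ρ A = 1 →
      (∀ g ∈ G, MeasurePreserving g ρ ρ) → ρ = ν) : O = A := by
  obtain ⟨ρ, hρ, hρO, hinv⟩ := exists_invariant_measure_of_isClosed hO hne hG hcomm hmaps
  have hρA : ρ A = 1 := le_antisymm prob_le_one (hρO ▸ measure_mono hsub)
  obtain rfl := huniq ρ hρ hρA hinv
  have hO_ae : O ∈ ae ρ := (mem_ae_iff_prob_eq_one hO.measurableSet).2 hρO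
  exact hsub.antisymm (hsupp.trans (Measure.support_subset_of_isClosed hO hO_ae))

lemma strictlyErgodicOn_of_forall_eq (hA : IsClosed A) (hG : G.Finite)
    (hcomm : ∀ f ∈ G, ∀ g ∈ G, Function.Commute f g)
    (hmem : ∀ g ∈ G, ∀ x, g x ∈ A ↔ x ∈ A) {ν : Measure E} [IsProbabilityMeasure ν]
    (hνA : ν A = 1) (hν : ∀ g ∈ G, MeasurePreserving g ν ν) (hsupp : A ⊆ ν.support)
    (huniq : ∀ ρ : Measure E, IsProbabilityMeasure ρ → ρ A = 1 →
      (∀ g ∈ G, MeasurePreserving g ρ ρ) → ρ = ν) : StrictlyErgodicOn G A := by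
  refine ⟨fun y hy => ?_, ν, ⟨‹_›, hνA, hν⟩, fun ρ hρ => huniq ρ hρ.1 hρ.2.1 hρ.2.2⟩
  exact eq_of_isClosed_of_mapsTo isClosed_closure ⟨y, subset_closure ⟨1, one_mem _, rfl⟩⟩
    (closure_grpOrbit_subset hA hmem hy) hG hcomm (fun g hg => mapsTo_closure_grpOrbit hg y)
    hsupp huniq

/-- `ν` is the only probability measure invariant under `S`. -/
def UniquelyErgodic {Y : Type*} [MeasurableSpace Y] (S : Y → Y) (ν : Measure Y) : Prop :=
  ∀ ρ : Measure Y, IsProbabilityMeasure ρ → MeasurePreserving S ρ ρ → ρ = ν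

lemma strictlyErgodicHomeo_of_uniquelyErgodic {S : E ≃ₜ E} {ν : Measure E}
    [IsProbabilityMeasure ν] [ν.IsOpenPosMeasure] (hS : MeasurePreserving S ν ν)
    (huniq : UniquelyErgodic S ν) : StrictlyErgodicHomeo S := by
  obtain ⟨hmin, -⟩ := strictlyErgodicOn_of_forall_eq isClosed_univ (Set.finite_singleton S)
    (by simp [Function.Commute.refl]) (by simp) (ν := ν) measure_univ (by simpa using hS)
    Measure.support_eq_univ.superset fun ρ hρ _ hinv => huniq ρ hρ (hinv S rfl)
  refine ⟨fun y => ?_, ν, ⟨‹_›, hS⟩, fun ρ hρ => huniq ρ hρ.1 hρ.2⟩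
  refine dense_iff_closure_eq.2 (Set.univ_subset_iff.1 ?_)
  rw [← hmin y trivial]
  refine closure_mono ?_
  rintro _ ⟨g, hg, rfl⟩
  obtain ⟨n, rfl⟩ := Subgroup.mem_closure_singleton.1 hg
  exact ⟨n, rfl⟩

end StrictErgodicity

section Independence

lemma eq_prod_of_ergodic_fst {α β : Type*} [MeasurableSpace α] [MeasurableSpace β]
    {l : Measure (α × β)} [IsProbabilityMeasure l] {f : α → α} (hf : Ergodic f l.fst)
    (hl : MeasurePreserving (Prod.map f id) l l) : l = l.fst.prod l.snd := by
  refine (Measure.prod_eq fun U V hU hV => ?_).symm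
  have hVm : MeasurableSet (Prod.snd ⁻¹' V : Set (α × β)) := measurable_snd hV
  set lV : Measure α := (l.restrict (Prod.snd ⁻¹' V)).map Prod.fst
  have hlV_inv : MeasurePreserving f lV lV :=
    (measurable_fst.measurePreserving _).of_semiconj (hl.restrict_preimage hVm)
      (fun _ => rfl) hf.measurable
  have hlV_le : lV ≤ l.fst := Measure.map_mono Measure.restrict_le_self measurable_fst
  have : IsFiniteMeasure lV := isFiniteMeasure_of_le _ hlV_le
  obtain ⟨c, hc⟩ := hf.eq_smul_of_absolutelyContinuous hlV_inv hlV_le.absolutelyContinuous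
  have hlV_apply : ∀ U, MeasurableSet U → l (U ×ˢ V) = c * l.fst U := fun U hU => by
    rw [← smul_eq_mul, ← Measure.smul_apply, ← hc, Measure.map_apply measurable_fst hU,
      Measure.restrict_apply (measurable_fst hU), Set.prod_eq]
  have hc_eq : l.snd V = c := by
    rw [Measure.snd_apply hV, ← Set.univ_prod, hlV_apply _ .univ, measure_univ, mul_one]
  rw [hlV_apply U hU, hc_eq, mul_comm]

end Independence

section Cube

variable {Y ι : Type*}

/-- Applies `S` to the coordinates satisfying `p` and fixes the others. -/
def partialDiag (S : Y → Y) (p : ι → Prop) [DecidablePred p] : (ι → Y) → ι → Y :=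
  Pi.map fun i => if p i then S else id

lemma partialDiag_of_pos {S : Y → Y} {p : ι → Prop} [DecidablePred p] {i : ι} (hi : p i)
    (y : ι → Y) : partialDiag S p y i = S (y i) := by
  simp only [partialDiag, Pi.map_apply, if_pos hi]

lemma partialDiag_of_neg {S : Y → Y} {p : ι → Prop} [DecidablePred p] {i : ι} (hi : ¬p i)
    (y : ι → Y) : partialDiag S p y i = y i := by
  simp only [partialDiag, Pi.map_apply, if_neg hi, id_eq]

lemma commute_partialDiag (S : Y → Y) (p q : ι → Prop) [DecidablePred p] [DecidablePred q] :
    Function.Commute (partialDiag S p) (partialDiag S q) := by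
  intro y
  ext i
  by_cases hp : p i <;> by_cases hq : q i <;>
    simp only [partialDiag_of_pos, partialDiag_of_neg, hp, hq, not_false_eq_true]

lemma injective_restrict_castSucc {k : ℕ} {σ : ι → Fin (k + 1) → Bool}
    (hσ : Function.Injective σ) {p : ι → Prop} {b : Bool} (hp : ∀ i, p i → σ i (Fin.last k) = b) :
    Function.Injective fun (i : {i // p i}) (j : Fin k) => σ i j.castSucc := by
  intro i i' h
  refine Subtype.ext (hσ (funext fun j => ?_))
  induction j using Fin.lastCases with
  | last => rw [hp i i.2, hp i' i'.2]
  | cast j => exact congrFun h j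

variable [MeasurableSpace Y] {S : Y → Y} {ν : Measure Y} {l : Measure (ι → Y)}

lemma measurable_partialDiag (hS : Measurable S) (p : ι → Prop) [DecidablePred p] :
    Measurable (partialDiag S p) := by
  refine measurable_pi_lambda _ fun i => ?_
  by_cases hi : p i
  · simp only [partialDiag_of_pos hi]
    exact hS.comp (measurable_pi_apply i)
  · simp only [partialDiag_of_neg hi]
    exact measurable_pi_apply i

lemma measurable_subtypeRestrict (p : ι → Prop) :
    Measurable (Subtype.restrict p : (ι → Y) → {i // p i} → Y) :=
  measurable_pi_lambda _ fun _ => measurable_pi_apply _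

lemma measurePreserving_partialDiag_restrict (hS : Measurable S) {q : ι → Prop}
    [DecidablePred q] (hl : MeasurePreserving (partialDiag S q) l l) (p : ι → Prop) :
    MeasurePreserving (partialDiag S fun i : {i // p i} => q i)
      (l.map (Subtype.restrict p)) (l.map (Subtype.restrict p)) :=
  ((measurable_subtypeRestrict p).measurePreserving l).of_semiconj hl (fun _ => rfl)
    (measurable_partialDiag hS _)

lemma measurePreserving_piMap_restrict (hS : Measurable S) {p : ι → Prop} {f : (ι → Y) → ι → Y}
    (hl : MeasurePreserving f l l) (hf : ∀ y i, p i → f y i = S (y i)) :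
    MeasurePreserving (Pi.map fun _ : {i // p i} => S)
      (l.map (Subtype.restrict p)) (l.map (Subtype.restrict p)) :=
  ((measurable_subtypeRestrict p).measurePreserving l).of_semiconj hl
    (fun y => funext fun i => hf y i i.2)
    (measurable_pi_lambda _ fun i => hS.comp (measurable_pi_apply i))

variable [Fintype ι]

lemma measurePreserving_partialDiag_pi {κ : ι → Measure Y} [∀ i, SigmaFinite (κ i)] {p : ι → Prop}
    [DecidablePred p] (h : ∀ i, p i → MeasurePreserving S (κ i) (κ i)) :
    MeasurePreserving (partialDiag S p) (Measure.pi κ) (Measure.pi κ) :=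
  measurePreserving_pi κ κ fun i => by
    split_ifs with hi
    exacts [h i hi, MeasurePreserving.id _]

lemma eq_pi_of_subsingleton [Subsingleton ι] {κ : ι → Measure Y} [∀ i, SigmaFinite (κ i)]
    [IsProbabilityMeasure l] (h : ∀ i, l.map (fun y => y i) = κ i) : l = Measure.pi κ := by
  refine (Measure.pi_eq fun s hs => ?_).symm
  rcases isEmpty_or_nonempty ι with hι | ⟨⟨i⟩⟩
  · have hs_univ : Set.univ.pi s = Set.univ := Set.eq_univ_of_forall fun _ i _ => hι.elim i
    simp [hs_univ]
  · have : Unique ι := ⟨⟨i⟩, fun j => Subsingleton.elim j i⟩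
    rw [Fintype.prod_subsingleton _ i, ← h i, Measure.map_apply (measurable_pi_apply i) (hs i)]
    congr 1
    ext y
    simp only [Set.mem_univ_pi, Set.mem_preimage, Unique.forall_iff]
    rw [Subsingleton.elim i default]

variable [IsProbabilityMeasure ν] [IsProbabilityMeasure l]

lemma eq_pi_of_restrict (hS : MeasurePreserving S ν ν) (hw : WeakMixing ν S)
    (p : ι → Prop) [DecidablePred p] {κ : ι → Measure Y} [∀ i, IsProbabilityMeasure (κ i)]
    (hκ : ∀ i, p i → κ i = ν) (hl : MeasurePreserving (partialDiag S p) l l)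
    (hpos : l.map (Subtype.restrict p) = Measure.pi fun _ => ν)
    (hneg : l.map (Subtype.restrict fun i => ¬p i) = Measure.pi fun i : {i // ¬p i} => κ i) :
    l = Measure.pi κ := by
  let e := MeasurableEquiv.piEquivPiSubtypeProd (fun _ : ι => Y) p
  have := Measure.isProbabilityMeasure_map (μ := l) e.measurable.aemeasurable
  have hfst : (l.map e).fst = Measure.pi fun _ => ν := by
    rw [← hpos, Measure.fst, Measure.map_map measurable_fst e.measurable]
    rfl
  have hsnd : (l.map e).snd = Measure.pi fun i : {i // ¬p i} => κ i := by
    rw [← hneg, Measure.snd, Measure.map_map measurable_snd e.measurable]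
    rfl
  have herg : Ergodic (Pi.map fun _ : {i // p i} => S) (l.map e).fst := by
    rw [hfst]
    exact hw.ergodic_pi hS
  have hinv : MeasurePreserving (Prod.map (Pi.map fun _ : {i // p i} => S) id)
      (l.map e) (l.map e) :=
    (e.measurable.measurePreserving l).of_semiconj hl
      (fun y => Prod.ext (funext fun i => partialDiag_of_pos i.2 y)
        (funext fun i => partialDiag_of_neg i.2 y)) (herg.measurable.prodMap measurable_id)
  have hpκ : (fun i : {i // p i} => κ i) = fun _ => ν := funext fun i => hκ i i.2
  refine e.map_measurableEquiv_injective ?_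
  rw [(measurePreserving_piEquivPiSubtypeProd κ p).map_eq, eq_prod_of_ergodic_fst herg hinv,
    hfst, hsnd, hpκ]

lemma eq_pi_of_measurePreserving_cube (hS : MeasurePreserving S ν ν) (hw : WeakMixing ν S)
    (huniq : UniquelyErgodic S ν) {k : ℕ} {σ : ι → Fin k → Bool} (hσ : Function.Injective σ)
    (hdiag : MeasurePreserving (Pi.map fun _ : ι => S) l l)
    (hface : ∀ j, MeasurePreserving (partialDiag S fun i => σ i j = true) l l) :
    l = Measure.pi fun _ => ν := by
  induction k generalizing ι with
  | zero =>
    have : Subsingleton ι := hσ.subsingleton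
    refine eq_pi_of_subsingleton fun i => huniq _ ?_ ?_
    · exact Measure.isProbabilityMeasure_map (measurable_pi_apply i).aemeasurable
    · exact ((measurable_pi_apply i).measurePreserving l).of_semiconj hdiag (fun _ => rfl)
        hS.measurable
  | succ k ih =>
    have hhalf : ∀ (p : ι → Prop) [DecidablePred p] (b : Bool),
        (∀ i, p i → σ i (Fin.last k) = b) →
        l.map (Subtype.restrict p) = Measure.pi fun _ => ν := fun p _ b hp => by
      have := Measure.isProbabilityMeasure_map (μ := l) (measurable_subtypeRestrict p).aemeasurable
      exact ih (injective_restrict_castSucc hσ hp)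
        (measurePreserving_piMap_restrict hS.measurable hdiag fun _ _ _ => rfl)
        fun j => measurePreserving_partialDiag_restrict hS.measurable (hface j.castSucc) p
    exact eq_pi_of_restrict hS hw _ (fun _ _ => rfl) (hface (Fin.last k))
      (hhalf _ true fun i h => h) (hhalf _ false fun i h => by simpa using h)

lemma eq_pi_of_measurePreserving_face (hS : MeasurePreserving S ν ν) (hw : WeakMixing ν S)
    (huniq : UniquelyErgodic S ν) {k : ℕ} {σ : ι → Fin k → Bool} (hσ : Function.Injective σ)
    (hface : ∀ j, MeasurePreserving (partialDiag S fun i => σ i j = true) l l)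
    {κ : ι → Measure Y} [∀ i, IsProbabilityMeasure (κ i)]
    (hκ_zero : ∀ i, (∀ j, σ i j = false) → l.map (fun y => y i) = κ i)
    (hκ : ∀ i j, σ i j = true → κ i = ν) : l = Measure.pi κ := by
  induction k generalizing ι with
  | zero =>
    have : Subsingleton ι := hσ.subsingleton
    exact eq_pi_of_subsingleton fun i => hκ_zero i fun j => j.elim0
  | succ k ih =>
    have hrestrict : ∀ p : ι → Prop, IsProbabilityMeasure (l.map (Subtype.restrict p)) := fun p =>
      Measure.isProbabilityMeasure_map (measurable_subtypeRestrict p).aemeasurable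
    refine eq_pi_of_restrict hS hw (fun i => σ i (Fin.last k) = true)
      (fun i hi => hκ i _ hi) (hface (Fin.last k)) ?_ ?_
    · exact eq_pi_of_measurePreserving_cube hS hw huniq
        (injective_restrict_castSucc hσ fun i h => h)
        (measurePreserving_piMap_restrict hS.measurable (hface (Fin.last k))
          fun y i hi => partialDiag_of_pos (p := fun i => σ i (Fin.last k) = true) hi y)
        fun j => measurePreserving_partialDiag_restrict hS.measurable (hface j.castSucc) _
    · refine ih (injective_restrict_castSucc hσ (b := false) fun i h => by simpa using h)
        (fun j => measurePreserving_partialDiag_restrict hS.measurable (hface j.castSucc) _)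
        (fun i hi => ?_) fun i j hij => hκ i _ hij
      rw [Measure.map_map (measurable_pi_apply i) (measurable_subtypeRestrict _), ← hκ_zero i]
      · rfl
      · intro j
        induction j using Fin.lastCases with
        | last => simpa using i.2
        | cast j => exact hi j

end Cube

section FaceMarginal

variable {Y ι : Type*} [MeasurableSpace Y]

lemma measurableSet_eval_eq [MeasurableSingletonClass Y] (i : ι) (y : Y) :
    MeasurableSet {z : ι → Y | z i = y} :=
  (measurableSet_singleton y).preimage (measurable_pi_apply i)

lemma map_eval_eq_dirac [MeasurableSingletonClass Y] {ρ : Measure (ι → Y)}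
    [IsProbabilityMeasure ρ] {i : ι} {y : Y} (h : ρ {z | z i = y} = 1) :
    ρ.map (fun z => z i) = Measure.dirac y := by
  rw [Measure.map_congr ((mem_ae_iff_prob_eq_one (measurableSet_eval_eq i y)).2 h),
    Measure.map_const, measure_univ, one_smul]

lemma pi_apply_eval_eq [MeasurableSingletonClass Y] [Fintype ι] {κ : ι → Measure Y}
    [∀ i, IsProbabilityMeasure (κ i)] {i : ι} {y : Y} (h : κ i = Measure.dirac y) :
    Measure.pi κ {z | z i = y} = 1 := by
  refine ((measurePreserving_eval κ i).measure_preimage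
    (measurableSet_singleton y).nullMeasurableSet).trans ?_
  rw [h, Measure.dirac_apply_of_mem (Set.mem_singleton y)]

/-- The product measure on the cube with marginal `δ_y` at the vertex `0` and `ν` elsewhere; it is
the invariant measure on the closure of the face orbit of `(y, …, y)`. -/
noncomputable def faceMarginal (ν : Measure Y) (y : Y) (d : ℕ) : (Fin d → Bool) → Measure Y :=
  Function.update (fun _ => ν) (fun _ => false) (Measure.dirac y)

lemma faceMarginal_zero (ν : Measure Y) (y : Y) (d : ℕ) :
    faceMarginal ν y d (fun _ => false) = Measure.dirac y :=
  Function.update_self _ _ _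

lemma faceMarginal_of_eq_true {d : ℕ} {ε : Fin d → Bool} {j : Fin d} (hε : ε j = true)
    (ν : Measure Y) (y : Y) : faceMarginal ν y d ε = ν :=
  Function.update_of_ne (by rintro rfl; exact Bool.false_ne_true hε) _ _

lemma eq_zero_or_exists_eq_true {d : ℕ} (ε : Fin d → Bool) :
    ε = (fun _ => false) ∨ ∃ j, ε j = true := by
  by_contra! h
  exact h.1 (funext fun j => by simpa using h.2 j)

instance isProbabilityMeasure_faceMarginal (ν : Measure Y) [IsProbabilityMeasure ν] (y : Y) (d : ℕ)
    (ε : Fin d → Bool) : IsProbabilityMeasure (faceMarginal ν y d ε) := by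
  rcases eq_zero_or_exists_eq_true ε with rfl | ⟨j, hj⟩
  · rw [faceMarginal_zero]
    infer_instance
  · rwa [faceMarginal_of_eq_true hj]

end FaceMarginal

section CubeModel

variable {Y : Type*} [TopologicalSpace Y]

lemma coe_faceHomeo (S : Y ≃ₜ Y) {d : ℕ} (j : Fin d) :
    ⇑(faceHomeo S j) = partialDiag S fun ε => ε j = true := by
  ext y ε
  by_cases h : ε j = true <;> simp [faceHomeo, partialDiag, h]

lemma coe_diagHomeo_eq_partialDiag (S : Y ≃ₜ Y) (d : ℕ) :
    ⇑(diagHomeo S d) = partialDiag S fun _ => True := by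
  ext y ε
  exact (partialDiag_of_pos trivial y).symm

lemma commute_of_mem_parallelepipedGens {S : Y ≃ₜ Y} {d : ℕ} :
    ∀ f ∈ parallelepipedGens S d, ∀ g ∈ parallelepipedGens S d, Function.Commute f g := by
  rintro _ (rfl | ⟨i, rfl⟩) _ (rfl | ⟨j, rfl⟩) <;>
    simp only [coe_diagHomeo_eq_partialDiag, coe_faceHomeo] <;> exact commute_partialDiag _ _ _

lemma finite_parallelepipedGens (S : Y ≃ₜ Y) (d : ℕ) : (parallelepipedGens S d).Finite :=
  (Set.finite_range _).insert _

lemma sum_ite_add_single {d : ℕ} (n : Fin d → ℤ) (j : Fin d) (ε : Fin d → Bool) :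
    (∑ i, if ε i then (n + Pi.single j 1 : Fin d → ℤ) i else 0) =
      (∑ i, if ε i then n i else 0) + if ε j then 1 else 0 := by
  have hsplit : ∀ i, (if ε i then (n + Pi.single j 1 : Fin d → ℤ) i else 0) =
      (if ε i then n i else 0) + if j = i then (if ε i then 1 else 0) else 0 := fun i => by
    rcases eq_or_ne j i with rfl | hji
    · by_cases hε : ε j = true <;> simp [hε]
    · simp [hji, hji.symm]
  simp only [hsplit, Finset.sum_add_distrib, Finset.sum_ite_eq, Finset.mem_univ, if_true]

lemma mapsTo_Qset {S : Y ≃ₜ Y} {d : ℕ} :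
    ∀ g ∈ parallelepipedGens S d, Set.MapsTo g (Qset S d) (Qset S d) := by
  have hsucc : ∀ (m : ℤ) (y : Y), S ((S ^ m) y) = (S ^ (m + 1)) y := fun m y => by
    rw [add_comm, zpow_add, zpow_one]
    rfl
  rintro _ (rfl | ⟨j, rfl⟩) <;> refine Set.MapsTo.closure ?_ (Homeomorph.continuous _)
  · rintro _ ⟨n, y, rfl⟩
    refine ⟨n, S y, funext fun ε => (hsucc _ y).trans ?_⟩
    rw [zpow_add, zpow_one]
    rfl
  · rintro _ ⟨n, y, rfl⟩
    refine ⟨n + Pi.single j 1, y, ?_⟩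
    ext ε
    rw [coe_faceHomeo, sum_ite_add_single]
    by_cases hε : ε j = true
    · rw [partialDiag_of_pos (p := fun ε : Fin d → Bool => ε j = true) hε, if_pos hε, hsucc]
    · rw [partialDiag_of_neg (p := fun ε : Fin d → Bool => ε j = true) hε, if_neg hε, add_zero]

lemma apply_eval_zero_eq_iff {S : Y ≃ₜ Y} {d : ℕ} (y : Y) :
    ∀ g ∈ faceGens S d, ∀ z, g z (fun _ => false) = y ↔ z (fun _ => false) = y := by
  rintro _ ⟨j, rfl⟩ z
  rw [coe_faceHomeo,
    partialDiag_of_neg (p := fun ε : Fin d → Bool => ε j = true) Bool.false_ne_true z]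

variable [MeasurableSpace Y]

lemma mem_support_pi {ι : Type*} [Fintype ι] {κ : ι → Measure Y} [∀ i, SigmaFinite (κ i)]
    {z : ι → Y} (hz : ∀ i, z i ∈ (κ i).support) : z ∈ (Measure.pi κ).support := by
  rw [Measure.mem_support_iff_forall]
  intro U hU
  obtain ⟨V, hVU, hV, hzV⟩ := mem_nhds_iff.1 hU
  obtain ⟨u, hu, hsub⟩ := isOpen_pi_iff'.1 hV z hzV
  refine lt_of_lt_of_le ?_ (measure_mono (hsub.trans hVU))
  rw [Measure.pi_pi]
  refine CanonicallyOrderedAdd.prod_pos.2 fun i _ => ?_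
  exact (Measure.mem_support_iff_forall _).1 (hz i) _ ((hu i).1.mem_nhds (hu i).2)

lemma mem_support_dirac (y : Y) : y ∈ (Measure.dirac y).support := by
  rw [Measure.mem_support_iff_forall]
  intro U hU
  exact (one_pos.trans_eq (Set.indicator_of_mem (mem_of_mem_nhds hU) 1).symm).trans_le
    (Measure.le_dirac_apply)

lemma mem_support_pi_faceMarginal {ν : Measure Y} [IsProbabilityMeasure ν]
    [ν.IsOpenPosMeasure] {d : ℕ} {y : Y} {z : (Fin d → Bool) → Y} (hz : z (fun _ => false) = y) :
    z ∈ (Measure.pi (faceMarginal ν y d)).support := by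
  refine mem_support_pi fun ε => ?_
  rcases eq_zero_or_exists_eq_true ε with rfl | ⟨j, hj⟩
  · rw [faceMarginal_zero, hz]
    exact mem_support_dirac y
  · rw [faceMarginal_of_eq_true hj, Measure.support_eq_univ]
    trivial

variable [CompactSpace Y] [TopologicalSpace.MetrizableSpace Y] [BorelSpace Y]
  {S : Y ≃ₜ Y} {ν : Measure Y} [IsProbabilityMeasure ν] [ν.IsOpenPosMeasure]

lemma strictlyErgodicOn_faceGens (hS : MeasurePreserving S ν ν) (hw : WeakMixing ν S)
    (huniq : UniquelyErgodic S ν) (d : ℕ) (y : Y) :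
    StrictlyErgodicOn (faceGens S d) (closure (grpOrbit (faceGens S d) fun _ => y)) := by
  have := TopologicalSpace.metrizableSpaceMetric Y
  let A : Set ((Fin d → Bool) → Y) := {z | z (fun _ => false) = y}
  have hA : IsClosed A := isClosed_eq (continuous_apply _) continuous_const
  have hSE : StrictlyErgodicOn (faceGens S d) A := by
    refine strictlyErgodicOn_of_forall_eq hA (Set.finite_range _)
      (fun f hf g hg => commute_of_mem_parallelepipedGens f (.inr hf) g (.inr hg))
      (apply_eval_zero_eq_iff y) (pi_apply_eval_eq (faceMarginal_zero ν y d)) ?_ ?_ ?_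
    · rintro _ ⟨j, rfl⟩
      rw [coe_faceHomeo]
      exact measurePreserving_partialDiag_pi fun ε hε => (faceMarginal_of_eq_true hε ν y).symm ▸ hS
    · exact fun z hz => mem_support_pi_faceMarginal hz
    · intro ρ _ hρA hinv
      refine eq_pi_of_measurePreserving_face hS hw huniq (σ := id) Function.injective_id
        (fun j => coe_faceHomeo S j ▸ hinv _ ⟨j, rfl⟩) (fun ε hε => ?_)
        fun ε j hε => faceMarginal_of_eq_true hε ν y
      obtain rfl : ε = fun _ => false := funext hε
      rw [map_eval_eq_dirac hρA, faceMarginal_zero]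
  have horbit : closure (grpOrbit (faceGens S d) fun _ => y) = A := hSE.1 _ rfl
  rwa [horbit]

lemma strictlyErgodicOn_parallelepipedGens (hS : MeasurePreserving S ν ν)
    (hw : WeakMixing ν S) (huniq : UniquelyErgodic S ν) (d : ℕ) :
    StrictlyErgodicOn (parallelepipedGens S d) (Qset S d) := by
  have hsupp : Set.univ ⊆ (Measure.pi fun _ : Fin d → Bool => ν).support :=
    Measure.support_eq_univ.superset
  have huniq_pi : ∀ ρ : Measure ((Fin d → Bool) → Y), IsProbabilityMeasure ρ → ρ Set.univ = 1 →
      (∀ g ∈ parallelepipedGens S d, MeasurePreserving g ρ ρ) → ρ = Measure.pi fun _ => ν :=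
    fun ρ _ _ hinv => eq_pi_of_measurePreserving_cube hS hw huniq (σ := id) Function.injective_id
      (hinv _ (.inl rfl)) fun j => coe_faceHomeo S j ▸ hinv _ (.inr ⟨j, rfl⟩)
  have hQ : Qset S d = Set.univ := by
    obtain ⟨y⟩ := ν.nonempty_of_neZero
    exact eq_of_isClosed_of_mapsTo isClosed_closure ⟨_, subset_closure ⟨0, y, rfl⟩⟩
      (Set.subset_univ _) (finite_parallelepipedGens S d) commute_of_mem_parallelepipedGens
      mapsTo_Qset hsupp huniq_pi
  rw [hQ]
  refine strictlyErgodicOn_of_forall_eq isClosed_univ (finite_parallelepipedGens S d)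
    commute_of_mem_parallelepipedGens (by simp) measure_univ ?_ hsupp huniq_pi
  rintro _ (rfl | ⟨j, rfl⟩)
  · exact measurePreserving_pi _ _ fun _ => hS
  · exact coe_faceHomeo S j ▸ measurePreserving_partialDiag_pi fun _ _ => hS

end CubeModel

/-! ### Markers, blocks and modifications -/

section IntegerIterates

variable {X : Type*} [MeasurableSpace X]

/-- The `i`-th iterate of a measurable automorphism, for an integer `i`. -/
def zIterate (T : X ≃ᵐ X) (i : ℤ) : X → X := ((T.toEquiv : Equiv.Perm X) ^ i : Equiv.Perm X)

variable (T : X ≃ᵐ X)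

@[simp] lemma zIterate_zero (x : X) : zIterate T 0 x = x := rfl

lemma zIterate_one (x : X) : zIterate T 1 x = T x := by
  simp [zIterate]

lemma zIterate_add (i j : ℤ) (x : X) : zIterate T (i + j) x = zIterate T i (zIterate T j x) := by
  simp [zIterate, zpow_add]

lemma zIterate_add_one (i : ℤ) (x : X) : zIterate T (i + 1) x = T (zIterate T i x) := by
  rw [add_comm, zIterate_add, zIterate_one]

lemma zIterate_add_one' (i : ℤ) (x : X) : zIterate T (i + 1) x = zIterate T i (T x) := by
  rw [zIterate_add, zIterate_one]

lemma zIterate_natCast (n : ℕ) (x : X) : zIterate T n x = T^[n] x := by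
  induction n with
  | zero => rfl
  | succ n ih => rw [Nat.cast_succ, zIterate_add_one, ih, Function.iterate_succ_apply']

lemma zIterate_neg_cancel (i : ℤ) (x : X) : zIterate T (-i) (zIterate T i x) = x := by
  rw [← zIterate_add, neg_add_cancel, zIterate_zero]

lemma zIterate_cancel_neg (i : ℤ) (x : X) : zIterate T i (zIterate T (-i) x) = x := by
  rw [← zIterate_add, add_neg_cancel, zIterate_zero]

lemma zIterate_neg_one (x : X) : zIterate T (-1) x = T.symm x :=
  T.injective <| by rw [T.apply_symm_apply, ← zIterate_one, zIterate_cancel_neg]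

lemma zIterate_induction {p : (X → X) → Prop} (hid : p id) (hT : ∀ f, p f → p (T ∘ f))
    (hsymm : ∀ f, p f → p (T.symm ∘ f)) (i : ℤ) : p (zIterate T i) := by
  induction i with
  | zero => exact hid
  | succ n ih =>
    have hsucc : zIterate T (n + 1) = T ∘ zIterate T n := funext fun x => zIterate_add_one T n x
    exact hsucc ▸ hT _ ih
  | pred n ih =>
    have hpred : zIterate T (-n - 1) = T.symm ∘ zIterate T (-n) := funext fun x => by
      rw [sub_eq_neg_add, zIterate_add, zIterate_neg_one, Function.comp_apply]
    exact hpred ▸ hsymm _ ih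

lemma measurable_zIterate (i : ℤ) : Measurable (zIterate T i) :=
  zIterate_induction T measurable_id (fun _ => T.measurable.comp)
    (fun _ => T.symm.measurable.comp) i

variable {T} in
lemma measurePreserving_zIterate {μ : Measure X} (hT : MeasurePreserving T μ μ) (i : ℤ) :
    MeasurePreserving (zIterate T i) μ μ :=
  zIterate_induction T (p := fun f => MeasurePreserving f μ μ) (.id μ) (fun _ => hT.comp)
    (fun _ => (hT.symm T).comp) i

end IntegerIterates

section Markers

variable {X : Type*} [MeasurableSpace X] {T : X ≃ᵐ X} {B : Set X} {L : ℕ}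

/-- All return times to `B` are at least `L`. -/
def IsGapped (T : X ≃ᵐ X) (B : Set X) (L : ℕ) : Prop :=
  ∀ x ∈ B, ∀ i : ℕ, 0 < i → i < L → zIterate T i x ∉ B

/-- Every orbit segment `T x, …, Tᴺ x` meets `B`. -/
def IsSyndetic (T : X ≃ᵐ X) (B : Set X) (N : ℕ) : Prop :=
  ∀ x, ∃ i : ℕ, 0 < i ∧ i ≤ N ∧ zIterate T i x ∈ B

lemma exists_isGapped_cover [MeasurableSpace.CountablySeparated X]
    (hap : ∀ x, ∀ i : ℕ, 0 < i → zIterate T i x ≠ x) (L : ℕ) :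
    ∃ V : ℕ → Set X, (∀ n, MeasurableSet (V n)) ∧ (∀ x, ∃ n, x ∈ V n) ∧
      ∀ n, IsGapped T (V n) L := by
  obtain ⟨code, hcode, hinj⟩ :=
    MeasurableSpace.measurable_injection_nat_bool_of_countablySeparated X
  have hcoord : ∀ n, Measurable fun x => code x n := fun n => (measurable_pi_apply n).comp hcode
  let V : (Fin L → ℕ × Bool) → Set X := fun c => ⋂ i : Fin L,
    {x | 0 < (i : ℕ) → code x (c i).1 = (c i).2 ∧ code (zIterate T i x) (c i).1 ≠ (c i).2}
  obtain ⟨e, he⟩ := exists_surjective_nat (Fin L → ℕ × Bool)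
  refine ⟨fun n => V (e n), fun n => MeasurableSet.iInter fun i => ?_, fun x => ?_,
    fun n x hx i hi hiL hx' => ?_⟩
  · refine .imp (.const _) (.inter ?_ ?_)
    · exact hcoord _ (measurableSet_singleton _)
    · exact ((hcoord _).comp (measurable_zIterate T i)) (measurableSet_singleton _).compl
  · have hsep : ∀ i : Fin L, 0 < (i : ℕ) →
        ∃ c : ℕ × Bool, code x c.1 = c.2 ∧ code (zIterate T i x) c.1 ≠ c.2 := fun i hi =>
      have ⟨n, hn⟩ := Function.ne_iff.1 (hinj.ne (hap x i hi))
      ⟨(n, code x n), rfl, hn⟩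
    choose! c hc using hsep
    obtain ⟨n, rfl⟩ := he c
    exact ⟨n, Set.mem_iInter.2 hc⟩
  · exact (Set.mem_iInter.1 hx ⟨i, hiL⟩ hi).2 (Set.mem_iInter.1 hx' ⟨i, hiL⟩ hi).1

/-- The greedy selection of a subset of `B` with gaps `L`: at stage `n` all points of `V n ∩ B` at
distance at least `L` along their orbit from the previously selected ones are added. -/
def greedyMarker (T : X ≃ᵐ X) (B : Set X) (L : ℕ) (V : ℕ → Set X) : ℕ → Set X
  | 0 => ∅
  | n + 1 => greedyMarker T B L V n ∪
      ((V n ∩ B) \ ⋃ i ∈ Finset.Ioo (-(L : ℤ)) L, zIterate T i ⁻¹' greedyMarker T B L V n)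

variable {V : ℕ → Set X}

lemma measurableSet_greedyMarker (hV : ∀ n, MeasurableSet (V n)) (hB : MeasurableSet B) (n : ℕ) :
    MeasurableSet (greedyMarker T B L V n) := by
  induction n with
  | zero => exact MeasurableSet.empty
  | succ n ih =>
    exact ih.union (((hV n).inter hB).diff
      (Finset.measurableSet_biUnion _ fun i _ => measurable_zIterate T i ih))

lemma greedyMarker_subset (n : ℕ) : greedyMarker T B L V n ⊆ B := by
  induction n with
  | zero => exact Set.empty_subset B
  | succ n ih => exact Set.union_subset ih fun x hx => hx.1.2

lemma monotone_greedyMarker : Monotone (greedyMarker T B L V) :=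
  monotone_nat_of_le_succ fun _ => Set.subset_union_left

lemma isGapped_greedyMarker (hV : ∀ n, IsGapped T (V n) L) (n : ℕ) :
    IsGapped T (greedyMarker T B L V n) L := by
  induction n with
  | zero => exact fun x hx => hx.elim
  | succ n ih =>
    rintro x (hx | hx) i hi hiL (hx' | hx')
    · exact ih x hx i hi hiL hx'
    · refine hx'.2 (Set.mem_iUnion₂.2 ⟨-i, Finset.mem_Ioo.2 ⟨by omega, by omega⟩, ?_⟩)
      rwa [Set.mem_preimage, zIterate_neg_cancel]
    · exact hx.2 (Set.mem_iUnion₂.2 ⟨i, Finset.mem_Ioo.2 ⟨by omega, by omega⟩, hx'⟩)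
    · exact hV n x hx.1.1 i hi hiL hx'.1.1

lemma exists_zIterate_mem_greedyMarker (hL : 0 < L) {n : ℕ} {x : X} (hxV : x ∈ V n) (hxB : x ∈ B) :
    ∃ i : ℤ, -L < i ∧ i < L ∧ zIterate T i x ∈ greedyMarker T B L V (n + 1) := by
  by_cases h : x ∈ ⋃ i ∈ Finset.Ioo (-(L : ℤ)) L, zIterate T i ⁻¹' greedyMarker T B L V n
  · obtain ⟨i, hi, hx⟩ := Set.mem_iUnion₂.1 h
    obtain ⟨hLi, hiL⟩ := Finset.mem_Ioo.1 hi
    exact ⟨i, hLi, hiL, Or.inl hx⟩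
  · exact ⟨0, by omega, by omega, Or.inr ⟨⟨hxV, hxB⟩, h⟩⟩

lemma exists_isGapped_isSyndetic_subset [MeasurableSpace.CountablySeparated X]
    (hap : ∀ x, ∀ i : ℕ, 0 < i → zIterate T i x ≠ x) (hB : MeasurableSet B) {N : ℕ}
    (hN : IsSyndetic T B N) (hNL : N ≤ L) :
    ∃ B' ⊆ B, MeasurableSet B' ∧ IsGapped T B' L ∧ IsSyndetic T B' (3 * L) := by
  obtain ⟨V, hVm, hVc, hVs⟩ := exists_isGapped_cover hap L
  refine ⟨⋃ n, greedyMarker T B L V n, Set.iUnion_subset greedyMarker_subset,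
    .iUnion (measurableSet_greedyMarker hVm hB), fun x hx i hi hiL hx' => ?_, fun x => ?_⟩
  · obtain ⟨n, hn⟩ := Set.mem_iUnion.1 hx
    obtain ⟨n', hn'⟩ := Set.mem_iUnion.1 hx'
    exact isGapped_greedyMarker hVs (max n n') x (monotone_greedyMarker (le_max_left _ _) hn)
      i hi hiL (monotone_greedyMarker (le_max_right _ _) hn')
  · obtain ⟨j, hj, hjN, hjB⟩ := hN (zIterate T L x)
    obtain ⟨n, hn⟩ := hVc (zIterate T j (zIterate T L x))
    obtain ⟨i, hLi, hiL, hi⟩ := exists_zIterate_mem_greedyMarker (L := L) (by omega) hn hjB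
    rw [← zIterate_add, ← zIterate_add] at hi
    obtain ⟨k, hk⟩ := Int.eq_ofNat_of_zero_le (a := i + (j + L)) (by omega)
    rw [add_assoc, hk] at hi
    exact ⟨k, by omega, by omega, Set.mem_iUnion.2 ⟨n + 1, hi⟩⟩

end Markers

section OrbitSums

lemma exists_notMem_and_sub_notMem {s : Finset ℕ} {r : ℕ} (hs : 2 * s.card < r + 1) :
    ∃ n ≤ r, n ∉ s ∧ r - n ∉ s := by
  classical
  have hcard : (s ∪ s.image (r - ·)).card < (Finset.range (r + 1)).card := by
    have hunion := Finset.card_union_le s (s.image (r - ·))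
    have himage := Finset.card_image_le (s := s) (f := (r - ·))
    rw [Finset.card_range]
    omega
  obtain ⟨n, hn, hns⟩ := Finset.exists_mem_notMem_of_card_lt_card hcard
  rw [Finset.mem_union, not_or] at hns
  have hnr := Finset.mem_range_succ_iff.1 hn
  exact ⟨n, hnr, hns.1, fun hmem =>
    hns.2 (Finset.mem_image.2 ⟨r - n, hmem, Nat.sub_sub_self hnr⟩)⟩

lemma CesaroLim.eventually_card_filter_lt {x : ℕ → ℝ} {c δ : ℝ} (hx : CesaroLim x c)
    (hδ : 0 < δ) :
    ∀ᶠ N in atTop, 2 * ((Finset.range N).filter fun n => δ ≤ |x n - c|).card < N := by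
  filter_upwards [hx.eventually (gt_mem_nhds (half_pos hδ)), eventually_gt_atTop 0] with N hN hN0
  set bad := (Finset.range N).filter fun n => δ ≤ |x n - c|
  have hmarkov : bad.card * δ ≤ ∑ n ∈ Finset.range N, |x n - c| :=
    calc bad.card * δ = ∑ _n ∈ bad, δ := by rw [Finset.sum_const, nsmul_eq_mul]
      _ ≤ ∑ n ∈ bad, |x n - c| := Finset.sum_le_sum fun n hn => (Finset.mem_filter.1 hn).2
      _ ≤ ∑ n ∈ Finset.range N, |x n - c| := Finset.sum_le_sum_of_subset_of_nonneg
        (Finset.filter_subset _ _) fun _ _ _ => abs_nonneg _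
  rw [cesaroMean, inv_mul_lt_iff₀ (by exact_mod_cast hN0)] at hN
  have hlt : (2 * bad.card : ℝ) < N := by nlinarith
  exact_mod_cast hlt

lemma CesaroLim.eventually_exists_add_eq {x : ℕ → ℝ} {c δ : ℝ} (hx : CesaroLim x c)
    (hδ : 0 < δ) :
    ∀ᶠ r in atTop, ∃ r₁ r₂, r₁ + r₂ = r ∧ |x r₁ - c| < δ ∧ |x r₂ - c| < δ := by
  filter_upwards [(tendsto_add_atTop_nat 1).eventually (hx.eventually_card_filter_lt hδ)] with r hr
  obtain ⟨n, hn, hgood, hgood'⟩ := exists_notMem_and_sub_notMem hr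
  simp only [Finset.mem_filter, Finset.mem_range, not_and, not_le] at hgood hgood'
  exact ⟨n, r - n, by omega, hgood (by omega), hgood' (by omega)⟩

lemma abs_sum_range_sub_sum_range_add_le {a : ℕ → ℝ} (ha : ∀ i, a i ∈ Set.Icc 0 1) (t m : ℕ) :
    |∑ i ∈ Finset.range t, a i - ∑ i ∈ Finset.range t, a (m + i)| ≤ m := by
  have htelescope : ∑ i ∈ Finset.range t, a i - ∑ i ∈ Finset.range t, a (m + i) =
      ∑ i ∈ Finset.range m, (a i - a (t + i)) := by
    have hswap := Finset.sum_range_add a t m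
    rw [add_comm, Finset.sum_range_add] at hswap
    rw [Finset.sum_sub_distrib]
    linarith
  calc |∑ i ∈ Finset.range t, a i - ∑ i ∈ Finset.range t, a (m + i)|
      ≤ ∑ i ∈ Finset.range m, |a i - a (t + i)| :=
        htelescope ▸ Finset.abs_sum_le_sum_abs _ _
    _ ≤ ∑ _i ∈ Finset.range m, 1 := Finset.sum_le_sum fun i _ =>
        (abs_sub_le_of_le_of_le (ha i).1 (ha i).2 (ha _).1 (ha _).2).trans_eq (sub_zero 1)
    _ = m := by simp

lemma abs_sum_sub_le_add_sum_abs_cesaroMean_sub {a : ℕ → ℝ} (ha : ∀ i, a i ∈ Set.Icc 0 1)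
    (c : ℝ) {M : ℕ} (hM : M ≠ 0) (t : ℕ) :
    |∑ i ∈ Finset.range t, (a i - c)| ≤
      M + ∑ i ∈ Finset.range t, |cesaroMean (fun m => a (m + i)) M - c| := by
  set shifted : ℕ → ℝ := fun m => ∑ i ∈ Finset.range t, a (m + i)
  have hcomm : cesaroMean shifted M =
      ∑ i ∈ Finset.range t, cesaroMean (fun m => a (m + i)) M := by
    simp only [shifted, cesaroMean, ← Finset.mul_sum]
    rw [Finset.sum_comm]
  have hshift : |∑ i ∈ Finset.range t, a i - cesaroMean shifted M| ≤ M :=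
    calc |∑ i ∈ Finset.range t, a i - cesaroMean shifted M|
        = |cesaroMean (fun m => ∑ i ∈ Finset.range t, a i - shifted m) M| := by
          simp_rw [sub_eq_add_neg, cesaroMean_add, cesaroMean_const _ hM, cesaroMean,
            Finset.sum_neg_distrib, mul_neg]
      _ ≤ cesaroMean (fun m => |∑ i ∈ Finset.range t, a i - shifted m|) M := by
          rw [cesaroMean, cesaroMean, abs_mul, abs_of_nonneg (by positivity)]
          gcongr
          exact Finset.abs_sum_le_sum_abs _ _
      _ ≤ M := by
          rw [cesaroMean, inv_mul_le_iff₀ (by positivity)]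
          refine (Finset.sum_le_card_nsmul _ _ (M : ℝ) fun m hm => ?_).trans_eq (by simp)
          refine (abs_sum_range_sub_sum_range_add_le ha t m).trans ?_
          exact_mod_cast (Finset.mem_range.1 hm).le
  calc |∑ i ∈ Finset.range t, (a i - c)|
      = |(∑ i ∈ Finset.range t, a i - cesaroMean shifted M) +
          ∑ i ∈ Finset.range t, (cesaroMean (fun m => a (m + i)) M - c)| := by
        rw [Finset.sum_sub_distrib, Finset.sum_sub_distrib, hcomm]
        ring_nf
    _ ≤ M + ∑ i ∈ Finset.range t, |cesaroMean (fun m => a (m + i)) M - c| :=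
        (abs_add_le _ _).trans (add_le_add hshift (Finset.abs_sum_le_sum_abs _ _))

variable {X : Type*} [MeasurableSpace X] {μ : Measure X} {f : X → X}

lemma exists_orbit_sum_error [IsProbabilityMeasure μ] (hf : Ergodic f μ) {ι : Type*}
    (F : Finset ι) {h : ι → X → ℝ} (hm : ∀ i ∈ F, Measurable (h i))
    (h01 : ∀ i ∈ F, ∀ x, h i x ∈ Set.Icc 0 1) {η : ℝ} (hη : 0 < η) :
    ∃ (M : ℕ) (e : X → ℝ), Measurable e ∧ (∀ x, 0 ≤ e x) ∧ Integrable e μ ∧ ∫ x, e x ∂μ ≤ η ∧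
      ∀ i ∈ F, ∀ y t, |birkhoffSum f (fun x => h i x - ∫ x, h i x ∂μ) t y| ≤
        M + birkhoffSum f e t y := by
  have hL2 : ∀ i ∈ F, MemLp (h i) 2 μ := fun i hi =>
    MemLp.of_bound (hm i hi).aestronglyMeasurable 1 <| ae_of_all _ fun x => by
      rw [Real.norm_of_nonneg (h01 i hi x).1]
      exact (h01 i hi x).2
  let err : ℕ → ι → X → ℝ := fun M i x => |birkhoffAverage ℝ f (h i) M x - ∫ y, h i y ∂μ|
  have herr : ∀ M, ∀ i ∈ F, Integrable (err M i) μ := fun M i hi =>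
    (((memLp_birkhoffAverage hf.toMeasurePreserving (hL2 i hi) M).integrable
      (by norm_num)).sub (integrable_const _)).abs
  have hlim : Tendsto (fun M => ∑ i ∈ F, ∫ x, err M i x ∂μ) atTop (𝓝 0) := by
    rw [← Finset.sum_const_zero (s := F)]
    refine tendsto_finsetSum F fun i hi => ?_
    have hL1 := (ENNReal.tendsto_toReal ENNReal.zero_ne_top).comp
      (tendsto_eLpNorm_birkhoffAverage_sub_integral hf (hL2 i hi))
    refine hL1.congr fun M => ?_
    rw [Function.comp_apply, eLpNorm_one_eq_lintegral_enorm, ← integral_norm_eq_lintegral_enorm]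
    · rfl
    · exact (memLp_birkhoffAverage hf.toMeasurePreserving (hL2 i hi) M).1.sub
        aestronglyMeasurable_const
  obtain ⟨M, hMη, hM⟩ := ((hlim.eventually (gt_mem_nhds hη)).and (eventually_ne_atTop 0)).exists
  refine ⟨M, fun x => ∑ i ∈ F, err M i x, ?_, fun x => Finset.sum_nonneg fun _ _ => abs_nonneg _,
    integrable_finsetSum _ (herr M), ?_, fun i hi y t => ?_⟩
  · refine Finset.measurable_fun_sum _ fun i hi => ?_
    have hsum : Measurable (birkhoffSum f (h i) M) :=
      Finset.measurable_fun_sum _ fun n _ => (hm i hi).comp (hf.measurable.iterate n)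
    exact ((hsum.const_smul (M : ℝ)⁻¹).sub_const _).norm
  · rw [integral_finsetSum _ (herr M)]
    exact hMη.le
  · refine (abs_sum_sub_le_add_sum_abs_cesaroMean_sub (fun j => h01 i hi (f^[j] y)) _ hM t).trans ?_
    refine add_le_add_right (Finset.sum_le_sum fun j _ => ?_) _
    have havg : cesaroMean (fun m => h i (f^[m + j] y)) M =
        birkhoffAverage ℝ f (h i) M (f^[j] y) := by
      simp only [cesaroMean, birkhoffAverage, birkhoffSum, smul_eq_mul, Function.iterate_add_apply]
    rw [havg]
    exact Finset.single_le_sum (f := fun i => err M i (f^[j] y)) (fun _ _ => abs_nonneg _) hi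

end OrbitSums

section Clock

variable {X : Type*} [MeasurableSpace X] {T : X ≃ᵐ X} {B : Set X} {L N : ℕ} {x : X}

/-- The time elapsed since the last visit to `B`; the junk value is `0` if there is none. -/
noncomputable def timeSince (T : X ≃ᵐ X) (B : Set X) (x : X) : ℕ :=
  sInf {j : ℕ | zIterate T (-(j : ℤ)) x ∈ B}

/-- The last point of `B` on the orbit of `x` up to time `0`. -/
noncomputable def lastVisit (T : X ≃ᵐ X) (B : Set X) (x : X) : X :=
  zIterate T (-(timeSince T B x : ℤ)) x

/-- The first positive time of a visit to `B`; the junk value is `0` if there is none. -/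
noncomputable def returnTime (T : X ≃ᵐ X) (B : Set X) (x : X) : ℕ :=
  sInf {n : ℕ | 0 < n ∧ zIterate T n x ∈ B}

@[simp] lemma zIterate_timeSince_lastVisit (T : X ≃ᵐ X) (B : Set X) (x : X) :
    zIterate T (timeSince T B x) (lastVisit T B x) = x :=
  zIterate_cancel_neg T _ x

lemma timeSince_le {j : ℕ} (h : zIterate T (-(j : ℤ)) x ∈ B) : timeSince T B x ≤ j :=
  Nat.sInf_le h

lemma timeSince_of_mem (hx : x ∈ B) : timeSince T B x = 0 :=
  Nat.le_zero.1 (timeSince_le (by simpa using hx))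

lemma returnTime_le {n : ℕ} (hn : 0 < n) (h : zIterate T n x ∈ B) : returnTime T B x ≤ n :=
  Nat.sInf_le ⟨hn, h⟩

lemma IsSyndetic.exists_neg (hs : IsSyndetic T B N) (x : X) :
    ∃ j : ℕ, zIterate T (-(j : ℤ)) x ∈ B := by
  obtain ⟨i, -, hiN, hi⟩ := hs (zIterate T (-(N : ℤ)) x)
  rw [← zIterate_add] at hi
  exact ⟨N - i, by convert hi using 2; omega⟩

lemma IsSyndetic.lastVisit_mem (hs : IsSyndetic T B N) (x : X) : lastVisit T B x ∈ B :=
  Nat.sInf_mem (s := {j : ℕ | zIterate T (-(j : ℤ)) x ∈ B}) (hs.exists_neg x)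

lemma IsSyndetic.returnTime_nonempty (hs : IsSyndetic T B N) (x : X) :
    {n : ℕ | 0 < n ∧ zIterate T n x ∈ B}.Nonempty :=
  (hs x).imp fun _ h => ⟨h.1, h.2.2⟩

lemma IsSyndetic.returnTime_pos (hs : IsSyndetic T B N) (x : X) : 0 < returnTime T B x :=
  (Nat.sInf_mem (hs.returnTime_nonempty x)).1

lemma IsSyndetic.zIterate_returnTime_mem (hs : IsSyndetic T B N) (x : X) :
    zIterate T (returnTime T B x) x ∈ B :=
  (Nat.sInf_mem (hs.returnTime_nonempty x)).2

lemma IsSyndetic.returnTime_le (hs : IsSyndetic T B N) (x : X) : returnTime T B x ≤ N :=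
  have ⟨_, hi, hiN, hiB⟩ := hs x
  (HSY.returnTime_le hi hiB).trans hiN

lemma IsGapped.le_returnTime (hg : IsGapped T B L) (hs : IsSyndetic T B N) (hx : x ∈ B) :
    L ≤ returnTime T B x := by
  by_contra! hlt
  exact hg x hx _ (hs.returnTime_pos x) hlt (hs.zIterate_returnTime_mem x)

lemma IsSyndetic.timeSince_apply (hs : IsSyndetic T B N) (hx : T x ∉ B) :
    timeSince T B (T x) = timeSince T B x + 1 := by
  have hback : ∀ j : ℕ, zIterate T (-((j + 1 : ℕ) : ℤ)) (T x) = zIterate T (-(j : ℤ)) x :=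
    fun j => by
      rw [← zIterate_add_one']
      congr 1
      omega
  have hvisit : zIterate T (-(timeSince T B (T x) : ℤ)) (T x) ∈ B := hs.lastVisit_mem (T x)
  rcases hk : timeSince T B (T x) with - | k
  · rw [hk] at hvisit
    exact absurd hvisit hx
  · rw [hk, hback] at hvisit
    rw [← hk]
    refine le_antisymm (timeSince_le ?_) (hk ▸ Nat.succ_le_succ (timeSince_le hvisit))
    rw [hback]
    exact hs.lastVisit_mem x

lemma IsSyndetic.lastVisit_apply (hs : IsSyndetic T B N) (hx : T x ∉ B) :
    lastVisit T B (T x) = lastVisit T B x := by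
  rw [lastVisit, lastVisit, hs.timeSince_apply hx, ← zIterate_add_one']
  congr 1
  omega

lemma IsSyndetic.timeSince_lt (hs : IsSyndetic T B N) (x : X) :
    timeSince T B x < returnTime T B (lastVisit T B x) := by
  by_contra! hle
  have hpos := hs.returnTime_pos (lastVisit T B x)
  have hmem := hs.zIterate_returnTime_mem (lastVisit T B x)
  set n := returnTime T B (lastVisit T B x)
  rw [lastVisit, ← zIterate_add] at hmem
  have hle' : timeSince T B x ≤ timeSince T B x - n :=
    timeSince_le (by convert hmem using 2; omega)
  omega

lemma IsSyndetic.timeSince_add_one (hs : IsSyndetic T B N) (hx : T x ∈ B) :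
    timeSince T B x + 1 = returnTime T B (lastVisit T B x) := by
  refine le_antisymm (hs.timeSince_lt x) (HSY.returnTime_le (Nat.succ_pos _) ?_)
  rwa [Nat.cast_succ, zIterate_add_one, zIterate_timeSince_lastVisit]

lemma measurable_sInf_nat {α : Type*} [MeasurableSpace α] {s : α → Set ℕ}
    (hne : ∀ x, (s x).Nonempty) (hs : ∀ k, MeasurableSet {x | k ∈ s x}) :
    Measurable fun x => sInf (s x) := by
  classical
  simp only [Nat.sInf_def (hne _)]
  exact measurable_find hne hs

lemma IsSyndetic.measurable_timeSince (hs : IsSyndetic T B N) (hB : MeasurableSet B) :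
    Measurable (timeSince T B) :=
  measurable_sInf_nat hs.exists_neg fun j => measurable_zIterate T (-j) hB

lemma IsSyndetic.measurable_returnTime (hs : IsSyndetic T B N) (hB : MeasurableSet B) :
    Measurable (returnTime T B) :=
  measurable_sInf_nat hs.returnTime_nonempty fun n =>
    (MeasurableSet.const _).inter (measurable_zIterate T n hB)

lemma IsSyndetic.measurable_lastVisit (hs : IsSyndetic T B N) (hB : MeasurableSet B) :
    Measurable (lastVisit T B) :=
  (measurable_from_prod_countable_left (f := fun p : X × ℕ => zIterate T (-(p.2 : ℤ)) p.1)
    fun j => measurable_zIterate T (-j)).comp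
    (measurable_id.prodMk (hs.measurable_timeSince hB))

end Clock

section Blocks

variable {X : Type*}

/-- The point `z` is the successor of `y` under `T`, up to a jump from `T y` to `z` inside `B`. -/
def IsSuccModulo (T : X → X) (B : Set X) (y z : X) : Prop := z = T y ∨ (z ∈ B ∧ T y ∈ B)

/-- A pseudo-orbit of length `r` which starts in `B`, jumps only inside `B`, and would enter `B` at
time `r`. -/
structure IsBlock (T : X → X) (B : Set X) (r : ℕ) (p : ℕ → X) : Prop where
  zero_mem : p 0 ∈ B
  succ : ∀ j, IsSuccModulo T B (p j) (p (j + 1))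
  last_mem : ∀ j, j + 1 = r → T (p j) ∈ B

/-- The concatenation of the first `r` terms of `p` with the sequence `q`. -/
def appendBlock (r : ℕ) (p q : ℕ → X) (j : ℕ) : X := if j < r then p j else q (j - r)

variable {T : X → X} {B : Set X} {r r' : ℕ} {p q : ℕ → X}

lemma appendBlock_of_lt {j : ℕ} (hj : j < r) : appendBlock r p q j = p j := if_pos hj

lemma appendBlock_add (j : ℕ) : appendBlock r p q (r + j) = q j := by
  simp [appendBlock]

lemma isBlock_iterate {y : X} (hy : y ∈ B) (hr : T^[r] y ∈ B) : IsBlock T B r fun j => T^[j] y where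
  zero_mem := hy
  succ j := Or.inl (Function.iterate_succ_apply' T j y)
  last_mem j hj := by rwa [← Function.iterate_succ_apply' T, Nat.succ_eq_add_one, hj]

lemma IsBlock.append (hp : IsBlock T B r p) (hq : IsBlock T B r' q) :
    IsBlock T B (r + r') (appendBlock r p q) where
  zero_mem := by
    obtain rfl | hr := Nat.eq_zero_or_pos r
    · simpa [appendBlock] using hq.zero_mem
    · exact appendBlock_of_lt (q := q) hr ▸ hp.zero_mem
  succ j := by
    obtain hj | rfl | hj := lt_trichotomy (j + 1) r
    · rw [appendBlock_of_lt hj, appendBlock_of_lt (by omega)]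
      exact hp.succ j
    · rw [appendBlock_of_lt j.lt_succ_self]
      exact Or.inr ⟨(appendBlock_add (p := p) 0).symm ▸ hq.zero_mem, hp.last_mem j rfl⟩
    · obtain ⟨k, rfl⟩ := Nat.exists_eq_add_of_le (Nat.lt_succ_iff.1 hj)
      rw [add_assoc, appendBlock_add, appendBlock_add]
      exact hq.succ k
  last_mem j hj := by
    obtain hlt | hle := lt_or_ge j r
    · rw [appendBlock_of_lt hlt]
      exact hp.last_mem j (by omega)
    · obtain ⟨k, rfl⟩ := Nat.exists_eq_add_of_le hle
      rw [appendBlock_add]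
      exact hq.last_mem k (by omega)

lemma abs_sum_appendBlock_le {g : X → ℝ} {κ : ℝ}
    (hp : ∀ t ≤ r, |∑ j ∈ Finset.range t, g (p j)| ≤ κ)
    (hq : ∀ t ≤ r', |∑ j ∈ Finset.range t, g (q j)| ≤ κ) {t : ℕ} (ht : t ≤ r + r') :
    |∑ j ∈ Finset.range t, g (appendBlock r p q j)| ≤ 2 * κ := by
  have hfirst : ∀ s ≤ r, ∑ j ∈ Finset.range s, g (appendBlock r p q j) =
      ∑ j ∈ Finset.range s, g (p j) := fun s hs => Finset.sum_congr rfl fun j hj => by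
    rw [appendBlock_of_lt ((Finset.mem_range.1 hj).trans_le hs)]
  have hκ : 0 ≤ κ := (abs_nonneg _).trans (hp r le_rfl)
  obtain htr | htr := le_total t r
  · rw [hfirst t htr]
    linarith [hp t htr]
  · obtain ⟨k, rfl⟩ := Nat.exists_eq_add_of_le htr
    rw [Finset.sum_range_add, hfirst r le_rfl]
    simp only [appendBlock_add]
    calc _ ≤ _ := abs_add_le _ _
      _ ≤ κ + κ := add_le_add (hp r le_rfl) (hq k (by omega))
      _ = 2 * κ := (two_mul κ).symm

end Blocks

section GoodSet

lemma birkhoffSum_mono_of_nonneg {X : Type*} {f : X → X} {e : X → ℝ} (he₀ : ∀ x, 0 ≤ e x) {k l : ℕ}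
    (hkl : k ≤ l) (x : X) : birkhoffSum f e k x ≤ birkhoffSum f e l x :=
  Finset.sum_le_sum_of_subset_of_nonneg (Finset.range_mono hkl) fun _ _ _ => he₀ _

variable {X : Type*} [MeasurableSpace X] {μ : Measure X}

lemma mul_measureReal_compl_birkhoffSum_le_le [IsFiniteMeasure μ] {f : X → X}
    (hf : MeasurePreserving f μ μ) {e : X → ℝ} (he₀ : ∀ x, 0 ≤ e x) (he : Integrable e μ) {a : ℝ}
    (ha : 0 ≤ a) (k : ℕ) :
    a * μ.real {x | birkhoffSum f e k x ≤ a}ᶜ ≤ k * ∫ x, e x ∂μ := by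
  rw [← nsmul_eq_mul, ← integral_birkhoffSum hf he]
  refine (mul_le_mul_of_nonneg_left (measureReal_mono fun x hx => ?_) ha).trans
    (mul_meas_ge_le_integral_of_nonneg (ae_of_all _ fun x => Finset.sum_nonneg fun i _ => he₀ _)
      (integrable_finsetSum _ fun i _ => (hf.iterate i).integrable_comp_of_integrable he) a)
  exact (not_le.1 (Set.notMem_ofPred_iff.1 hx)).le

variable [IsProbabilityMeasure μ] {T : X ≃ᵐ X} {B B' : Set X} {L N : ℕ}

lemma IsGapped.mul_measureReal_le (hT : MeasurePreserving T μ μ) (hg : IsGapped T B L) {C E : Set X}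
    (hC : MeasurableSet C) (hCB : C ⊆ B) (hE : ∀ x, ∀ i < L, T^[i] x ∈ C → x ∈ E) :
    L * μ.real C ≤ μ.real E := by
  have hfar : ∀ i j, i < j → j < L → ∀ x, T^[i] x ∈ C → T^[j] x ∉ C := fun i j hij hj x hi hj' => by
    refine hg _ (hCB hi) (j - i) (by omega) (by omega) (hCB ?_)
    rwa [zIterate_natCast, ← Function.iterate_add_apply, Nat.sub_add_cancel hij.le]
  have hdisj : (↑(Finset.range L) : Set ℕ).PairwiseDisjoint fun i => T^[i] ⁻¹' C := by
    intro i hi j hj hij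
    rw [Finset.mem_coe, Finset.mem_range] at hi hj
    refine Set.disjoint_left.2 fun x hxi hxj => ?_
    obtain hlt | hlt := lt_or_gt_of_ne hij
    · exact hfar i j hlt hj x hxi hxj
    · exact hfar j i hlt hi x hxj hxi
  calc L * μ.real C = ∑ i ∈ Finset.range L, μ.real (T^[i] ⁻¹' C) := by
        simp [(hT.iterate _).measureReal_preimage hC.nullMeasurableSet]
    _ = μ.real (⋃ i ∈ Finset.range L, T^[i] ⁻¹' C) :=
        (measureReal_biUnion_finset hdisj fun i _ => T.measurable.iterate i hC).symm
    _ ≤ μ.real E := measureReal_mono <| Set.iUnion₂_subset fun i hi x hx =>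
        hE x i (Finset.mem_range.1 hi) hx

lemma IsGapped.mul_measureReal_sdiff_le (hT : MeasurePreserving T μ μ) (hg : IsGapped T B L)
    (hB : MeasurableSet B) {e : X → ℝ} (hem : Measurable e) (he₀ : ∀ x, 0 ≤ e x)
    (he : Integrable e μ) {a : ℝ} (ha : 0 ≤ a) (k : ℕ) :
    a * (L * μ.real (B \ {x | birkhoffSum T e k x ≤ a})) ≤ (L + k : ℕ) * ∫ x, e x ∂μ := by
  refine (mul_le_mul_of_nonneg_left ?_ ha).trans
    (mul_measureReal_compl_birkhoffSum_le_le hT he₀ he ha (L + k))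
  refine hg.mul_measureReal_le hT (hB.diff ?_) Set.sdiff_subset fun x i hi hx => ?_
  · exact measurableSet_le (Finset.measurable_fun_sum _ fun i _ =>
      hem.comp (T.measurable.iterate i)) measurable_const
  · refine not_le.2 (show a < birkhoffSum T e (L + k) x from ?_)
    calc a < birkhoffSum T e k (T^[i] x) := not_le.1 hx.2
      _ ≤ birkhoffSum T e i x + birkhoffSum T e k (T^[i] x) :=
          le_add_of_nonneg_left (Finset.sum_nonneg fun _ _ => he₀ _)
      _ = birkhoffSum T e (i + k) x := (birkhoffSum_add T e i k x).symm
      _ ≤ birkhoffSum T e (L + k) x := birkhoffSum_mono_of_nonneg he₀ (by omega) x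

lemma IsSyndetic.measureReal_pos (hT : MeasurePreserving T μ μ) (hs : IsSyndetic T B N)
    (hB : MeasurableSet B) : 0 < μ.real B := by
  refine measureReal_nonneg.lt_of_ne' fun hzero => ?_
  have hnull : μ (⋃ i : ℕ, zIterate T i ⁻¹' B) = 0 := measure_iUnion_null fun i => by
    rw [(measurePreserving_zIterate hT i).measure_preimage hB.nullMeasurableSet]
    exact (measureReal_eq_zero_iff).1 hzero
  have huniv : ⋃ i : ℕ, zIterate T i ⁻¹' B = Set.univ := Set.eq_univ_of_forall fun x =>
    Set.mem_iUnion.2 ((hs x).imp fun _ h => h.2.2)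
  exact one_ne_zero (measure_univ.symm.trans (huniv ▸ hnull))

lemma exists_goodSet (hT : Ergodic T μ) {ι : Type*} (F : Finset ι) {h : ι → X → ℝ}
    (hm : ∀ i ∈ F, Measurable (h i)) (h01 : ∀ i ∈ F, ∀ x, h i x ∈ Set.Icc 0 1) {ε δ : ℝ}
    (hε : 0 < ε) (hδ : 0 < δ) :
    ∀ᶠ L : ℕ in atTop, ∃ G, MeasurableSet G ∧ μ.real Gᶜ < δ ∧
      (∀ i ∈ F, ∀ y ∈ G, ∀ t ≤ 3 * L,
        |birkhoffSum T (fun x => h i x - ∫ x, h i x ∂μ) t y| ≤ ε / 2 * L) ∧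
      ∀ B, MeasurableSet B → IsGapped T B L → 3 * L * μ.real (B \ G) ≤ ε := by
  obtain ⟨η, hη, hηε, hηδ⟩ : ∃ η : ℝ, 0 < η ∧ 48 * η ≤ ε * ε ∧ 12 * η < ε * δ := by
    have hmin := lt_min (show 0 < ε * ε by positivity) (show 0 < ε * δ by positivity)
    refine ⟨min (ε * ε) (ε * δ) / 48, by positivity, ?_, ?_⟩ <;>
      linarith [min_le_left (ε * ε) (ε * δ), min_le_right (ε * ε) (ε * δ)]
  obtain ⟨M, e, hem, he₀, he, heη, hsum⟩ := exists_orbit_sum_error hT F hm h01 hη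
  have hMlim : ∀ᶠ L : ℕ in atTop, (M : ℝ) ≤ ε / 4 * L :=
    (tendsto_natCast_atTop_atTop.const_mul_atTop (by positivity)).eventually_ge_atTop _
  filter_upwards [hMlim, eventually_gt_atTop 0] with L hML hL
  have hL' : (0 : ℝ) < L := by exact_mod_cast hL
  have ha : 0 ≤ ε / 4 * L := by positivity
  refine ⟨{y | birkhoffSum T e (3 * L) y ≤ ε / 4 * L}, measurableSet_le
    (Finset.measurable_fun_sum _ fun i _ => hem.comp (T.measurable.iterate i)) measurable_const,
    ?_, fun i hi y hy t ht => ?_, fun B hB hg => ?_⟩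
  · have hmarkov := mul_measureReal_compl_birkhoffSum_le_le hT.toMeasurePreserving he₀ he ha (3 * L)
    push_cast at hmarkov
    refine lt_of_mul_lt_mul_left ?_ (show 0 ≤ ε * L by positivity)
    nlinarith
  · have hy' : birkhoffSum T e (3 * L) y ≤ ε / 4 * L := hy
    exact (hsum i hi y t).trans (by linarith [birkhoffSum_mono_of_nonneg (f := T) he₀ ht y])
  · have hmarkov := hg.mul_measureReal_sdiff_le hT.toMeasurePreserving hB hem he₀ he ha (3 * L)
    push_cast at hmarkov
    refine le_of_mul_le_mul_left ?_ (show 0 < ε * L by positivity)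
    nlinarith

lemma WeakMixing.eventually_exists_isBlock (hw : WeakMixing μ T) (hB : MeasurableSet B)
    (hpos : 0 < μ.real B) :
    ∀ᶠ r in atTop, ∀ G : Set X, μ.real Gᶜ < μ.real B * μ.real B / 2 → ∃ p, IsBlock T B r p ∧
      ∀ (g : X → ℝ) (κ : ℝ), (∀ y ∈ G, ∀ t ≤ r, |birkhoffSum T g t y| ≤ κ) →
        ∀ t ≤ r, |∑ j ∈ Finset.range t, g (p j)| ≤ 2 * κ := by
  filter_upwards [(hw hB hB).eventually_exists_add_eq (show 0 < μ.real B * μ.real B / 2 by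
    positivity)] with r ⟨r₁, r₂, hr, h₁, h₂⟩ G hG
  have hreturn : ∀ q, |μ.real (B ∩ T^[q] ⁻¹' B) - μ.real B * μ.real B| < μ.real B * μ.real B / 2 →
      ∃ y ∈ G, IsBlock T B q fun j => T^[j] y := fun q hq => by
    have hlt : μ.real Gᶜ < μ.real (B ∩ T^[q] ⁻¹' B) := by linarith [(abs_lt.1 hq).1]
    obtain ⟨y, hyB, hyG⟩ : ((B ∩ T^[q] ⁻¹' B) \ Gᶜ).Nonempty := by
      rw [Set.sdiff_nonempty]
      exact fun hsub => hlt.not_ge (measureReal_mono hsub)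
    exact ⟨y, not_not.1 hyG, isBlock_iterate hyB.1 hyB.2⟩
  obtain ⟨y₁, hy₁, hp₁⟩ := hreturn r₁ h₁
  obtain ⟨y₂, hy₂, hp₂⟩ := hreturn r₂ h₂
  refine ⟨_, hr ▸ hp₁.append hp₂, fun g κ hκ t ht => ?_⟩
  exact abs_sum_appendBlock_le (fun t ht => hκ y₁ hy₁ t (by omega))
    (fun t ht => hκ y₂ hy₂ t (by omega)) (hr ▸ ht)

end GoodSet

section BlockMap

/-- A map `θ` compatible with `T` up to jumps inside `B`, along which a pseudo-orbit jumping inside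
`B'` becomes a pseudo-orbit jumping inside `B`. -/
structure IsAlignedMap {X : Type*} (T : X → X) (B' B : Set X) (θ : X → X) : Prop where
  mapsTo : Set.MapsTo θ B' B
  isSuccModulo : ∀ x, IsSuccModulo T B (θ x) (θ (T x))

/-- A function `w` bounded by `κ` whose coboundary is `g`, except that it is reset to `0` upon each
visit to `B`. -/
structure IsTransfer {X : Type*} (T : X → X) (B : Set X) (κ : ℝ) (g w : X → ℝ) : Prop where
  abs_le : ∀ x, |w x| ≤ κ
  eq_zero : ∀ x ∈ B, w x = 0
  apply_of_notMem : ∀ x, T x ∉ B → w (T x) = w x + g x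
  abs_add_le : ∀ x, T x ∈ B → |w x + g x| ≤ κ

variable {X : Type*} [MeasurableSpace X] {T : X ≃ᵐ X} {B B' : Set X} {N : ℕ} {v : X → ℕ → X}

/-- The map reading, at a point `x` last seen in `B'` at `y`, the block `v y` at the time elapsed
since then. -/
noncomputable def blockMap (T : X ≃ᵐ X) (B' : Set X) (v : X → ℕ → X) (x : X) : X :=
  v (lastVisit T B' x) (timeSince T B' x)

lemma blockMap_of_mem {x : X} (hx : x ∈ B') : blockMap T B' v x = v x 0 := by
  rw [blockMap, lastVisit, timeSince_of_mem hx, Nat.cast_zero, neg_zero, zIterate_zero]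

lemma IsSyndetic.blockMap_apply (hs : IsSyndetic T B' N) {x : X} (hx : T x ∉ B') :
    blockMap T B' v (T x) = v (lastVisit T B' x) (timeSince T B' x + 1) := by
  rw [blockMap, hs.lastVisit_apply hx, hs.timeSince_apply hx]

lemma IsSyndetic.measurable_blockMap (hs : IsSyndetic T B' N) (hB' : MeasurableSet B')
    (hv : ∀ j, Measurable fun y => v y j) : Measurable (blockMap T B' v) :=
  (measurable_from_prod_countable_left (f := fun p : X × ℕ => v p.1 p.2) hv).comp
    ((hs.measurable_lastVisit hB').prodMk (hs.measurable_timeSince hB'))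

lemma IsSyndetic.isAlignedMap_blockMap (hs : IsSyndetic T B' N)
    (hv : ∀ y ∈ B', IsBlock T B (returnTime T B' y) (v y)) :
    IsAlignedMap T B' B (blockMap T B' v) where
  mapsTo x hx := blockMap_of_mem (T := T) (v := v) hx ▸ (hv x hx).zero_mem
  isSuccModulo x := by
    have hblock := hv _ (hs.lastVisit_mem x)
    by_cases hx : T x ∈ B'
    · exact Or.inr ⟨blockMap_of_mem (T := T) (v := v) hx ▸ (hv _ hx).zero_mem,
        hblock.last_mem _ (hs.timeSince_add_one hx)⟩
    · rw [hs.blockMap_apply hx]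
      exact hblock.succ _

lemma IsSyndetic.isTransfer_blockMap (hs : IsSyndetic T B' N) {g : X → ℝ} {κ : ℝ}
    (hg : ∀ y ∈ B', ∀ t ≤ returnTime T B' y, |∑ j ∈ Finset.range t, g (v y j)| ≤ κ) :
    IsTransfer T B' κ (fun x => g (blockMap T B' v x))
      fun x => ∑ j ∈ Finset.range (timeSince T B' x), g (v (lastVisit T B' x) j) where
  abs_le x := hg _ (hs.lastVisit_mem x) _ (hs.timeSince_lt x).le
  eq_zero x hx := by rw [timeSince_of_mem hx, Finset.sum_range_zero]
  apply_of_notMem x hx := by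
    rw [hs.timeSince_apply hx, hs.lastVisit_apply hx, Finset.sum_range_succ, blockMap]
  abs_add_le x _ := by
    rw [blockMap, ← Finset.sum_range_succ fun j => g (v (lastVisit T B' x) j)]
    exact hg _ (hs.lastVisit_mem x) _ (hs.timeSince_lt x)

lemma IsSyndetic.measureReal_blockMap_ne_le {μ : Measure X} [IsFiniteMeasure μ]
    (hT : MeasurePreserving T μ μ) (hs : IsSyndetic T B' N) (hB' : MeasurableSet B') {G : Set X}
    (hG : MeasurableSet G) (hv : ∀ y ∈ G, ∀ j : ℕ, v y j = zIterate T j y) :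
    μ.real {x | blockMap T B' v x ≠ x} ≤ N * μ.real (B' \ G) := by
  have hsub : {x | blockMap T B' v x ≠ x} ⊆
      ⋃ j ∈ Finset.range N, zIterate T (-(j : ℤ)) ⁻¹' (B' \ G) := fun x hx =>
    Set.mem_iUnion₂.2 ⟨timeSince T B' x,
      Finset.mem_range.2 ((hs.timeSince_lt x).trans_le (hs.returnTime_le _)), hs.lastVisit_mem x,
      fun hGx => hx ((hv _ hGx _).trans (zIterate_timeSince_lastVisit T B' x))⟩
  calc μ.real {x | blockMap T B' v x ≠ x}
      ≤ μ.real (⋃ j ∈ Finset.range N, zIterate T (-(j : ℤ)) ⁻¹' (B' \ G)) :=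
        measureReal_mono hsub (measure_ne_top μ _)
    _ ≤ ∑ j ∈ Finset.range N, μ.real (zIterate T (-(j : ℤ)) ⁻¹' (B' \ G)) :=
        measureReal_biUnion_finset_le _ _
    _ = N * μ.real (B' \ G) := by
        simp only [(measurePreserving_zIterate hT _).measureReal_preimage
          (hB'.diff hG).nullMeasurableSet, Finset.sum_const, Finset.card_range, nsmul_eq_mul]

end BlockMap

section Modification

variable {X : Type*} [MeasurableSpace X] {μ : Measure X} {T : X ≃ᵐ X}

/-- One step of the construction: a map `θ`, equal to the identity up to measure `ε`, which aligns
visits to `B'` with visits to `B` and after which the functions `h i` with `i ∈ F` have, up to `ε`,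
the same averages along all orbit segments between visits to `B'`, whose length is at least `L`. -/
structure IsModification (T : X ≃ᵐ X) (μ : Measure X) (B B' : Set X) (L : ℕ) (ε : ℝ) {ι : Type*}
    (F : Finset ι) (h : ι → X → ℝ) (θ : X → X) : Prop where
  measurableSet : MeasurableSet B'
  isGapped : IsGapped T B' L
  isSyndetic : IsSyndetic T B' (3 * L)
  measurable : Measurable θ
  isAlignedMap : IsAlignedMap T B' B θ
  measureReal_ne_le : μ.real {x | θ x ≠ x} ≤ ε
  exists_isTransfer : ∀ i ∈ F, ∃ c w, IsTransfer T B' (ε * L) (fun x => h i (θ x) - c) w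

variable [IsProbabilityMeasure μ] {B : Set X} {N : ℕ}

/-- Blocks are genuine orbit segments over the points of `G`, and are replaced elsewhere by a
pseudo-orbit of the same length with good averages. -/
lemma WeakMixing.exists_blocks (hT : Ergodic T μ) (hw : WeakMixing μ T) (hB : MeasurableSet B)
    (hpos : 0 < μ.real B) {ι : Type*} (F : Finset ι) {h : ι → X → ℝ}
    (hm : ∀ i ∈ F, Measurable (h i)) (h01 : ∀ i ∈ F, ∀ x, h i x ∈ Set.Icc 0 1) {ε : ℝ}
    (hε : 0 < ε) :
    ∀ᶠ L : ℕ in atTop, ∃ (G : Set X) (p : ℕ → ℕ → X), MeasurableSet G ∧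
      (∀ B', MeasurableSet B' → IsGapped T B' L → 3 * L * μ.real (B' \ G) ≤ ε) ∧
      (∀ i ∈ F, ∀ y ∈ G, ∀ t ≤ 3 * L,
        |∑ j ∈ Finset.range t, (h i (zIterate T j y) - ∫ x, h i x ∂μ)| ≤ ε * L) ∧
      ∀ r, L ≤ r → r ≤ 3 * L → IsBlock T B r (p r) ∧ ∀ i ∈ F, ∀ t ≤ r,
        |∑ j ∈ Finset.range t, (h i (p r j) - ∫ x, h i x ∂μ)| ≤ ε * L := by
  have hblock := eventually_forall_ge_atTop.2 (hw.eventually_exists_isBlock hB hpos)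
  filter_upwards [exists_goodSet hT F hm h01 hε (half_pos (mul_pos hpos hpos)), hblock]
    with L ⟨G, hG, hGc, hsum, hbad⟩ hL
  have hfill : ∀ r, ∃ p : ℕ → X, L ≤ r → r ≤ 3 * L → IsBlock T B r p ∧ ∀ i ∈ F, ∀ t ≤ r,
      |∑ j ∈ Finset.range t, (h i (p j) - ∫ x, h i x ∂μ)| ≤ ε * L := fun r => by
    by_cases hr : L ≤ r ∧ r ≤ 3 * L
    · obtain ⟨p, hp, hpsum⟩ := hL r hr.1 G hGc
      refine ⟨p, fun _ _ => ⟨hp, fun i hi t ht => ?_⟩⟩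
      refine (hpsum _ _ (fun y hy t ht => hsum i hi y hy t (ht.trans hr.2)) t ht).trans_eq ?_
      ring
    · obtain ⟨x⟩ := nonempty_of_isProbabilityMeasure μ
      exact ⟨fun _ => x, fun h₁ h₂ => absurd ⟨h₁, h₂⟩ hr⟩
  choose p hp using hfill
  refine ⟨G, p, hG, hbad, fun i hi y hy t ht => ?_, hp⟩
  simp only [zIterate_natCast]
  exact (hsum i hi y hy t ht).trans (by nlinarith [mul_nonneg hε.le L.cast_nonneg])

lemma WeakMixing.exists_isModification [MeasurableSpace.CountablySeparated X] (hT : Ergodic T μ)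
    (hw : WeakMixing μ T) (hap : ∀ x, ∀ i : ℕ, 0 < i → zIterate T i x ≠ x) (hB : MeasurableSet B)
    (hs : IsSyndetic T B N) {ι : Type*} (F : Finset ι) {h : ι → X → ℝ}
    (hm : ∀ i ∈ F, Measurable (h i)) (h01 : ∀ i ∈ F, ∀ x, h i x ∈ Set.Icc 0 1) {ε : ℝ}
    (hε : 0 < ε) : ∀ᶠ L : ℕ in atTop, ∃ B' θ, IsModification T μ B B' L ε F h θ := by
  classical
  have hTp := hT.toMeasurePreserving
  filter_upwards [hw.exists_blocks hT hB (hs.measureReal_pos hTp hB) F hm h01 hε,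
    eventually_ge_atTop N] with L ⟨G, p, hG, hbad, hsum, hp⟩ hNL
  obtain ⟨B', hB'B, hB', hg', hs'⟩ := exists_isGapped_isSyndetic_subset hap hB hs hNL
  let v : X → ℕ → X := fun y j => if y ∈ G then zIterate T j y else p (returnTime T B' y) j
  have hv_mem : ∀ y ∈ G, v y = fun j : ℕ => zIterate T j y := fun y hy => funext fun _ => if_pos hy
  have hv_notMem : ∀ y ∉ G, v y = p (returnTime T B' y) := fun y hy => funext fun _ => if_neg hy
  have hp' := fun y (hy : y ∈ B') =>
    hp _ (hg'.le_returnTime hs' hy) (hs'.returnTime_le y)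
  have hblock : ∀ y ∈ B', IsBlock T B (returnTime T B' y) (v y) := fun y hy => by
    by_cases hyG : y ∈ G
    · rw [hv_mem y hyG]
      simp only [zIterate_natCast]
      refine isBlock_iterate (hB'B hy) (hB'B ?_)
      rw [← zIterate_natCast]
      exact hs'.zIterate_returnTime_mem y
    · exact hv_notMem y hyG ▸ (hp' y hy).1
  have hv_sum : ∀ i ∈ F, ∀ y ∈ B', ∀ t ≤ returnTime T B' y,
      |∑ j ∈ Finset.range t, (h i (v y j) - ∫ x, h i x ∂μ)| ≤ ε * L := fun i hi y hy t ht => by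
    by_cases hyG : y ∈ G
    · simpa only [hv_mem y hyG] using hsum i hi y hyG t (ht.trans (hs'.returnTime_le y))
    · simpa only [hv_notMem y hyG] using (hp' y hy).2 i hi t ht
  have hv_meas : ∀ j, Measurable fun y => v y j := fun j =>
    Measurable.ite hG (measurable_zIterate T j)
      ((measurable_of_countable fun r => p r j).comp (hs'.measurable_returnTime hB'))
  refine ⟨B', blockMap T B' v, hB', hg', hs', hs'.measurable_blockMap hB' hv_meas,
    hs'.isAlignedMap_blockMap hblock, ?_, fun i hi => ⟨_, _, hs'.isTransfer_blockMap
      (g := fun x => h i x - ∫ x, h i x ∂μ) (hv_sum i hi)⟩⟩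
  refine (hs'.measureReal_blockMap_ne_le hTp hB' hG fun y hy j => congrFun (hv_mem y hy) j).trans ?_
  exact_mod_cast hbad B' hB' hg'

end Modification

lemma card_filter_mul_le_of_gap {P : ℕ → Prop} [DecidablePred P] {L : ℕ}
    (hgap : ∀ i j, P i → P j → i < j → i + L ≤ j) (K : ℕ) :
    ((Finset.range K).filter P).card * L ≤ K + L := by
  obtain rfl | hL := L.eq_zero_or_pos
  · simp
  have hdiv : ∀ i j, P i → P j → i < j → i / L < j / L := fun i j hi hj hij => by
    have := Nat.div_le_div_right (c := L) (hgap i j hi hj hij)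
    rwa [Nat.add_div_right _ hL] at this
  have hcard : ((Finset.range K).filter P).card ≤ K / L + 1 := by
    rw [← Finset.card_range (K / L + 1)]
    refine Finset.card_le_card_of_injOn (· / L) (fun i hi => ?_) fun i hi j hj hij => ?_
    · have hi := (Finset.mem_filter.1 hi).1
      exact Finset.mem_coe.2 (Finset.mem_range_succ_iff.2
        (Nat.div_le_div_right (Finset.mem_range.1 hi).le))
    · have hi := (Finset.mem_filter.1 hi).2
      have hj := (Finset.mem_filter.1 hj).2
      by_contra hne
      rcases Nat.lt_or_gt_of_ne hne with h | h
      · exact (hdiv i j hi hj h).ne hij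
      · exact (hdiv j i hj hi h).ne' hij
  calc ((Finset.range K).filter P).card * L ≤ (K / L + 1) * L := Nat.mul_le_mul_right _ hcard
    _ = K / L * L + L := by ring
    _ ≤ K + L := Nat.add_le_add_right (Nat.div_mul_le_self _ _) _

section PseudoOrbit

/-- A bi-infinite pseudo-orbit of `T`, which jumps only from a point about to enter `B` to another
point of `B`. -/
def IsPseudoOrbit {X : Type*} (T : X → X) (B : Set X) (z : ℤ → X) : Prop :=
  ∀ i, IsSuccModulo T B (z i) (z (i + 1))

variable {X : Type*} {T : X → X} {B : Set X} {z : ℤ → X}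

lemma IsPseudoOrbit.mem (hz : IsPseudoOrbit T B z) {i : ℤ} (hi : T (z i) ∈ B) : z (i + 1) ∈ B :=
  (hz i).elim (fun h => h ▸ hi) And.left

lemma IsPseudoOrbit.apply_add_one (hz : IsPseudoOrbit T B z) {i : ℤ} (hi : T (z i) ∉ B) :
    z (i + 1) = T (z i) := (hz i).resolve_right fun h => hi h.2

lemma IsPseudoOrbit.shift (hz : IsPseudoOrbit T B z) (m : ℤ) :
    IsPseudoOrbit T B fun i => z (i + m) := fun i => by
  simpa only [add_right_comm] using hz (i + m)

open scoped Classical in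
lemma IsPseudoOrbit.abs_sub_sub_sum_le (hz : IsPseudoOrbit T B z) {κ : ℝ} {g w : X → ℝ}
    (hw : IsTransfer T B κ g w) (K : ℕ) :
    |w (z K) - w (z 0) - ∑ i ∈ Finset.range K, g (z (i : ℕ))| ≤
      κ * ((Finset.range K).filter fun i : ℕ => T (z i) ∈ B).card := by
  induction K with
  | zero => simp
  | succ K ih =>
    rw [Finset.sum_range_succ, Finset.range_add_one, Finset.filter_insert, Nat.cast_succ]
    split_ifs with h
    · rw [Finset.card_insert_of_notMem (by simp), hw.eq_zero _ (hz.mem h)]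
      have hjump := hw.abs_add_le _ h
      push_cast
      rw [abs_le] at ih hjump ⊢
      constructor <;> linarith
    · rw [hz.apply_add_one h, hw.apply_of_notMem _ h]
      convert ih using 2
      ring

open scoped Classical in
lemma IsPseudoOrbit.abs_sum_le (hz : IsPseudoOrbit T B z) {κ : ℝ} {g w : X → ℝ}
    (hw : IsTransfer T B κ g w) (K : ℕ) :
    |∑ i ∈ Finset.range K, g (z (i : ℕ))| ≤
      κ * (((Finset.range K).filter fun i : ℕ => T (z i) ∈ B).card + 2) := by
  have hsum := hz.abs_sub_sub_sum_le hw K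
  have hfirst := hw.abs_le (z 0)
  have hlast := hw.abs_le (z K)
  rw [abs_le] at *
  constructor <;> linarith

end PseudoOrbit

section Visits

variable {X : Type*} [MeasurableSpace X] {T : X ≃ᵐ X} {B : Set X} {z : ℤ → X} {L : ℕ}

lemma IsPseudoOrbit.apply_add_natCast (hz : IsPseudoOrbit T B z) {a : ℤ} {k : ℕ}
    (h : ∀ j < k, T (z (a + (j : ℕ))) ∉ B) : z (a + k) = zIterate T k (z a) := by
  induction k with
  | zero => simp
  | succ k ih =>
    rw [Nat.cast_succ, zIterate_add_one, ← ih fun j hj => h j (by omega), ← add_assoc]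
    exact hz.apply_add_one (h k (by omega))

lemma IsPseudoOrbit.apply_add_of_window (hz : IsPseudoOrbit T B z) {a : ℤ} {n : ℕ}
    (h : ∀ j ∈ Finset.Ico (-(n : ℤ)) n, T (z (a + j)) ∉ B) {j : ℤ}
    (hj : j ∈ Finset.Icc (-(n : ℤ)) n) : z (a + j) = zIterate T j (z a) := by
  rw [Finset.mem_Icc] at hj
  obtain ⟨k, rfl | rfl⟩ := j.eq_nat_or_neg
  · exact hz.apply_add_natCast fun i hi => h i (Finset.mem_Ico.2 ⟨by omega, by omega⟩)
  · have hback := hz.apply_add_natCast (a := a + -(k : ℤ)) (k := k) fun i hi => by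
      have := h (-(k : ℤ) + i) (Finset.mem_Ico.2 ⟨by omega, by omega⟩)
      rwa [← add_assoc] at this
    rw [neg_add_cancel_right] at hback
    rw [hback, zIterate_neg_cancel]

lemma IsPseudoOrbit.add_le_of_isGapped (hz : IsPseudoOrbit T B z) (hg : IsGapped T B L) {i j : ℕ}
    (hi : T (z i) ∈ B) (hj : T (z j) ∈ B) (hij : i < j) : i + L ≤ j := by
  classical
  by_contra! hlt
  have hj' : T (z ((i : ℤ) + 1 + (j - i - 1 : ℕ))) ∈ B := by
    convert hj using 3
    omega
  have hex : ∃ k : ℕ, T (z ((i : ℤ) + 1 + k)) ∈ B := ⟨_, hj'⟩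
  have hle : Nat.find hex ≤ j - i - 1 := Nat.find_min' hex hj'
  have hmem := Nat.find_spec hex
  rw [hz.apply_add_natCast fun m hm => Nat.find_min hex hm, ← zIterate_add_one] at hmem
  exact hg _ (hz.mem hi) (Nat.find hex + 1) (by omega) (by omega) hmem

open scoped Classical in
lemma IsPseudoOrbit.card_visits_mul_le (hz : IsPseudoOrbit T B z) (hg : IsGapped T B L) (K : ℕ) :
    ((Finset.range K).filter fun i : ℕ => T (z i) ∈ B).card * L ≤ K + L :=
  card_filter_mul_le_of_gap (fun _ _ hi hj hij => hz.add_le_of_isGapped hg hi hj hij) K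

lemma IsPseudoOrbit.abs_sum_le_of_isGapped (hz : IsPseudoOrbit T B z) (hg : IsGapped T B L) {ε : ℝ}
    (hε : 0 ≤ ε) {g w : X → ℝ} (hw : IsTransfer T B (ε * L) g w) (K : ℕ) :
    |∑ i ∈ Finset.range K, g (z (i : ℕ))| ≤ ε * (K + 3 * L) := by
  classical
  have hvisits : (((Finset.range K).filter fun i : ℕ => T (z i) ∈ B).card * L : ℝ) ≤ K + L := by
    exact_mod_cast hz.card_visits_mul_le hg K
  have := mul_le_mul_of_nonneg_left hvisits hε
  exact (hz.abs_sum_le hw K).trans (by linarith)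

lemma IsPseudoOrbit.sum_sum_indicator_mul_le (hz : IsPseudoOrbit T B z) (hg : IsGapped T B L)
    (J : Finset ℤ) (K : ℕ) :
    (∑ i ∈ Finset.range K, ∑ j ∈ J, (T ⁻¹' B).indicator (1 : X → ℝ) (z (i + j))) * L ≤
      J.card * (K + L) := by
  classical
  rw [Finset.sum_comm, Finset.sum_mul, ← nsmul_eq_mul]
  refine Finset.sum_le_card_nsmul _ _ _ fun j _ => ?_
  simp only [Set.indicator_apply, Set.mem_preimage, Pi.one_apply, Finset.sum_boole]
  exact_mod_cast (hz.shift j).card_visits_mul_le hg K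

end Visits

section AlignedMap

variable {X : Type*} [MeasurableSpace X] {T : X ≃ᵐ X} {B B' B'' : Set X} {θ θ' : X → X}

lemma isAlignedMap_id : IsAlignedMap T B B id := ⟨Set.mapsTo_id B, fun _ => Or.inl rfl⟩

lemma IsAlignedMap.comp (hθ : IsAlignedMap T B' B θ) (hθ' : IsAlignedMap T B'' B' θ') :
    IsAlignedMap T B'' B (θ ∘ θ') where
  mapsTo := hθ.mapsTo.comp hθ'.mapsTo
  isSuccModulo x := by
    simp only [Function.comp_apply]
    rcases hθ'.isSuccModulo x with h | ⟨hmem, hTmem⟩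
    · exact h ▸ hθ.isSuccModulo (θ' x)
    · refine Or.inr ⟨hθ.mapsTo hmem, ?_⟩
      rcases hθ.isSuccModulo (θ' x) with h | h
      · exact h ▸ hθ.mapsTo hTmem
      · exact h.2

lemma IsAlignedMap.isPseudoOrbit (hθ : IsAlignedMap T B' B θ) (x : X) :
    IsPseudoOrbit T B fun i => θ (zIterate T i x) := fun i => by
  simpa only [zIterate_add_one] using hθ.isSuccModulo (zIterate T i x)

end AlignedMap

/-! ### Uniformly distributed codings -/

section Tower

/-- The composition `θ k ∘ ⋯ ∘ θ (n - 1)`, equal to the identity for `n ≤ k`. -/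
def towerMap {X : Type*} (θ : ℕ → X → X) (k : ℕ) : ℕ → X → X
  | 0 => id
  | n + 1 => if k ≤ n then towerMap θ k n ∘ θ n else id

section TowerMap

variable {X : Type*} {θ : ℕ → X → X} {k m n : ℕ}

lemma towerMap_of_le (h : n ≤ k) : towerMap θ k n = id := by
  cases n with
  | zero => rfl
  | succ n => exact if_neg (by omega)

lemma towerMap_succ (h : k ≤ n) : towerMap θ k (n + 1) = towerMap θ k n ∘ θ n := if_pos h

lemma towerMap_comp_towerMap (hkm : k ≤ m) (hmn : m ≤ n) :
    towerMap θ k m ∘ towerMap θ m n = towerMap θ k n := by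
  induction n, hmn using Nat.le_induction with
  | base => rw [towerMap_of_le le_rfl, Function.comp_id]
  | succ n hmn ih =>
    rw [towerMap_succ hmn, towerMap_succ (hkm.trans hmn), ← Function.comp_assoc, ih]

lemma towerMap_eq_comp (h : k < n) : towerMap θ k n = θ k ∘ towerMap θ (k + 1) n := by
  rw [← towerMap_comp_towerMap k.le_succ h, towerMap_succ le_rfl, towerMap_of_le le_rfl,
    Function.id_comp]

lemma measurable_towerMap [MeasurableSpace X] (hθ : ∀ n, Measurable (θ n)) (k n : ℕ) :
    Measurable (towerMap θ k n) := by
  induction n with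
  | zero => exact measurable_id
  | succ n ih =>
    rw [towerMap]
    split_ifs
    exacts [ih.comp (hθ n), measurable_id]

lemma towerMap_apply_of_fixed {x : X} (hkm : k ≤ m) (hx : ∀ i ≥ m, θ i x = x) (hmn : m ≤ n) :
    towerMap θ k n x = towerMap θ k m x := by
  induction n, hmn using Nat.le_induction with
  | base => rfl
  | succ n hmn ih => rw [towerMap_succ (hkm.trans hmn), Function.comp_apply, hx n hmn, ih]

end TowerMap

variable {X : Type*} [MeasurableSpace X] {T : X ≃ᵐ X} {A : ℕ → Set X}

/-- The finite box of array coordinates taken into account at level `n`. -/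
noncomputable def coordBox (n : ℕ) : Finset (ℕ × ℤ) :=
  Finset.range (n + 1) ×ˢ Finset.Icc (-(n : ℤ)) n

lemma eventually_subset_coordBox (s : Finset (ℕ × ℤ)) : ∀ᶠ n in atTop, s ⊆ coordBox n := by
  have h : ∀ᶠ n in atTop, ∀ p ∈ s, p ∈ coordBox n := by
    rw [eventually_all_finset]
    intro p _
    filter_upwards [eventually_ge_atTop (p.1 + p.2.natAbs)] with n hn
    simp only [coordBox, Finset.mem_product, Finset.mem_range, Finset.mem_Icc]
    omega
  exact h

/-- The indicator function of the points `y` with `Θ k (T ^ i y) ∈ A k` for all `(k, i) ∈ s`. -/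
noncomputable def nameIndicator (T : X ≃ᵐ X) (A : ℕ → Set X) (Θ : ℕ → X → X) (s : Finset (ℕ × ℤ))
    (y : X) : ℝ :=
  ∏ p ∈ s, (A p.1).indicator 1 (Θ p.1 (zIterate T p.2 y))

lemma nameIndicator_mem_Icc (Θ : ℕ → X → X) (s : Finset (ℕ × ℤ)) (y : X) :
    nameIndicator T A Θ s y ∈ Set.Icc 0 1 := by
  have h0 : ∀ p : ℕ × ℤ, 0 ≤ (A p.1).indicator (1 : X → ℝ) (Θ p.1 (zIterate T p.2 y)) := fun p =>
    Set.indicator_nonneg (fun _ _ => zero_le_one) _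
  exact ⟨Finset.prod_nonneg fun p _ => h0 p, Finset.prod_le_one (fun p _ => h0 p) fun p _ =>
    Set.indicator_le_self' (fun _ _ => zero_le_one) _⟩

lemma measurable_nameIndicator (hA : ∀ k, MeasurableSet (A k)) {Θ : ℕ → X → X}
    (hΘ : ∀ k, Measurable (Θ k)) (s : Finset (ℕ × ℤ)) : Measurable (nameIndicator T A Θ s) :=
  Finset.measurable_prod _ fun p _ => (measurable_one.indicator (hA p.1)).comp
    ((hΘ p.1).comp (measurable_zIterate T p.2))

/-- A sequence of modifications `θ n` of the identity, with bases `B n`, which makes the names of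
points read through the compositions `towerMap θ k n` more and more uniformly distributed. -/
structure ModificationTower (T : X ≃ᵐ X) (μ : Measure X) (A : ℕ → Set X) (B : ℕ → Set X)
    (L : ℕ → ℕ) (θ : ℕ → X → X) : Prop where
  isModification : ∀ n, IsModification T μ (B n) (B (n + 1)) (L n) ((1 / 2) ^ n)
    (coordBox n).powerset (nameIndicator T A fun k => towerMap θ k n) (θ n)
  length_lt : ∀ n, 2 ^ (n + 1) * (2 * (n + 1)) < L n

lemma exists_modificationTower [MeasurableSpace.CountablySeparated X] {μ : Measure X}
    [IsProbabilityMeasure μ] (hT : Ergodic T μ) (hw : WeakMixing μ T)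
    (hap : ∀ x, ∀ i : ℕ, 0 < i → zIterate T i x ≠ x) (hA : ∀ k, MeasurableSet (A k)) :
    ∃ B L θ, ModificationTower T μ A B L θ := by
  let State := {s : Set X × (ℕ → X → X) //
    MeasurableSet s.1 ∧ (∃ N, IsSyndetic T s.1 N) ∧ ∀ k, Measurable (s.2 k)}
  let start : State := ⟨(Set.univ, fun _ => id), MeasurableSet.univ,
    ⟨1, fun x => ⟨1, one_pos, le_rfl, Set.mem_univ _⟩⟩, fun _ => measurable_id⟩
  have hstep : ∀ (n : ℕ) (s : State), ∃ (s' : State) (L : ℕ) (θ : X → X),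
      2 ^ (n + 1) * (2 * (n + 1)) < L ∧ IsModification T μ s.1.1 s'.1.1 L ((1 / 2) ^ n)
        (coordBox n).powerset (nameIndicator T A s.1.2) θ ∧
        s'.1.2 = fun k => if k ≤ n then s.1.2 k ∘ θ else id := by
    rintro n ⟨⟨B, Θ⟩, hB, ⟨N, hs⟩, hΘ⟩
    obtain ⟨L, ⟨B', θ, hmod⟩, hL⟩ := ((hw.exists_isModification hT hap hB hs
      (coordBox n).powerset (fun s _ => measurable_nameIndicator hA hΘ s)
      (fun s _ x => nameIndicator_mem_Icc Θ s x) (by positivity : (0 : ℝ) < (1 / 2) ^ n)).and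
      (eventually_gt_atTop _)).exists
    have hθ := hmod.measurable
    exact ⟨⟨(B', fun k => if k ≤ n then Θ k ∘ θ else id), hmod.measurableSet, ⟨_, hmod.isSyndetic⟩,
      fun k => by dsimp only; split_ifs <;> fun_prop⟩, L, θ, hL, hmod, rfl⟩
  choose next L θ hL hmod hΘ using hstep
  let state : ℕ → State := fun n => Nat.rec start next n
  have hstate : ∀ n, (state n).1.2 = fun k => towerMap (fun n => θ n (state n)) k n := by
    intro n
    induction n with
    | zero => rfl
    | succ n ih => rw [show (state (n + 1)).1.2 = _ from hΘ n (state n), ih]; rfl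
  exact ⟨fun n => (state n).1.1, fun n => L n (state n), fun n => θ n (state n),
    fun n => hstate n ▸ hmod n (state n), fun n => hL n (state n)⟩

namespace ModificationTower

variable {μ : Measure X} {B : ℕ → Set X} {L : ℕ → ℕ} {θ : ℕ → X → X}

lemma isAlignedMap (M : ModificationTower T μ A B L θ) {n N : ℕ} (h : n ≤ N) :
    IsAlignedMap T (B N) (B n) (towerMap θ n N) := by
  induction N, h using Nat.le_induction with
  | base => exact towerMap_of_le (θ := θ) le_rfl ▸ isAlignedMap_id
  | succ N h ih => exact towerMap_succ (θ := θ) h ▸ ih.comp (M.isModification N).isAlignedMap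

lemma isPseudoOrbit (M : ModificationTower T μ A B L θ) {n N : ℕ} (h : n ≤ N) (x : X) :
    IsPseudoOrbit T (B n) fun i => towerMap θ n N (zIterate T i x) :=
  (M.isAlignedMap h).isPseudoOrbit x

lemma nameIndicator_eq (M : ModificationTower T μ A B L θ) {m N : ℕ} (hmN : m ≤ N)
    {s : Finset (ℕ × ℤ)} (hs : s ⊆ coordBox m) {x : X} {i : ℤ}
    (hi : ∀ j ∈ Finset.Ico (-(m : ℤ)) m, T (towerMap θ m N (zIterate T (i + j) x)) ∉ B m) :
    nameIndicator T A (fun k => towerMap θ k N) s (zIterate T i x) =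
      nameIndicator T A (fun k => towerMap θ k m) s (towerMap θ m N (zIterate T i x)) := by
  refine Finset.prod_congr rfl fun p hp => ?_
  obtain ⟨hpm, hpI⟩ := Finset.mem_product.1 (hs hp)
  dsimp only
  rw [← zIterate_add, ← (M.isPseudoOrbit hmN x).apply_add_of_window hi hpI, add_comm p.2,
    ← towerMap_comp_towerMap (Finset.mem_range_succ_iff.1 hpm) hmN, Function.comp_apply]

lemma abs_nameIndicator_sub_le (M : ModificationTower T μ A B L θ) {m N : ℕ} (hmN : m ≤ N)
    {s : Finset (ℕ × ℤ)} (hs : s ⊆ coordBox m) (x : X) (i : ℤ) :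
    |nameIndicator T A (fun k => towerMap θ k N) s (zIterate T i x) -
      nameIndicator T A (fun k => towerMap θ k m) s (towerMap θ m N (zIterate T i x))| ≤
      ∑ j ∈ Finset.Ico (-(m : ℤ)) m,
        (T ⁻¹' B m).indicator 1 (towerMap θ m N (zIterate T (i + j) x)) := by
  have hv : ∀ y, 0 ≤ (T ⁻¹' B m).indicator (1 : X → ℝ) y := fun y =>
    Set.indicator_nonneg (fun _ _ => zero_le_one) y
  by_cases hi : ∀ j ∈ Finset.Ico (-(m : ℤ)) m, T (towerMap θ m N (zIterate T (i + j) x)) ∉ B m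
  · rw [M.nameIndicator_eq hmN hs hi, sub_self, abs_zero]
    exact Finset.sum_nonneg fun j _ => hv _
  · push Not at hi
    obtain ⟨j, hj, hjB⟩ := hi
    calc _ ≤ (1 : ℝ) := abs_sub_le_of_nonneg_of_le (nameIndicator_mem_Icc _ s _).1
            (nameIndicator_mem_Icc _ s _).2 (nameIndicator_mem_Icc _ s _).1
            (nameIndicator_mem_Icc _ s _).2
      _ = (T ⁻¹' B m).indicator 1 (towerMap θ m N (zIterate T (i + j) x)) :=
            (Set.indicator_of_mem (f := (1 : X → ℝ)) hjB).symm
      _ ≤ _ := Finset.single_le_sum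
            (f := fun j => (T ⁻¹' B m).indicator 1 (towerMap θ m N (zIterate T (i + j) x)))
            (fun j _ => hv _) hj

lemma abs_sum_nameIndicator_sub_le (M : ModificationTower T μ A B L θ) {n N : ℕ} (h : n + 1 ≤ N)
    {s : Finset (ℕ × ℤ)} (hs : s ⊆ coordBox (n + 1)) (x : X) (K : ℕ) :
    |∑ i ∈ Finset.range K, (nameIndicator T A (fun k => towerMap θ k N) s (zIterate T i x) -
      nameIndicator T A (fun k => towerMap θ k (n + 1)) s
        (towerMap θ (n + 1) N (zIterate T i x)))| ≤ (1 / 2) ^ (n + 1) * (K + L n) := by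
  have hvisits := (M.isPseudoOrbit h x).sum_sum_indicator_mul_le
    (M.isModification n).isGapped (Finset.Ico (-((n + 1 : ℕ) : ℤ)) (n + 1 : ℕ)) K
  have hcard : (Finset.Ico (-((n + 1 : ℕ) : ℤ)) (n + 1 : ℕ)).card = 2 * (n + 1) := by
    rw [Int.card_Ico]
    omega
  have hlength : (2 * (n + 1) : ℝ) ≤ (1 / 2) ^ (n + 1) * L n := by
    rw [one_div, inv_pow, inv_mul_eq_div, le_div_iff₀' (by positivity)]
    exact_mod_cast (M.length_lt n).le
  have hL : (0 : ℝ) < L n := Nat.cast_pos.2 ((Nat.zero_le _).trans_lt (M.length_lt n))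
  refine (Finset.abs_sum_le_sum_abs _ _).trans
    ((Finset.sum_le_sum fun (i : ℕ) _ => M.abs_nameIndicator_sub_le h hs x i).trans ?_)
  refine le_of_mul_le_mul_right (hvisits.trans ?_) hL
  rw [hcard]
  push_cast
  calc (2 * (n + 1) : ℝ) * (K + L n) ≤ (1 / 2) ^ (n + 1) * L n * (K + L n) := by gcongr
    _ = (1 / 2) ^ (n + 1) * (K + L n) * L n := by ring

lemma exists_abs_sum_sub_le (M : ModificationTower T μ A B L θ) {n : ℕ} {s : Finset (ℕ × ℤ)}
    (hs : s ⊆ coordBox (n + 1)) :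
    ∃ c : ℝ, ∀ N > n + 1, ∀ x, ∀ K : ℕ,
      |∑ i ∈ Finset.range K, (nameIndicator T A (fun k => towerMap θ k N) s (zIterate T i x) - c)| ≤
        (1 / 2) ^ n * (K + L n + 2 * L (n + 1)) := by
  have hmod := M.isModification (n + 1)
  obtain ⟨c, w, hw⟩ := hmod.exists_isTransfer s (Finset.mem_powerset.2 hs)
  refine ⟨c, fun N hN x K => ?_⟩
  have htransfer := (M.isPseudoOrbit (n := n + 1 + 1) hN x).abs_sum_le_of_isGapped hmod.isGapped
    (by positivity) hw K
  have hmodified := M.abs_sum_nameIndicator_sub_le hN.le hs x K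
  simp only [towerMap_eq_comp hN, Function.comp_apply] at hmodified
  have hsum := (abs_add_le _ _).trans (add_le_add hmodified htransfer)
  simp only [← Finset.sum_add_distrib, sub_add_sub_cancel] at hsum
  have hLnn : 0 ≤ (L n : ℝ) ∧ 0 ≤ (L (n + 1) : ℝ) := ⟨Nat.cast_nonneg _, Nat.cast_nonneg _⟩
  refine hsum.trans ?_
  calc (1 / 2 : ℝ) ^ (n + 1) * (K + L n) + (1 / 2) ^ (n + 1) * (K + 3 * L (n + 1))
      = (1 / 2) ^ n * (K + L n / 2 + 3 / 2 * L (n + 1)) := by ring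
    _ ≤ (1 / 2) ^ n * (K + L n + 2 * L (n + 1)) := by gcongr <;> linarith [hLnn.1, hLnn.2]

end ModificationTower

end Tower

section Coding

/-- The indicator function of the cylinder of arrays which are `true` at every position in `s`. -/
noncomputable def cylinderIndicator (s : Finset (ℕ × ℤ)) (ω : ℕ × ℤ → Bool) : ℝ :=
  ∏ p ∈ s, if ω p then 1 else 0

/-- The shift of the integer coordinate on arrays of symbols. -/
def arrayShift : (ℕ × ℤ → Bool) ≃ₜ (ℕ × ℤ → Bool) where
  toFun ω p := ω (p.1, p.2 + 1)
  invFun ω p := ω (p.1, p.2 - 1)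
  left_inv ω := by ext p; simp
  right_inv ω := by ext p; simp

lemma exists_seq_eventually_separating (X : Type*) [MeasurableSpace X]
    [MeasurableSpace.CountablySeparated X] :
    ∃ A : ℕ → Set X, (∀ k, MeasurableSet (A k)) ∧
      ∀ x y, (∀ᶠ k in atTop, (x ∈ A k ↔ y ∈ A k)) → x = y := by
  obtain ⟨A, hA, hsep⟩ := exists_seq_separating X (p := MeasurableSet) MeasurableSet.empty Set.univ
  refine ⟨fun k => A k.unpair.1, fun k => hA _, fun x y hxy => ?_⟩
  obtain ⟨m, hm⟩ := eventually_atTop.1 hxy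
  refine hsep x trivial y trivial fun n => ?_
  simpa using hm (Nat.pair n m) (Nat.right_le_pair n m)

variable {X : Type*} [MeasurableSpace X] {T : X ≃ᵐ X} {A : ℕ → Set X} {θ : ℕ → X → X}

/-- The points whose whole orbit consists of points fixed by all but finitely many `θ n`. -/
def regularSet (T : X ≃ᵐ X) (θ : ℕ → X → X) : Set X :=
  {x | ∀ i : ℤ, ∀ᶠ n in atTop, θ n (zIterate T i x) = zIterate T i x}

lemma zIterate_mem_regularSet {x : X} (hx : x ∈ regularSet T θ) (i : ℤ) :
    zIterate T i x ∈ regularSet T θ := fun j => by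
  simpa only [zIterate_add] using hx (j + i)

lemma ae_mem_regularSet {μ : Measure X} [IsFiniteMeasure μ] (hT : MeasurePreserving T μ μ)
    {ε : ℕ → ℝ} (hε : Summable ε) (hθ : ∀ n, μ.real {x | θ n x ≠ x} ≤ ε n) :
    ∀ᵐ x ∂μ, x ∈ regularSet T θ := by
  have hsum : ∑' n, μ {x | θ n x ≠ x} ≠ ⊤ := by
    refine ((ENNReal.tsum_le_tsum fun n => ?_).trans_lt
      (ENNReal.ofReal_tsum_of_nonneg (fun n => measureReal_nonneg.trans (hθ n)) hε ▸
        ENNReal.ofReal_lt_top)).ne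
    rw [← ofReal_measureReal]
    exact ENNReal.ofReal_le_ofReal (hθ n)
  refine ae_all_iff.2 fun i => ?_
  filter_upwards [(measurePreserving_zIterate hT i).quasiMeasurePreserving.ae
    (ae_eventually_notMem hsum)] with x hx
  filter_upwards [hx] with n hn using not_not.1 hn

open scoped Classical in
/-- The array of names of a point: its entry `(k, i)` tells whether `towerMap θ k N (T ^ i x)`
belongs to `A k` for all large `N`. -/
noncomputable def limitName (T : X ≃ᵐ X) (A : ℕ → Set X) (θ : ℕ → X → X) (x : X) (p : ℕ × ℤ) :
    Bool :=
  decide (∀ᶠ N in atTop, towerMap θ p.1 N (zIterate T p.2 x) ∈ A p.1)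

lemma limitName_eq_true {x : X} {p : ℕ × ℤ} : limitName T A θ x p = true ↔
    ∀ᶠ N in atTop, towerMap θ p.1 N (zIterate T p.2 x) ∈ A p.1 :=
  @decide_eq_true_iff _ (Classical.propDecidable _)

lemma semiconj_limitName : Function.Semiconj (limitName T A θ) T arrayShift := fun x =>
  funext fun p => Bool.eq_iff_iff.2 <| by
    change _ ↔ limitName T A θ x (p.1, p.2 + 1) = true
    rw [limitName_eq_true, limitName_eq_true]
    simp only [zIterate_add_one']

lemma measurable_limitName (hA : ∀ k, MeasurableSet (A k)) (hθ : ∀ n, Measurable (θ n)) :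
    Measurable (limitName T A θ) := by
  refine measurable_pi_lambda _ fun p => measurable_to_bool ?_
  have hpre : (fun x => limitName T A θ x p) ⁻¹' {true} =
      ⋃ N₀ : ℕ, ⋂ N ≥ N₀, {x | towerMap θ p.1 N (zIterate T p.2 x) ∈ A p.1} := by
    ext x
    simp [limitName_eq_true, eventually_atTop]
  rw [hpre]
  exact .iUnion fun N₀ => .iInter fun N => .iInter fun _ =>
    (measurable_towerMap hθ p.1 N).comp (measurable_zIterate T p.2) (hA p.1)

lemma limitName_eq_true_iff_of_fixed {x : X} {p : ℕ × ℤ} {m : ℕ} (hpm : p.1 ≤ m)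
    (hm : ∀ n ≥ m, θ n (zIterate T p.2 x) = zIterate T p.2 x) :
    limitName T A θ x p = true ↔ towerMap θ p.1 m (zIterate T p.2 x) ∈ A p.1 := by
  refine (limitName_eq_true.trans (eventually_congr ?_)).trans eventually_const
  filter_upwards [eventually_ge_atTop m] with N hN
  rw [towerMap_apply_of_fixed hpm hm hN]

lemma eventually_limitName_eq_true_iff {x : X} (hx : x ∈ regularSet T θ) (p : ℕ × ℤ) :
    ∀ᶠ N in atTop, (limitName T A θ x p = true ↔
      towerMap θ p.1 N (zIterate T p.2 x) ∈ A p.1) := by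
  obtain ⟨m, hm⟩ := eventually_atTop.1 (hx p.2)
  filter_upwards [eventually_ge_atTop (max m p.1)] with N hN
  exact limitName_eq_true_iff_of_fixed (le_of_max_le_right hN) fun n hn =>
    hm n ((le_of_max_le_left hN).trans hn)

lemma eventually_limitName_zero_eq_true_iff {x : X} (hx : x ∈ regularSet T θ) :
    ∀ᶠ k in atTop, (limitName T A θ x (k, 0) = true ↔ x ∈ A k) := by
  obtain ⟨m, hm⟩ := eventually_atTop.1 (hx 0)
  filter_upwards [eventually_ge_atTop m] with k hk
  rw [limitName_eq_true_iff_of_fixed le_rfl fun n hn => hm n (hk.trans hn), towerMap_of_le le_rfl,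
    id_eq, zIterate_zero]

lemma injOn_limitName (hA : ∀ x y, (∀ᶠ k in atTop, (x ∈ A k ↔ y ∈ A k)) → x = y) :
    (regularSet T θ).InjOn (limitName T A θ) := fun x hx y hy hxy => hA x y <| by
  filter_upwards [eventually_limitName_zero_eq_true_iff hx,
    eventually_limitName_zero_eq_true_iff hy] with k hxk hyk
  rw [← hxk, ← hyk, hxy]

lemma eventually_cylinderIndicator_limitName_eq {x : X} (hx : x ∈ regularSet T θ)
    (s : Finset (ℕ × ℤ)) : ∀ᶠ N in atTop, cylinderIndicator s (limitName T A θ x) =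
      nameIndicator T A (fun k => towerMap θ k N) s x := by
  filter_upwards [(eventually_all_finset s).2 fun p _ =>
    eventually_limitName_eq_true_iff (A := A) hx p] with N hN
  classical
  refine Finset.prod_congr rfl fun p hp => ?_
  simp only [Set.indicator_apply, hN p hp, Pi.one_apply]

namespace ModificationTower

variable {μ : Measure X} {B : ℕ → Set X} {L : ℕ → ℕ}

lemma exists_abs_sum_cylinderIndicator_sub_le (M : ModificationTower T μ A B L θ) {n : ℕ}
    {s : Finset (ℕ × ℤ)} (hs : s ⊆ coordBox (n + 1)) :
    ∃ c : ℝ, ∀ x ∈ regularSet T θ, ∀ K : ℕ,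
      |∑ i ∈ Finset.range K, (cylinderIndicator s (limitName T A θ (T^[i] x)) - c)| ≤
        (1 / 2) ^ n * (K + L n + 2 * L (n + 1)) := by
  obtain ⟨c, hc⟩ := M.exists_abs_sum_sub_le hs
  refine ⟨c, fun x hx K => ?_⟩
  have hname : ∀ᶠ N in atTop, ∀ i ∈ Finset.range K,
      cylinderIndicator s (limitName T A θ (T^[i] x)) =
        nameIndicator T A (fun k => towerMap θ k N) s (zIterate T i x) :=
    (eventually_all_finset _).2 fun i _ => zIterate_natCast T i x ▸
      eventually_cylinderIndicator_limitName_eq (zIterate_mem_regularSet hx i) s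
  obtain ⟨N, hN, hnN⟩ := (hname.and (eventually_gt_atTop (n + 1))).exists
  rw [Finset.sum_congr rfl fun i hi => congrArg (· - c) (hN i hi)]
  exact hc N hnN x K

lemma exists_abs_birkhoffAverage_sub_le (M : ModificationTower T μ A B L θ) (s : Finset (ℕ × ℤ))
    {δ : ℝ} (hδ : 0 < δ) : ∃ K ≠ 0, ∃ c, ∀ x ∈ regularSet T θ,
      |birkhoffAverage ℝ T (fun y => cylinderIndicator s (limitName T A θ y)) K x - c| ≤ δ := by
  have hsmall : ∀ᶠ n : ℕ in atTop, (1 / 2 : ℝ) ^ n < δ / 2 :=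
    (tendsto_pow_atTop_nhds_zero_of_lt_one (by norm_num) (by norm_num)).eventually
      (gt_mem_nhds (by positivity))
  obtain ⟨n, hn, hs⟩ := (hsmall.and
    ((tendsto_add_atTop_nat 1).eventually (eventually_subset_coordBox s))).exists
  obtain ⟨c, hc⟩ := M.exists_abs_sum_cylinderIndicator_sub_le hs
  have hL : 0 < L n := (Nat.zero_le _).trans_lt (M.length_lt n)
  obtain ⟨K, hK⟩ : ∃ K, K = L n + 2 * L (n + 1) := ⟨_, rfl⟩
  have hKpos : (0 : ℝ) < K := Nat.cast_pos.2 (by omega)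
  refine ⟨K, by omega, c, fun x hx => ?_⟩
  have hsum := hc x hx K
  rw [Finset.sum_sub_distrib, Finset.sum_const, Finset.card_range, nsmul_eq_mul] at hsum
  rw [birkhoffAverage, birkhoffSum, smul_eq_mul, inv_mul_eq_div, div_sub' hKpos.ne', abs_div,
    abs_of_pos hKpos, div_le_iff₀ hKpos]
  calc _ ≤ (1 / 2 : ℝ) ^ n * (K + L n + 2 * L (n + 1)) := hsum
    _ = (1 / 2) ^ n * (2 * K) := by rw [hK]; push_cast; ring
    _ ≤ δ / 2 * (2 * K) := by gcongr
    _ = δ * K := by ring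

end ModificationTower

lemma exists_uniform_coding [MeasurableSpace.CountablySeparated X] {μ : Measure X}
    [IsProbabilityMeasure μ] (hT : Ergodic T μ) (hw : WeakMixing μ T)
    (hap : ∀ x, ∀ i : ℕ, 0 < i → zIterate T i x ≠ x) :
    ∃ π : X → ℕ × ℤ → Bool, Measurable π ∧ Function.Semiconj π T arrayShift ∧
      ∃ X' : Set X, (∀ᵐ x ∂μ, x ∈ X') ∧ X'.InjOn π ∧
        ∀ s, ∀ δ > 0, ∃ K ≠ 0, ∃ c, ∀ x ∈ X',
          |birkhoffAverage ℝ T (fun y => cylinderIndicator s (π y)) K x - c| ≤ δ := by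
  obtain ⟨A, hA, hsep⟩ := exists_seq_eventually_separating X
  obtain ⟨B, L, θ, M⟩ := exists_modificationTower hT hw hap hA
  exact ⟨limitName T A θ, measurable_limitName hA fun n => (M.isModification n).measurable,
    semiconj_limitName, regularSet T θ,
    ae_mem_regularSet hT.toMeasurePreserving summable_geometric_two
      fun n => (M.isModification n).measureReal_ne_le,
    injOn_limitName hsep, fun s _ => M.exists_abs_birkhoffAverage_sub_le s⟩

end Coding

section Cylinder

lemma continuous_cylinderIndicator (s : Finset (ℕ × ℤ)) : Continuous (cylinderIndicator s) :=
  continuous_finsetProd _ fun p _ =>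
    (continuous_of_discreteTopology (f := fun b : Bool => if b then (1 : ℝ) else 0)).comp
      (continuous_apply p)

lemma cylinderIndicator_eq_indicator (s : Finset (ℕ × ℤ)) :
    cylinderIndicator s = {ω | ∀ p ∈ s, ω p = true}.indicator 1 := by
  classical
  ext ω
  simp [cylinderIndicator, Finset.prod_ite_zero, Set.indicator_apply]

lemma measurableSet_cylinder (s : Finset (ℕ × ℤ)) :
    MeasurableSet {ω : ℕ × ℤ → Bool | ∀ p ∈ s, ω p = true} := by
  simp only [Set.ofPred_forall]
  exact Finset.measurableSet_biInter _ fun p _ =>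
    measurableSet_eq_fun (measurable_pi_apply p) measurable_const

lemma eq_of_integral_cylinderIndicator {ρ ν : Measure (ℕ × ℤ → Bool)} [IsProbabilityMeasure ρ]
    [IsProbabilityMeasure ν]
    (h : ∀ s, ∫ ω, cylinderIndicator s ω ∂ρ = ∫ ω, cylinderIndicator s ω ∂ν) : ρ = ν := by
  refine ext_of_generate_finite
    (Set.range fun s : Finset (ℕ × ℤ) => {ω : ℕ × ℤ → Bool | ∀ p ∈ s, ω p = true}) ?_ ?_ ?_
    (by simp)
  · refine le_antisymm (iSup_le fun p => ?_) (MeasurableSpace.generateFrom_le ?_)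
    · rw [← measurable_iff_comap_le]
      exact @measurable_to_bool _ (_) _ (MeasurableSpace.measurableSet_generateFrom
        ⟨{p}, by ext; simp⟩)
    · rintro _ ⟨s, rfl⟩
      exact measurableSet_cylinder s
  · rintro _ ⟨s, rfl⟩ _ ⟨t, rfl⟩ -
    refine ⟨s ∪ t, ?_⟩
    ext ω
    simp only [Finset.mem_union, Set.mem_ofPred_eq, Set.mem_inter_iff]
    grind
  · rintro _ ⟨s, rfl⟩
    have hs := h s
    simp only [cylinderIndicator_eq_indicator,
      integral_indicator_one (measurableSet_cylinder s)] at hs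
    exact (measureReal_eq_measureReal_iff).1 hs

end Cylinder

/-! ### Uniquely ergodic models -/

section Retraction

lemma exists_measurable_retraction {Z : Type*} [MeasurableSpace Z] {s : Set Z}
    (hs : MeasurableSet s) (hne : s.Nonempty) :
    ∃ r : Z → s, Measurable r ∧ ∀ z : s, r z = z := by
  obtain ⟨r, hr, hrs⟩ := (MeasurableEmbedding.subtype_coe hs).exists_measurable_extend
    measurable_id fun _ => hne.to_subtype
  exact ⟨r, hr, congrFun hrs⟩

lemma exists_measurable_leftInverse_ae {X Z : Type*} [MeasurableSpace X] [StandardBorelSpace X]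
    [MeasurableSpace Z] [MeasurableSpace.CountablySeparated Z] {μ : Measure X} [NeZero μ]
    {π : X → Z} (hπ : Measurable π) {s : Set X} (hs : ∀ᵐ x ∂μ, x ∈ s) (hinj : s.InjOn π) :
    ∃ ψ : Z → X, Measurable ψ ∧ ∀ᵐ x ∂μ, ψ (π x) = x := by
  obtain ⟨t, hμt, ht, hts⟩ := IsMeasurablyGenerated.exists_measurable_subset hs
  have : StandardBorelSpace t := ht.standardBorel
  have hemb : MeasurableEmbedding fun x : t => π x :=
    (hπ.comp measurable_subtype_coe).measurableEmbedding fun x y h =>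
      Subtype.ext (hinj (hts x.2) (hts y.2) h)
  obtain ⟨ψ, hψ, hψe⟩ := hemb.exists_measurable_extend (measurable_subtype_coe (p := (· ∈ t)))
    fun _ => μ.nonempty_of_neZero
  exact ⟨ψ, hψ, mem_of_superset hμt fun x hx => congrFun hψe ⟨x, hx⟩⟩

end Retraction

section MeasIso

variable {X Y Z : Type*} [MeasurableSpace X] [MeasurableSpace Y] [MeasurableSpace Z]
  {μ : Measure X} {T : X → X} {ν : Measure Y} {S : Y → Y} {ρ : Measure Z} {R : Z → Z}

lemma measIso_map [MeasurableEq Y] {φ : X → Y} {ψ : Y → X} (hφ : Measurable φ) (hψ : Measurable ψ)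
    (hψφ : ∀ᵐ x ∂μ, ψ (φ x) = x) (hφT : ∀ᵐ x ∂μ, φ (T x) = S (φ x)) :
    MeasIso μ T (μ.map φ) S := by
  refine ⟨φ, ψ, hφ, hψ, rfl, hψφ, ?_, hφT⟩
  exact (ae_map_iff hφ.aemeasurable (measurableSet_eq_fun (hφ.comp hψ) measurable_id)).2
    (hψφ.mono fun x hx => congrArg φ hx)

lemma MeasIso.isProbabilityMeasure [IsProbabilityMeasure μ] (h : MeasIso μ T ν S) :
    IsProbabilityMeasure ν := by
  obtain ⟨φ, ψ, hφ, -, rfl, -⟩ := h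
  exact Measure.isProbabilityMeasure_map hφ.aemeasurable

lemma MeasIso.measurePreserving (h : MeasIso μ T ν S) (hT : MeasurePreserving T μ μ)
    (hS : Measurable S) : MeasurePreserving S ν ν := by
  obtain ⟨φ, ψ, hφ, -, rfl, -, -, hφT⟩ := h
  refine ⟨hS, ?_⟩
  calc (μ.map φ).map S = μ.map (S ∘ φ) := Measure.map_map hS hφ
    _ = μ.map (φ ∘ T) := (Measure.map_congr hφT).symm
    _ = (μ.map T).map φ := (Measure.map_map hφ hT.measurable).symm
    _ = μ.map φ := by rw [hT.map_eq]

lemma MeasIso.weakMixing (h : MeasIso μ T ν S) (hT : MeasurePreserving T μ μ)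
    (hS : Measurable S) (hw : WeakMixing μ T) : WeakMixing ν S := by
  obtain ⟨φ, ψ, hφ, -, rfl, -, -, hφT⟩ := h
  exact hw.of_map hT hφ hS hφT

lemma MeasIso.trans (h₁ : MeasIso μ T ν S) (h₂ : MeasIso ν S ρ R) : MeasIso μ T ρ R := by
  obtain ⟨φ₁, ψ₁, hφ₁, hψ₁, rfl, hl₁, hr₁, hT₁⟩ := h₁
  obtain ⟨φ₂, ψ₂, hφ₂, hψ₂, rfl, hl₂, hr₂, hT₂⟩ := h₂
  have hψ₂map : ((μ.map φ₁).map φ₂).map ψ₂ = μ.map φ₁ := by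
    rw [Measure.map_map hψ₂ hφ₂, Measure.map_congr (f := ψ₂ ∘ φ₂) (g := id) hl₂, Measure.map_id]
  refine ⟨φ₂ ∘ φ₁, ψ₁ ∘ ψ₂, hφ₂.comp hφ₁, hψ₁.comp hψ₂, (Measure.map_map hφ₂ hφ₁).symm,
    ?_, ?_, ?_⟩
  · filter_upwards [hl₁, ae_of_ae_map hφ₁.aemeasurable hl₂] with x hx₁ hx₂
    simp [hx₁, hx₂]
  · rw [← hψ₂map] at hr₁
    filter_upwards [hr₂, ae_of_ae_map hψ₂.aemeasurable hr₁] with z hz₂ hz₁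
    simp [hz₁, hz₂]
  · filter_upwards [hT₁, ae_of_ae_map hφ₁.aemeasurable hT₂] with x hx₁ hx₂
    simp [hx₁, hx₂]

end MeasIso

section UniformAverages

lemma birkhoffAverage_comp_of_semiconj {X Z : Type*} {T : X → X} {σ : Z → Z} {π : X → Z}
    (hπ : Function.Semiconj π T σ) (f : Z → ℝ) (K : ℕ) (x : X) :
    birkhoffAverage ℝ T (fun y => f (π y)) K x = birkhoffAverage ℝ σ f K (π x) := by
  simp only [birkhoffAverage, birkhoffSum, (hπ.iterate_right _).eq]

lemma abs_integral_sub_le_of_birkhoffAverage {Y : Type*} [MeasurableSpace Y] {ρ : Measure Y}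
    [IsProbabilityMeasure ρ] {S : Y → Y} (hS : MeasurePreserving S ρ ρ) {f : Y → ℝ}
    (hf : Integrable f ρ) {K : ℕ} (hK : K ≠ 0) {c δ : ℝ}
    (h : ∀ y, |birkhoffAverage ℝ S f K y - c| ≤ δ) : |∫ y, f y ∂ρ - c| ≤ δ := by
  have hKint : Integrable (birkhoffAverage ℝ S f K) ρ :=
    (memLp_birkhoffAverage hS (memLp_one_iff_integrable.2 hf) K).integrable le_rfl
  have hbound := norm_integral_le_of_norm_le_const (μ := ρ)
    (ae_of_all ρ fun y => (Real.norm_eq_abs _).trans_le (h y))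
  rwa [integral_sub hKint (integrable_const c), integral_birkhoffAverage hS hf hK,
    integral_const, probReal_univ, one_smul, mul_one, Real.norm_eq_abs] at hbound

variable {Y : Type*} [TopologicalSpace Y]

lemma continuous_birkhoffAverage {S : Y → Y} (hS : Continuous S) {f : Y → ℝ} (hf : Continuous f)
    (K : ℕ) : Continuous (birkhoffAverage ℝ S f K) :=
  (continuous_finsetSum (Finset.range K) fun i _ => hf.comp (hS.iterate i)).const_smul (K : ℝ)⁻¹

lemma isClosed_abs_birkhoffAverage_sub_le {S : Y → Y} (hS : Continuous S) {f : Y → ℝ}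
    (hf : Continuous f) (K : ℕ) (c δ : ℝ) :
    IsClosed {y | |birkhoffAverage ℝ S f K y - c| ≤ δ} :=
  isClosed_le ((continuous_birkhoffAverage hS hf K).sub continuous_const).abs continuous_const

lemma uniquelyErgodic_of_uniform_birkhoffAverage [CompactSpace Y] [MeasurableSpace Y]
    [OpensMeasurableSpace Y] {ν : Measure Y} [IsProbabilityMeasure ν] {S : Y → Y}
    (hS : MeasurePreserving S ν ν) {ι : Type*} {f : ι → Y → ℝ}
    (hf : ∀ i, Continuous (f i))
    (hdet : ∀ ρ : Measure Y, IsProbabilityMeasure ρ →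
      (∀ i, ∫ y, f i y ∂ρ = ∫ y, f i y ∂ν) → ρ = ν)
    (havg : ∀ i, ∀ δ > 0, ∃ K ≠ 0, ∃ c, ∀ y, |birkhoffAverage ℝ S (f i) K y - c| ≤ δ) :
    UniquelyErgodic S ν := fun ρ hρ hSρ => by
  refine hdet ρ hρ fun i => eq_of_forall_dist_le fun ε hε => ?_
  obtain ⟨K, hK, c, hc⟩ := havg i (ε / 2) (half_pos hε)
  have hint (m : Measure Y) [IsProbabilityMeasure m] : Integrable (f i) m :=
    (hf i).integrable_of_hasCompactSupport (.of_compactSpace _)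
  have hρc := abs_integral_sub_le_of_birkhoffAverage hSρ (hint ρ) hK hc
  have hνc := abs_integral_sub_le_of_birkhoffAverage hS (hint ν) hK hc
  rw [← Real.dist_eq] at hρc hνc
  exact (dist_triangle_right _ _ c).trans (by linarith)

end UniformAverages

section Support

variable {Z : Type*} [TopologicalSpace Z] [MeasurableSpace Z] {ν : Measure Z}

lemma mem_support_iff_apply_mem_support [BorelSpace Z] {σ : Z ≃ₜ Z} (hσ : MeasurePreserving σ ν ν)
    (z : Z) : z ∈ ν.support ↔ σ z ∈ ν.support := by
  have hpre : ∀ U : Set Z, ν (σ ⁻¹' U) = ν U := hσ.measure_preimage_emb σ.measurableEmbedding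
  simp only [Measure.mem_support_iff_forall]
  refine ⟨fun h U hU => ?_, fun h U hU => ?_⟩
  · exact hpre U ▸ h _ (σ.continuous.continuousAt hU)
  · rw [← σ.preimage_image U, hpre]
    exact h _ (σ.isOpenMap.image_mem_nhds hU)

lemma isOpenPosMeasure_of_map_val_eq [OpensMeasurableSpace Z] {ν₀ : Measure ν.support}
    (h : ν₀.map Subtype.val = ν) : ν₀.IsOpenPosMeasure where
  open_pos := by
    rintro _ ⟨V, hV, rfl⟩ ⟨y, hy⟩
    rw [← Measure.map_apply measurable_subtype_coe hV.measurableSet, h]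
    exact ((Measure.mem_support_iff_forall _).1 y.2 V (hV.mem_nhds hy)).ne'

lemma exists_measIso_support [HereditarilyLindelofSpace Z] [OpensMeasurableSpace Z]
    [StandardBorelSpace Z] {X : Type*} [MeasurableSpace X] {μ : Measure X} [NeZero μ] {T : X → X}
    {σ : Z ≃ₜ Z} {π : X → Z} {ψ : Z → X} (hπ : Measurable π) (hψ : Measurable ψ)
    (hψπ : ∀ᵐ x ∂μ, ψ (π x) = x) (hπT : Function.Semiconj π T σ)
    (hσ : ∀ z, z ∈ (μ.map π).support ↔ σ z ∈ (μ.map π).support) :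
    ∃ ν : Measure (μ.map π).support, ν.map Subtype.val = μ.map π ∧
      MeasIso μ T ν (σ.subtype hσ) := by
  have hne : μ.map π ≠ 0 := (Measure.map_ne_zero_iff hπ.aemeasurable).2 (NeZero.ne μ)
  have hmeas : MeasurableSet (μ.map π).support := Measure.isClosed_support.measurableSet
  have : StandardBorelSpace (μ.map π).support := hmeas.standardBorel
  obtain ⟨r, hr, hrs⟩ := exists_measurable_retraction hmeas (Measure.nonempty_support hne)
  have hmem : ∀ᵐ x ∂μ, π x ∈ (μ.map π).support :=
    ae_of_ae_map hπ.aemeasurable Measure.support_mem_ae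
  have hrπ : ∀ᵐ x ∂μ, (r (π x) : Z) = π x := hmem.mono fun x hx => congrArg _ (hrs ⟨π x, hx⟩)
  refine ⟨μ.map (r ∘ π), ?_, measIso_map (ψ := fun y => ψ y) (hr.comp hπ)
    (hψ.comp measurable_subtype_coe) ?_ ?_⟩
  · rw [Measure.map_map measurable_subtype_coe (hr.comp hπ)]
    exact Measure.map_congr hrπ
  · filter_upwards [hψπ, hrπ] with x hx hrx
    rw [Function.comp_apply, hrx, hx]
  · filter_upwards [hmem] with x hx
    rw [Function.comp_apply, Function.comp_apply, hπT.eq, hrs ⟨π x, hx⟩]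
    exact hrs ⟨σ (π x), _⟩

lemma uniquelyErgodic_subtype_support [CompactSpace Z] [BorelSpace Z] {σ : Z ≃ₜ Z}
    (hσ : ∀ z, z ∈ ν.support ↔ σ z ∈ ν.support) {ν₀ : Measure ν.support} [IsProbabilityMeasure ν₀]
    (hS : MeasurePreserving (σ.subtype hσ) ν₀ ν₀) {ι : Type*} {f : ι → Z → ℝ}
    (hf : ∀ i, Continuous (f i))
    (hdet : ∀ ρ ρ' : Measure Z, IsProbabilityMeasure ρ → IsProbabilityMeasure ρ' →
      (∀ i, ∫ z, f i z ∂ρ = ∫ z, f i z ∂ρ') → ρ = ρ')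
    (havg : ∀ i, ∀ δ > 0, ∃ K ≠ 0, ∃ c, ∀ᵐ z ∂ν, |birkhoffAverage ℝ σ (f i) K z - c| ≤ δ) :
    UniquelyErgodic (σ.subtype hσ) ν₀ := by
  have hval : MeasurableEmbedding (Subtype.val : ν.support → Z) :=
    .subtype_coe Measure.isClosed_support.measurableSet
  have : CompactSpace ν.support := isCompact_iff_compactSpace.1 Measure.isClosed_support.isCompact
  refine uniquelyErgodic_of_uniform_birkhoffAverage hS
    (fun i => (hf i).comp continuous_subtype_val) (fun ρ hρ hint => ?_) fun i δ hδ => ?_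
  · refine hval.map_injective (hdet _ _
      (Measure.isProbabilityMeasure_map hval.measurable.aemeasurable)
      (Measure.isProbabilityMeasure_map hval.measurable.aemeasurable) fun i => ?_)
    rw [hval.integral_map, hval.integral_map]
    exact hint i
  · obtain ⟨K, hK, c, hc⟩ := havg i δ hδ
    refine ⟨K, hK, c, fun y => ?_⟩
    have hsemi : Function.Semiconj Subtype.val (σ.subtype hσ) σ := fun _ => rfl
    exact birkhoffAverage_comp_of_semiconj hsemi (f i) K y ▸
      Measure.support_subset_of_isClosed
        (isClosed_abs_birkhoffAverage_sub_le σ.continuous (hf i) K c δ) hc y.2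

end Support

section Model

variable {X : Type*} [MeasurableSpace X]

/-- The system `(X, μ, T)` has a uniquely ergodic topological model whose invariant measure has
full support. -/
def HasUniquelyErgodicModel (μ : Measure X) (T : X → X) : Prop :=
  ∃ (Y : Type) (_ : MetricSpace Y) (_ : CompactSpace Y) (_ : MeasurableSpace Y)
    (_ : BorelSpace Y) (S : Y ≃ₜ Y) (ν : Measure Y),
    IsModel μ T S ν ∧ UniquelyErgodic S ν ∧ ν.IsOpenPosMeasure

lemma HasUniquelyErgodicModel.of_measIso {X' : Type*} [MeasurableSpace X'] {μ : Measure X}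
    {T : X → X} {μ' : Measure X'} {T' : X' → X'} (h : HasUniquelyErgodicModel μ' T')
    (hiso : MeasIso μ T μ' T') : HasUniquelyErgodicModel μ T := by
  obtain ⟨Y, i₁, i₂, i₃, i₄, S, ν, ⟨hν, hS, hmodel⟩, hpos⟩ := h
  exact ⟨Y, i₁, i₂, i₃, i₄, S, ν, ⟨hν, hS, hiso.trans hmodel⟩, hpos⟩

lemma hasUniquelyErgodicModel_of_aperiodic [StandardBorelSpace X] {μ : Measure X}
    [IsProbabilityMeasure μ] {T : X ≃ᵐ X} (hT : MeasurePreserving T μ μ) (hw : WeakMixing μ T)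
    (hap : ∀ x, ∀ i : ℕ, 0 < i → zIterate T i x ≠ x) : HasUniquelyErgodicModel μ T := by
  obtain ⟨π, hπ, hπT, X', hX', hinj, havg⟩ := exists_uniform_coding (hw.ergodic hT) hw hap
  obtain ⟨ψ, hψ, hψπ⟩ := exists_measurable_leftInverse_ae hπ hX' hinj
  have hshift : MeasurePreserving arrayShift (μ.map π) (μ.map π) :=
    (measIso_map hπ hψ hψπ (.of_forall hπT)).measurePreserving hT arrayShift.continuous.measurable
  have hsupp := mem_support_iff_apply_mem_support hshift
  obtain ⟨ν, hνπ, hiso⟩ := exists_measIso_support hπ hψ hψπ hπT hsupp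
  have hν := hiso.isProbabilityMeasure
  have hS := hiso.measurePreserving hT (arrayShift.subtype hsupp).continuous.measurable
  refine ⟨(μ.map π).support, TopologicalSpace.metrizableSpaceMetric _,
    isCompact_iff_compactSpace.1 Measure.isClosed_support.isCompact, inferInstance, inferInstance,
    arrayShift.subtype hsupp, ν, ⟨hν, hS, hiso⟩, ?_, isOpenPosMeasure_of_map_val_eq hνπ⟩
  refine uniquelyErgodic_subtype_support hsupp hS continuous_cylinderIndicator
    (fun ρ ρ' _ _ => eq_of_integral_cylinderIndicator) fun s δ hδ => ?_
  obtain ⟨K, hK, c, hc⟩ := havg s δ hδ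
  have hclosed := isClosed_abs_birkhoffAverage_sub_le arrayShift.continuous
    (continuous_cylinderIndicator s) K c δ
  refine ⟨K, hK, c, (ae_map_iff hπ.aemeasurable hclosed.measurableSet).2 ?_⟩
  exact hX'.mono fun x hx =>
    birkhoffAverage_comp_of_semiconj hπT (cylinderIndicator s) K x ▸ hc x hx

lemma hasUniquelyErgodicModel_of_dirac [MeasurableSingletonClass X] (x₀ : X) (T : X → X) :
    HasUniquelyErgodicModel (Measure.dirac x₀) T := by
  have hdirac (ρ : Measure Unit) (hρ : IsProbabilityMeasure ρ) : ρ = Measure.dirac () :=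
    Measure.ext_of_singleton fun u => by
      rw [Subsingleton.eq_univ_of_nonempty (Set.singleton_nonempty u), measure_univ, measure_univ]
  refine ⟨Unit, inferInstance, inferInstance, inferInstance, inferInstance, Homeomorph.refl Unit,
    Measure.dirac (), ⟨inferInstance, .id _, fun _ => (), fun _ => x₀, measurable_const,
      measurable_const, ?_, ?_, .of_forall fun _ => rfl, .of_forall fun _ => rfl⟩,
    fun ρ hρ _ => hdirac ρ hρ, ⟨?_⟩⟩
  · exact Measure.map_dirac' measurable_const x₀
  · rw [ae_dirac_eq]; rfl
  · rintro U - ⟨u, hu⟩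
    simp [Set.indicator, hu]

end Model

section Reduction

variable {X : Type*} [MeasurableSpace X] {μ : Measure X}

lemma WeakMixing.exists_eq_dirac_of_periodic [StandardBorelSpace X] [IsProbabilityMeasure μ]
    {T : X → X} (hw : WeakMixing μ T) {i : ℕ} (hi : 0 < i) (hper : ∀ᵐ x ∂μ, T^[i] x = x) :
    ∃ x₀, μ = Measure.dirac x₀ := by
  have hzeroOne : IsZeroOneMeasure μ := ⟨fun A hA => ?_⟩
  · exact IsZeroOneMeasure.exists_eq_dirac
  have hreturn : ∀ k, μ.real (A ∩ T^[i * k] ⁻¹' A) = μ.real A := fun k => by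
    refine measureReal_congr ?_
    filter_upwards [hper] with x hx
    refine propext (and_iff_left_of_imp fun hxA => ?_)
    rwa [Set.mem_preimage, Function.iterate_mul, Function.iterate_fixed hx]
  have hidem : IsIdempotentElem (μ.real A) := ((hw hA hA).eq_of_forall_mul_eq hi hreturn).symm
  refine (IsIdempotentElem.iff_eq_zero_or_one.1 hidem).imp (measureReal_eq_zero_iff).1 fun h => ?_
  rw [← ofReal_measureReal, h, ENNReal.ofReal_one]

/-- The restriction of a measurable automorphism to an invariant set. -/
def restrictEquiv (T : X ≃ᵐ X) (s : Set X) (h : ∀ x, x ∈ s ↔ T x ∈ s) : s ≃ᵐ s where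
  toEquiv := T.toEquiv.subtypeEquiv h
  measurable_toFun := (T.measurable.comp measurable_subtype_coe).subtype_mk
  measurable_invFun := (T.symm.measurable.comp measurable_subtype_coe).subtype_mk

lemma exists_measIso_restrictEquiv [NeZero μ] {T : X ≃ᵐ X} {s : Set X} (hs : MeasurableSet s)
    (hμs : ∀ᵐ x ∂μ, x ∈ s) (h : ∀ x, x ∈ s ↔ T x ∈ s) :
    ∃ μ₀ : Measure s, MeasIso μ T μ₀ (restrictEquiv T s h) := by
  obtain ⟨r, hr, hrs⟩ := exists_measurable_retraction hs hμs.exists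
  exact ⟨μ.map r, r, Subtype.val, hr, measurable_subtype_coe, rfl,
    hμs.mono fun x hx => congrArg Subtype.val (hrs ⟨x, hx⟩), .of_forall hrs,
    hμs.mono fun x hx => (hrs ⟨T x, (h x).1 hx⟩).trans 
      (congrArg (restrictEquiv T s h) (hrs ⟨x, hx⟩).symm)⟩

lemma zIterate_apply_eq_iff (T : X ≃ᵐ X) (i : ℤ) (x : X) :
    zIterate T i (T x) = T x ↔ zIterate T i x = x := by
  rw [← zIterate_add_one', zIterate_add_one, T.injective.eq_iff]

lemma ae_aperiodic_or_periodic [MeasurableEq X] {T : X ≃ᵐ X} (hT : Ergodic T μ) :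
    (∀ᵐ x ∂μ, ∀ i : ℕ, 0 < i → zIterate T i x ≠ x) ∨
      ∃ i : ℕ, 0 < i ∧ ∀ᵐ x ∂μ, zIterate T i x = x := by
  refine or_iff_not_imp_right.2 fun hper => ae_all_iff.2 fun i => ?_
  refine ae_all_iff.2 fun hi => ?_
  have hmeas : MeasurableSet {x | zIterate T i x = x} :=
    measurableSet_eq_fun (measurable_zIterate T i) measurable_id
  have hinv : T ⁻¹' {x | zIterate T i x = x} = {x | zIterate T i x = x} :=
    Set.ext fun x => zIterate_apply_eq_iff T i x
  exact (hT.toPreErgodic.ae_mem_or_ae_notMem hmeas hinv).resolve_left fun h => hper ⟨i, hi, h⟩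

lemma exists_measIso_aperiodic [MeasurableEq X] [NeZero μ] {T : X ≃ᵐ X}
    (hap : ∀ᵐ x ∂μ, ∀ i : ℕ, 0 < i → zIterate T i x ≠ x) :
    ∃ (s : Set X) (T₀ : s ≃ᵐ s) (μ₀ : Measure s), MeasurableSet s ∧ MeasIso μ T μ₀ T₀ ∧
      ∀ x, ∀ i : ℕ, 0 < i → zIterate T₀ i x ≠ x := by
  set s : Set X := {x | ∀ i : ℕ, 0 < i → zIterate T i x ≠ x} with hs_def
  have hs : MeasurableSet s := by
    simp only [hs_def, Set.ofPred_forall]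
    exact .iInter fun i => .iInter fun _ =>
      (measurableSet_eq_fun (measurable_zIterate T i) measurable_id).compl
  have hTs (x : X) : x ∈ s ↔ T x ∈ s :=
    forall₂_congr fun i _ => (zIterate_apply_eq_iff T i x).symm.not
  obtain ⟨μ₀, hiso⟩ := exists_measIso_restrictEquiv hs hap hTs
  refine ⟨s, restrictEquiv T s hTs, μ₀, hs, hiso, fun x i hi hx => x.2 i hi ?_⟩
  have hsemi : Function.Semiconj Subtype.val (restrictEquiv T s hTs) T := fun _ => rfl
  rw [zIterate_natCast] at hx ⊢
  exact ((hsemi.iterate_right i).eq x).symm.trans (congrArg Subtype.val hx)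

lemma hasUniquelyErgodicModel [StandardBorelSpace X] [IsProbabilityMeasure μ] {T : X ≃ᵐ X}
    (hT : MeasurePreserving T μ μ) (hw : WeakMixing μ T) : HasUniquelyErgodicModel μ T := by
  rcases ae_aperiodic_or_periodic (hw.ergodic hT) with hap | ⟨i, hi, hper⟩
  · obtain ⟨s, T₀, μ₀, hs, hiso, hap₀⟩ := exists_measIso_aperiodic hap
    have := hs.standardBorel
    have := hiso.isProbabilityMeasure
    exact (hasUniquelyErgodicModel_of_aperiodic (hiso.measurePreserving hT T₀.measurable)
      (hiso.weakMixing hT T₀.measurable hw) hap₀).of_measIso hiso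
  · simp only [zIterate_natCast] at hper
    obtain ⟨x₀, rfl⟩ := hw.exists_eq_dirac_of_periodic hi hper
    exact hasUniquelyErgodicModel_of_dirac x₀ T

end Reduction

theorem weakMixing_face_model_general {X : Type*} [MeasurableSpace X] [StandardBorelSpace X]
    (μ : Measure X) [IsProbabilityMeasure μ] (T : X ≃ᵐ X) (hT : MeasurePreserving T μ μ)
    (hwm : Ergodic (Prod.map T T) (μ.prod μ)) :
    ∃ (Y : Type) (_ : MetricSpace Y) (_ : CompactSpace Y) (_ : MeasurableSpace Y)
      (_ : BorelSpace Y) (S : Y ≃ₜ Y) (ν : Measure Y),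
      IsModel μ T S ν ∧ StrictlyErgodicHomeo S ∧ ∀ d : ℕ,
      (∀ y : Y, StrictlyErgodicOn (faceGens S d)
        (closure (grpOrbit (faceGens S d) (fun _ : Fin d → Bool => y)))) ∧
      StrictlyErgodicOn (parallelepipedGens S d) (Qset S d) := by
  have hw := weakMixing_of_ergodic_prod hT hwm
  obtain ⟨Y, i₁, i₂, i₃, i₄, S, ν, ⟨hν, hS, hiso⟩, huniq, _⟩ := hasUniquelyErgodicModel hT hw
  have hwS : WeakMixing ν S := hiso.weakMixing hT S.continuous.measurable hw
  have : Nonempty Y := ν.nonempty_of_neZero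
  exact ⟨Y, i₁, i₂, i₃, i₄, S, ν, ⟨hν, hS, hiso⟩,
    strictlyErgodicHomeo_of_uniquelyErgodic hS huniq,
    fun d => ⟨strictlyErgodicOn_faceGens hS hwS huniq d,
      strictlyErgodicOn_parallelepipedGens hS hwS huniq d⟩⟩

/-- **Theorem (weakly mixing systems).** A weakly mixing invertible measure-preserving
system on a Lebesgue (standard Borel) probability space has, for every `d ≥ 1`, a strictly
ergodic topological model `(Y, S)` such that the `F^[d]`-orbit closure of every diagonal
point `y^[d]` is strictly ergodic under `F^[d]`, and `Q^[d](Y)` is strictly ergodic under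
`G^[d]`. -/
theorem weakMixing_face_model {X : Type*} [MeasurableSpace X] [StandardBorelSpace X]
    (μ : Measure X) [IsProbabilityMeasure μ] (T : X ≃ᵐ X)
    (hT : MeasurePreserving T μ μ)
    (hwm : Ergodic (Prod.map T T) (μ.prod μ))
    (d : ℕ) (hd : 1 ≤ d) :
    ∃ (Y : Type) (_ : MetricSpace Y) (_ : CompactSpace Y) (_ : MeasurableSpace Y)
      (_ : BorelSpace Y) (S : Y ≃ₜ Y) (ν : Measure Y),
      IsModel μ (⇑T) S ν ∧ StrictlyErgodicHomeo S ∧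
      (∀ y : Y, StrictlyErgodicOn (faceGens S d)
        (closure (grpOrbit (faceGens S d) (fun _ : Fin d → Bool => y)))) ∧
      StrictlyErgodicOn (parallelepipedGens S d) (Qset S d) := by
  obtain ⟨Y, i₁, i₂, i₃, i₄, S, ν, hmodel, hS, hface⟩ := weakMixing_face_model_general μ T hT hwm
  exact ⟨Y, i₁, i₂, i₃, i₄, S, ν, hmodel, hS, hface d⟩

end HSY
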